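/- arXiv:1503.06434 — 2 statements merged into one kernel-verified Lean document; each statement's English description precedes it below -/
import Mathlib

section
/- Let P ⊂ ℝ^7 be the convex hull of the 15 lattice points e_1, e_2, e_3, e_4, e_5, e_6, e_7, −e_7, −e_1+e_7, −e_2+e_7, e_2−e_7, −e_3+e_6, e_2−e_6, −e_2−e_4+e_6, and e_2−e_5−e_7. Then P is an I-isolated smooth Fano 7-polytope with 15 vertices. -/
/-! ## Basic definitions: lattice polytopes, smooth Fano polytopes,
unimodular equivalence, F- and I-equivalence, primitive collections. -/

/-- A point of `ℝ^n` all of whose coordinates are integers. -/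
def IsLatticePoint {n : ℕ} (x : Fin n → ℝ) : Prop := ∀ i, ∃ m : ℤ, x i = (m : ℝ)

/-- The vertex set of a polytope: its extreme points. -/
def vertexSet {n : ℕ} (P : Set (Fin n → ℝ)) : Set (Fin n → ℝ) :=
  Set.extremePoints ℝ P

/-- A lattice `n`-polytope: the convex hull of finitely many lattice points,
of full dimension `n`. -/
def IsLatticePolytope {n : ℕ} (P : Set (Fin n → ℝ)) : Prop :=
  (∃ S : Finset (Fin n → ℝ), (∀ x ∈ S, IsLatticePoint x) ∧
    P = convexHull ℝ (S : Set (Fin n → ℝ))) ∧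
  affineSpan ℝ P = ⊤

/-- A face of `P`: an exposed subset of `P`. -/
def IsFaceOf {n : ℕ} (F P : Set (Fin n → ℝ)) : Prop := IsExposed ℝ P F

/-- A facet of `P`: a face of affine dimension `n - 1`. -/
def IsFacetOf {n : ℕ} (F P : Set (Fin n → ℝ)) : Prop :=
  IsFaceOf F P ∧ Module.finrank ℝ (vectorSpan ℝ F) + 1 = n

/-- A set `S` of points of `ℝ^n` forms a `ℤ`-basis of `ℤ^n`:
it consists of `n` lattice points whose matrix has determinant `±1`. -/
def IsUnimodularBasis {n : ℕ} (S : Set (Fin n → ℝ)) : Prop :=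
  ∃ b : Fin n → (Fin n → ℝ), Function.Injective b ∧ Set.range b = S ∧
    (∀ i, IsLatticePoint (b i)) ∧ |(Matrix.of b).det| = 1

/-- A smooth Fano `n`-polytope: a lattice `n`-polytope with the origin in its
interior such that the vertex set of every facet is a `ℤ`-basis of `ℤ^n`. -/
def IsSmoothFano {n : ℕ} (P : Set (Fin n → ℝ)) : Prop :=
  IsLatticePolytope P ∧ (0 : Fin n → ℝ) ∈ interior P ∧
    ∀ F : Set (Fin n → ℝ), IsFacetOf F P → IsUnimodularBasis (vertexSet P ∩ F)

/-- Two subsets of `ℝ^n` are unimodularly equivalent if an affine map of `ℝ^n`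
mapping `ℤ^n` onto `ℤ^n` maps one onto the other. -/
def UnimodularEquiv {n : ℕ} (Q Q' : Set (Fin n → ℝ)) : Prop :=
  ∃ φ : (Fin n → ℝ) →ᵃ[ℝ] (Fin n → ℝ),
    φ '' {x | IsLatticePoint x} = {x | IsLatticePoint x} ∧ φ '' Q = Q'

/-- One step of an I-sequence: the vertex set of one polytope is obtained from
the vertex set of the other by adding one new lattice point. -/
def IStep {n : ℕ} (P Q : Set (Fin n → ℝ)) : Prop :=
  (∃ w : Fin n → ℝ, IsLatticePoint w ∧ w ∉ vertexSet P ∧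
    vertexSet Q = vertexSet P ∪ {w}) ∨
  (∃ w : Fin n → ℝ, IsLatticePoint w ∧ w ∉ vertexSet Q ∧
    vertexSet P = vertexSet Q ∪ {w})

/-- I-equivalence of smooth Fano `n`-polytopes. -/
def IEquiv {n : ℕ} (P Q : Set (Fin n → ℝ)) : Prop :=
  ∃ (k : ℕ) (c : Fin (k + 1) → Set (Fin n → ℝ)),
    (∀ i, IsSmoothFano (c i)) ∧
    UnimodularEquiv P (c 0) ∧ UnimodularEquiv Q (c (Fin.last k)) ∧
    ∀ i : Fin k, IStep (c i.castSucc) (c i.succ)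

/-- `Q` is the stellar subdivision of `P` at the new vertex `w`: `w` is the sum
of the vertices of a proper face `F` of `P`, and the facets of `Q` containing
`w` are exactly the sets `conv({w} ∪ (V(F') \ {v}))` for `F'` a facet of `P`
containing `F` and `v` a vertex of `F`. -/
def IsStellarSubdivisionAt {n : ℕ} (P Q : Set (Fin n → ℝ)) (w : Fin n → ℝ) : Prop :=
  ∃ F : Set (Fin n → ℝ), IsFaceOf F P ∧ F.Nonempty ∧ F ≠ P ∧
    w = ∑ᶠ v ∈ vertexSet P ∩ F, v ∧
    {G : Set (Fin n → ℝ) | IsFacetOf G Q ∧ w ∈ G} =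
      {G : Set (Fin n → ℝ) | ∃ F' v, IsFacetOf F' P ∧ F ⊆ F' ∧
        v ∈ vertexSet P ∩ F ∧
        G = convexHull ℝ (insert w ((vertexSet P ∩ F') \ {v}))}

/-- One step of an F-sequence: an I-step which moreover is a stellar
subdivision (or its inverse). -/
def FStep {n : ℕ} (P Q : Set (Fin n → ℝ)) : Prop :=
  (∃ w : Fin n → ℝ, IsLatticePoint w ∧ w ∉ vertexSet P ∧
    vertexSet Q = vertexSet P ∪ {w} ∧ IsStellarSubdivisionAt P Q w) ∨
  (∃ w : Fin n → ℝ, IsLatticePoint w ∧ w ∉ vertexSet Q ∧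
    vertexSet P = vertexSet Q ∪ {w} ∧ IsStellarSubdivisionAt Q P w)

/-- F-equivalence of smooth Fano `n`-polytopes. -/
def FEquiv {n : ℕ} (P Q : Set (Fin n → ℝ)) : Prop :=
  ∃ (k : ℕ) (c : Fin (k + 1) → Set (Fin n → ℝ)),
    (∀ i, IsSmoothFano (c i)) ∧
    UnimodularEquiv P (c 0) ∧ UnimodularEquiv Q (c (Fin.last k)) ∧
    ∀ i : Fin k, FStep (c i.castSucc) (c i.succ)

/-- A smooth Fano polytope is F-isolated if every smooth Fano polytope
F-equivalent to it is unimodularly equivalent to it. -/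
def FIsolated {n : ℕ} (P : Set (Fin n → ℝ)) : Prop :=
  ∀ Q : Set (Fin n → ℝ), IsSmoothFano Q → FEquiv Q P → UnimodularEquiv Q P

/-- A smooth Fano polytope is I-isolated if every smooth Fano polytope
I-equivalent to it is unimodularly equivalent to it. -/
def IIsolated {n : ℕ} (P : Set (Fin n → ℝ)) : Prop :=
  ∀ Q : Set (Fin n → ℝ), IsSmoothFano Q → IEquiv Q P → UnimodularEquiv Q P

/-- A primitive collection of a smooth Fano polytope `P`: a nonempty set `A` of
vertices such that `conv(A)` is not a face of `P` but `conv(A \ {x})` is a face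
of `P` for every `x ∈ A`. -/
def IsPrimitiveCollection {n : ℕ} (P A : Set (Fin n → ℝ)) : Prop :=
  A.Nonempty ∧ A ⊆ vertexSet P ∧ ¬ IsFaceOf (convexHull ℝ A) P ∧
    ∀ x ∈ A, IsFaceOf (convexHull ℝ (A \ {x})) P

/-- The standard basis vector `e_i` of `ℝ^n`. -/
def stdBasis {n : ℕ} (i : Fin n) : Fin n → ℝ := fun q => if q = i then 1 else 0

/-- The polytope `T^n = conv{e_1, …, e_n, -(e_1 + ⋯ + e_n)}`,
corresponding to projective `n`-space. -/
def Tpoly (n : ℕ) : Set (Fin n → ℝ) :=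
  convexHull ℝ (Set.range (stdBasis (n := n)) ∪ {fun _ => (-1 : ℝ)})

/-- The 15 lattice points `e_1, …, e_7, -e_7, -e_1+e_7, -e_2+e_7, e_2-e_7,
-e_3+e_6, e_2-e_6, -e_2-e_4+e_6, e_2-e_5-e_7` of `ℤ^7`. -/
def KNpoints : Set (Fin 7 → ℝ) :=
  {![1, 0, 0, 0, 0, 0, 0], ![0, 1, 0, 0, 0, 0, 0], ![0, 0, 1, 0, 0, 0, 0],
   ![0, 0, 0, 1, 0, 0, 0], ![0, 0, 0, 0, 1, 0, 0], ![0, 0, 0, 0, 0, 1, 0],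
   ![0, 0, 0, 0, 0, 0, 1], ![0, 0, 0, 0, 0, 0, -1],
   ![-1, 0, 0, 0, 0, 0, 1], ![0, -1, 0, 0, 0, 0, 1], ![0, 1, 0, 0, 0, 0, -1],
   ![0, 0, -1, 0, 0, 1, 0], ![0, 1, 0, 0, 0, -1, 0], ![0, -1, 0, -1, 0, 1, 0],
   ![0, 1, 0, 0, -1, 0, -1]}

/-!
A unimodular equivalence between smooth Fano polytopes is linear, since the origin is the only
lattice point interior to either of them. So it suffices that no smooth Fano polytope differs from
`P` in exactly one vertex.

* A vertex cannot be deleted: the remaining ones lie in a half-space, or too many of them lie on a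
  supporting hyperplane.
* Let a vertex `w` be added, giving `Q`, and let `u` and `u'` be the normals of two adjacent facets
  of `P` with `u - u'` primitive. If `⟨u, w⟩ ≤ 0` and `⟨u', w⟩ ≥ 2`, then `w` and the common ridge
  span a facet of `Q`, and `⟨u' - u, w⟩ ≥ 2` contradicts that its vertices form a basis of the
  lattice. The value `1` is not taken either, as `Q` would have `n + 1` vertices on a supporting
  hyperplane. So `⟨u, w⟩` has constant sign along a walk through adjacent facets, which forces
  `w = 0` as soon as the normals met by the walk positively span the space.
-/

/-! ### Lattice points -/

section

variable {n : ℕ}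

/-- The point of `ℝ^n` with integer coordinates `u`; vertices and facet normals are given as
integer vectors and enter real convex geometry through this map. -/
def latticePt (u : Fin n → ℤ) : Fin n → ℝ := fun i => u i

theorem isLatticePoint_iff {x : Fin n → ℝ} : IsLatticePoint x ↔ ∃ u, latticePt u = x := by
  simp only [IsLatticePoint, Classical.skolem, funext_iff, latticePt, eq_comm]

theorem isLatticePoint_latticePt (u : Fin n → ℤ) : IsLatticePoint (latticePt u) :=
  isLatticePoint_iff.2 ⟨u, rfl⟩

theorem latticePt_dotProduct (u v : Fin n → ℤ) :
    latticePt u ⬝ᵥ latticePt v = ((u ⬝ᵥ v : ℤ) : ℝ) :=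
  ((Int.castRingHom ℝ).map_dotProduct u v).symm

theorem latticePt_zero : latticePt (0 : Fin n → ℤ) = 0 := funext fun _ => Int.cast_zero

theorem latticePt_sub (u v : Fin n → ℤ) : latticePt (u - v) = latticePt u - latticePt v :=
  funext fun _ => Int.cast_sub _ _

theorem latticePt_smul (c : ℤ) (u : Fin n → ℤ) : latticePt (c • u) = (c : ℝ) • latticePt u :=
  funext fun _ => Int.cast_mul _ _

theorem latticePt_injective : Function.Injective (latticePt (n := n)) := fun _ _ h =>
  funext fun i => Int.cast_injective (congrFun h i)

theorem latticePt_vecMul {ι : Type*} [Fintype ι] (k : ι → ℤ) (M : ι → Fin n → ℤ) :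
    latticePt (Matrix.vecMul k (Matrix.of M)) = ∑ i, (k i : ℝ) • latticePt (M i) := by
  ext j
  simp [latticePt, Matrix.vecMul, dotProduct]

theorem isUnimodularBasis_iff {S : Set (Fin n → ℝ)} :
    IsUnimodularBasis S ↔ ∃ b : Fin n → Fin n → ℝ, Function.Injective b ∧ Set.range b = S ∧
      (∀ i, IsLatticePoint (b i)) ∧
      ∀ x, IsLatticePoint x → ∃ k : Fin n → ℤ, x = ∑ i, (k i : ℝ) • b i := by
  refine exists_congr fun b => and_congr_right fun _ => and_congr_right fun _ =>
    and_congr_right fun hb => ?_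
  choose M hM using fun i => isLatticePoint_iff.1 (hb i)
  obtain rfl : (fun i => latticePt (M i)) = b := funext hM
  have hdet : (Matrix.of fun i => latticePt (M i)).det = (Matrix.of M).det :=
    ((Int.castRingHom ℝ).map_det (Matrix.of M)).symm
  rw [hdet, ← Int.cast_abs, Int.cast_eq_one, ← Int.isUnit_iff_abs_eq,
    ← Matrix.isUnit_iff_isUnit_det, ← Matrix.vecMul_surjective_iff_isUnit]
  constructor
  · intro hsurj x hx
    obtain ⟨y, rfl⟩ := isLatticePoint_iff.1 hx
    obtain ⟨k, hk⟩ := hsurj y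
    exact ⟨k, by rw [← hk, latticePt_vecMul]⟩
  · intro hspan y
    obtain ⟨k, hk⟩ := hspan (latticePt y) (isLatticePoint_latticePt y)
    exact ⟨k, latticePt_injective (by rw [hk, latticePt_vecMul])⟩

theorem IsUnimodularBasis.ncard {S : Set (Fin n → ℝ)} (h : IsUnimodularBasis S) :
    S.ncard = n := by
  obtain ⟨b, hinj, rfl, -⟩ := h
  rw [Set.ncard_range_of_injective hinj, Nat.card_fin]

theorem IsUnimodularBasis.finite {S : Set (Fin n → ℝ)} (h : IsUnimodularBasis S) :
    S.Finite := by
  obtain ⟨b, -, rfl, -⟩ := h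
  exact Set.finite_range b

end

/-! ### Supporting hyperplanes of smooth Fano polytopes -/

section

open scoped Topology

variable {n : ℕ} {Q : Set (Fin n → ℝ)} {u : Fin n → ℝ}

theorem exists_vertex_dotProduct_max (hQ : IsCompact Q) (hne : Q.Nonempty) (u : Fin n → ℝ) :
    ∃ v ∈ vertexSet Q, ∀ x ∈ Q, u ⬝ᵥ x ≤ u ⬝ᵥ v := by
  let l : StrongDual ℝ (Fin n → ℝ) := (dotProductEquiv ℝ (Fin n) u).toContinuousLinearMap
  have hexp : IsExposed ℝ Q (l.toExposed Q) := ContinuousLinearMap.toExposed.isExposed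
  obtain ⟨x, hx, hmax⟩ := hQ.exists_isMaxOn hne l.continuous.continuousOn
  obtain ⟨v, hv⟩ := (hexp.isCompact hQ).extremePoints_nonempty ⟨x, hx, fun y hy => hmax hy⟩
  exact ⟨v, hexp.isExtreme.extremePoints_subset_extremePoints hv, hv.1.2⟩

theorem dotProduct_le_of_forall_vertex_le (hQ : IsCompact Q) {c : ℝ}
    (h : ∀ v ∈ vertexSet Q, u ⬝ᵥ v ≤ c) : ∀ x ∈ Q, u ⬝ᵥ x ≤ c := by
  intro x hx
  obtain ⟨v, hv, hmax⟩ := exists_vertex_dotProduct_max hQ ⟨x, hx⟩ u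
  exact (hmax x hx).trans (h v hv)

theorem IsLatticePolytope.isCompact (h : IsLatticePolytope Q) : IsCompact Q := by
  obtain ⟨⟨S, -, rfl⟩, -⟩ := h
  exact S.finite_toSet.isCompact_convexHull ℝ

theorem IsLatticePolytope.convex (h : IsLatticePolytope Q) : Convex ℝ Q := by
  obtain ⟨⟨S, -, rfl⟩, -⟩ := h
  exact convex_convexHull ℝ _

theorem IsLatticePolytope.finite_vertexSet (h : IsLatticePolytope Q) : (vertexSet Q).Finite := by
  obtain ⟨⟨S, -, rfl⟩, -⟩ := h
  exact S.finite_toSet.subset extremePoints_convexHull_subset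

theorem exists_pos_add_smul_mem {x : Fin n → ℝ} (hx : x ∈ interior Q) (y : Fin n → ℝ) :
    ∃ t : ℝ, 0 < t ∧ x + t • y ∈ Q := by
  have hcont : Continuous fun t : ℝ => x + t • y := by fun_prop
  have hlim := (hcont.tendsto' 0 x (by rw [zero_smul, add_zero])).mono_left
    (nhdsWithin_le_nhds (s := Set.Ioi 0))
  have hev : ∀ᶠ t : ℝ in 𝓝[>] 0, x + t • y ∈ Q :=
    hlim.eventually (mem_interior_iff_mem_nhds.1 hx)
  obtain ⟨t, htQ, ht⟩ := (hev.and self_mem_nhdsWithin).exists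
  exact ⟨t, ht, htQ⟩

theorem eq_zero_of_dotProduct_self_nonpos (h : u ⬝ᵥ u ≤ 0) : u = 0 :=
  dotProduct_self_eq_zero.1 (h.antisymm (Finset.sum_nonneg fun i _ => mul_self_nonneg (u i)))

theorem eq_zero_of_forall_dotProduct_nonpos (h0 : 0 ∈ interior Q)
    (h : ∀ x ∈ Q, u ⬝ᵥ x ≤ 0) : u = 0 := by
  obtain ⟨t, ht, htQ⟩ := exists_pos_add_smul_mem h0 u
  rw [zero_add] at htQ
  have hle := h _ htQ
  rw [dotProduct_smul, smul_eq_mul] at hle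
  exact eq_zero_of_dotProduct_self_nonpos (nonpos_of_mul_nonpos_right hle ht)

/-- The polar body of `Q`. Its extreme points correspond to the facets of `Q`. -/
def polar (Q : Set (Fin n → ℝ)) : Set (Fin n → ℝ) := {u | ∀ x ∈ Q, u ⬝ᵥ x ≤ 1}

/-- The vertices of `Q` lying on the hyperplane `u = 1`. -/
def tightVertices (Q : Set (Fin n → ℝ)) (u : Fin n → ℝ) : Set (Fin n → ℝ) :=
  {v ∈ vertexSet Q | u ⬝ᵥ v = 1}

theorem mem_polar_iff_forall_vertex (hQ : IsCompact Q) :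
    u ∈ polar Q ↔ ∀ v ∈ vertexSet Q, u ⬝ᵥ v ≤ 1 :=
  ⟨fun hu v hv => hu v hv.1, dotProduct_le_of_forall_vertex_le hQ⟩

theorem isCompact_polar (h0 : 0 ∈ interior Q) : IsCompact (polar Q) := by
  refine Metric.isCompact_of_isClosed_isBounded ?_ ?_
  · have hpolar : polar Q = ⋂ x ∈ Q, {u | u ⬝ᵥ x ≤ 1} := by
      ext u
      simp only [polar, Set.mem_ofPred_eq, Set.mem_iInter]
    rw [hpolar]
    exact isClosed_biInter fun x _ => isClosed_le (by fun_prop) continuous_const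
  · obtain ⟨ε, hε, hball⟩ := Metric.mem_nhds_iff.1 (mem_interior_iff_mem_nhds.1 h0)
    refine (Metric.isBounded_closedBall (x := (0 : Fin n → ℝ)) (r := 2 / ε)).subset ?_
    intro u hu
    rw [mem_closedBall_zero_iff, pi_norm_le_iff_of_nonneg (by positivity)]
    intro i
    have hle (s : ℝ) (hs : |s| = ε / 2) : u i * s ≤ 1 := by
      have hmem : Pi.single i s ∈ Metric.ball (0 : Fin n → ℝ) ε := by
        rw [mem_ball_zero_iff, Pi.norm_single, Real.norm_eq_abs]
        linarith
      simpa only [dotProduct_single] using hu _ (hball hmem)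
    have hpos := hle (ε / 2) (abs_of_pos (by positivity))
    have hneg := hle (-(ε / 2)) (by rw [abs_neg, abs_of_pos (by positivity)])
    rw [Real.norm_eq_abs, abs_le, ← neg_div, div_le_iff₀ hε, le_div_iff₀ hε]
    constructor <;> linarith

theorem dotProduct_lt_one_of_mem_interior (hu : u ∈ polar Q) {x : Fin n → ℝ}
    (hx : x ∈ interior Q) : u ⬝ᵥ x < 1 := by
  obtain ⟨t, ht, htQ⟩ := exists_pos_add_smul_mem hx x
  have hle := hu _ htQ
  rw [dotProduct_add, dotProduct_smul, smul_eq_mul] at hle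
  nlinarith

theorem eventually_add_smul_mem_polar (hQ : IsCompact Q) (hfin : (vertexSet Q).Finite)
    (hu : u ∈ polar Q) {g : Fin n → ℝ} (hg : ∀ v ∈ tightVertices Q u, g ⬝ᵥ v = 0) :
    ∀ᶠ s : ℝ in 𝓝 0, u + s • g ∈ polar Q := by
  simp only [mem_polar_iff_forall_vertex hQ]
  rw [Filter.eventually_all_finite hfin]
  intro v hv
  by_cases htight : u ⬝ᵥ v = 1
  · refine Filter.Eventually.of_forall fun s => ?_
    rw [add_dotProduct, smul_dotProduct, hg v ⟨hv, htight⟩, smul_zero, add_zero, htight]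
  · have hlt : (u + (0 : ℝ) • g) ⬝ᵥ v < 1 := by
      simpa only [zero_smul, add_zero] using (hu v hv.1).lt_of_ne htight
    have hcont : Continuous fun s : ℝ => (u + s • g) ⬝ᵥ v := by fun_prop
    exact ((hcont.tendsto 0).eventually_lt_const hlt).mono fun s => le_of_lt

theorem span_tightVertices_eq_top (hQ : IsCompact Q) (hfin : (vertexSet Q).Finite)
    (hu : u ∈ vertexSet (polar Q)) : Submodule.span ℝ (tightVertices Q u) = ⊤ := by
  by_contra hne
  obtain ⟨f, hf0, hf⟩ := Submodule.exists_le_ker_of_lt_top _ (lt_top_iff_ne_top.2 hne)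
  obtain ⟨g, rfl⟩ := (dotProductEquiv ℝ (Fin n)).surjective f
  have hg : g ≠ 0 := fun h => hf0 (by rw [h, map_zero])
  have hev := eventually_add_smul_mem_polar hQ hfin hu.1 fun v hv =>
    hf (Submodule.subset_span hv)
  have hev' : ∀ᶠ s : ℝ in 𝓝 0, u + -s • g ∈ polar Q :=
    (continuous_neg.tendsto' (0 : ℝ) 0 neg_zero).eventually hev
  obtain ⟨s, ⟨hs, hs'⟩, hs0⟩ :=
    (((hev.and hev').filter_mono nhdsWithin_le_nhds).and
      (self_mem_nhdsWithin : {0}ᶜ ∈ 𝓝[≠] (0 : ℝ))).exists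
  have hseg : u ∈ openSegment ℝ (u + s • g) (u + -s • g) :=
    ⟨1 / 2, 1 / 2, by norm_num, by norm_num, by norm_num, by module⟩
  have heq : s • g = 0 := by simpa only [add_eq_left] using hu.2 hs hs' hseg
  exact (smul_ne_zero hs0 hg) heq

theorem isFacetOf_of_span_tightVertices_eq_top [NeZero n] (hu : u ∈ polar Q)
    (hspan : Submodule.span ℝ (tightVertices Q u) = ⊤) :
    IsFacetOf {x ∈ Q | u ⬝ᵥ x = 1} Q := by
  obtain ⟨v₀, hv₀, huv₀⟩ : (tightVertices Q u).Nonempty := by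
    rw [Set.nonempty_iff_ne_empty]
    rintro hempty
    rw [hempty, Submodule.span_empty] at hspan
    exact bot_ne_top hspan
  have hv₀F : v₀ ∈ {x ∈ Q | u ⬝ᵥ x = 1} := ⟨hv₀.1, huv₀⟩
  set l := dotProductEquiv ℝ (Fin n) u
  set W := vectorSpan ℝ {x ∈ Q | u ⬝ᵥ x = 1}
  have hW : W ≤ LinearMap.ker l := by
    refine Submodule.span_le.2 ?_
    rintro _ ⟨x, hx, y, hy, rfl⟩
    change u ⬝ᵥ (x - y) = 0
    rw [dotProduct_sub, hx.2, hy.2, sub_self]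
  have hsup : W ⊔ Submodule.span ℝ {v₀} = ⊤ := by
    rw [eq_top_iff, ← hspan, Submodule.span_le]
    intro v hv
    rw [← sub_add_cancel v v₀]
    exact Submodule.add_mem_sup (vsub_mem_vectorSpan ℝ ⟨hv.1.1, hv.2⟩ hv₀F)
      (Submodule.mem_span_singleton_self v₀)
  have hinf : W ⊓ Submodule.span ℝ {v₀} = ⊥ := by
    rw [← disjoint_iff, Submodule.disjoint_span_singleton]
    exact fun h => absurd (huv₀.symm.trans (hW h)) one_ne_zero
  have hv₀0 : v₀ ≠ 0 := by
    rintro rfl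
    simp at huv₀
  refine ⟨fun _ => ⟨l.toContinuousLinearMap, ?_⟩, ?_⟩
  · ext x
    refine and_congr_right fun hx => ⟨fun h y hy => (hu y hy).trans_eq h.symm, fun h => ?_⟩
    exact (hu x hx).antisymm (huv₀.symm.trans_le (h v₀ hv₀.1))
  · have hrank := Submodule.finrank_sup_add_finrank_inf_eq W (Submodule.span ℝ {v₀})
    rw [hsup, hinf, finrank_top, finrank_bot, finrank_span_singleton hv₀0,
      Module.finrank_fin_fun] at hrank
    exact hrank.symm

theorem IsSmoothFano.isUnimodularBasis_tightVertices [NeZero n] (hQ : IsSmoothFano Q)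
    (hu : u ∈ vertexSet (polar Q)) : IsUnimodularBasis (tightVertices Q u) := by
  have hspan := span_tightVertices_eq_top hQ.1.isCompact hQ.1.finite_vertexSet hu
  convert hQ.2.2 _ (isFacetOf_of_span_tightVertices_eq_top hu.1 hspan) using 1
  ext v
  exact and_congr_right fun hv => ⟨fun h => ⟨hv.1, h⟩, And.right⟩

-- Apply the hypothesis to the sum of the vertices on the hyperplane `u = 1`.
theorem exists_tightVertices_subset_of_forall_exists_le {A : Set (Fin n → ℝ)}
    (hfin : (vertexSet Q).Finite) (hA : A ⊆ polar Q) (hle : ∀ y, ∃ u' ∈ A, u ⬝ᵥ y ≤ u' ⬝ᵥ y) :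
    ∃ u' ∈ A, tightVertices Q u ⊆ tightVertices Q u' := by
  have hTfin : (tightVertices Q u).Finite := hfin.subset fun v hv => hv.1
  obtain ⟨u', hu', hmax⟩ := hle (∑ v ∈ hTfin.toFinset, v)
  refine ⟨u', hu', fun v hv => ⟨hv.1, ?_⟩⟩
  have hle' : ∀ v ∈ hTfin.toFinset, u' ⬝ᵥ v ≤ u ⬝ᵥ v := fun v hv => by
    obtain ⟨hvQ, huv⟩ := hTfin.mem_toFinset.1 hv
    rw [huv]
    exact hA hu' v hvQ.1
  have hsum : ∑ v ∈ hTfin.toFinset, u' ⬝ᵥ v = ∑ v ∈ hTfin.toFinset, u ⬝ᵥ v :=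
    (Finset.sum_le_sum hle').antisymm (by simpa only [dotProduct_sum] using hmax)
  rw [(Finset.sum_eq_sum_iff_of_le hle').1 hsum v (hTfin.mem_toFinset.2 hv), hv.2]

theorem exists_tightVertices_subset (hfin : (vertexSet Q).Finite)
    (h0 : 0 ∈ interior Q) (hu : u ∈ polar Q) :
    ∃ u' ∈ vertexSet (polar Q), tightVertices Q u ⊆ tightVertices Q u' := by
  refine exists_tightVertices_subset_of_forall_exists_le hfin (fun u' hu' => hu'.1) fun y => ?_
  obtain ⟨u', hu', hmax⟩ := exists_vertex_dotProduct_max (isCompact_polar h0) ⟨u, hu⟩ y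
  exact ⟨u', hu', by simpa only [dotProduct_comm] using hmax u hu⟩

theorem IsSmoothFano.exists_isUnimodularBasis [NeZero n] (hQ : IsSmoothFano Q)
    (hu : ∀ v ∈ vertexSet Q, u ⬝ᵥ v ≤ 1) :
    ∃ B, IsUnimodularBasis B ∧ tightVertices Q u ⊆ B :=
  have ⟨u', hu', hsub⟩ := exists_tightVertices_subset hQ.1.finite_vertexSet hQ.2.1
    ((mem_polar_iff_forall_vertex hQ.1.isCompact).2 hu)
  ⟨tightVertices Q u', hQ.isUnimodularBasis_tightVertices hu', hsub⟩

theorem IsSmoothFano.ncard_tightVertices_le [NeZero n] (hQ : IsSmoothFano Q)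
    (hu : ∀ v ∈ vertexSet Q, u ⬝ᵥ v ≤ 1) : (tightVertices Q u).ncard ≤ n := by
  obtain ⟨B, hB, hsub⟩ := hQ.exists_isUnimodularBasis hu
  exact (Set.ncard_le_ncard hsub hB.finite).trans_eq hB.ncard

theorem IsSmoothFano.eq_zero_of_forall_vertex_nonpos (hQ : IsSmoothFano Q)
    (hu : ∀ v ∈ vertexSet Q, u ⬝ᵥ v ≤ 0) : u = 0 :=
  eq_zero_of_forall_dotProduct_nonpos hQ.2.1 (dotProduct_le_of_forall_vertex_le hQ.1.isCompact hu)

theorem IsSmoothFano.dotProduct_nonpos_of_mem_interior [NeZero n] (hQ : IsSmoothFano Q)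
    {x : Fin n → ℝ} (hx : x ∈ interior Q) (hlat : IsLatticePoint x)
    (hu : u ∈ vertexSet (polar Q)) : u ⬝ᵥ x ≤ 0 := by
  obtain ⟨b, -, hb, -, hspan⟩ :=
    isUnimodularBasis_iff.1 (hQ.isUnimodularBasis_tightVertices hu)
  obtain ⟨k, hk⟩ := hspan x hlat
  have hub (i : Fin n) : u ⬝ᵥ b i = 1 := (hb.le ⟨i, rfl⟩ : b i ∈ tightVertices Q u).2
  have hint : u ⬝ᵥ x = ((∑ i, k i : ℤ) : ℝ) := by
    rw [hk, dotProduct_sum, Int.cast_sum]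
    exact Finset.sum_congr rfl fun i _ => by
      rw [dotProduct_smul, hub, smul_eq_mul, mul_one]
  have hlt := dotProduct_lt_one_of_mem_interior hu.1 hx
  rw [hint] at hlt ⊢
  exact_mod_cast Int.lt_add_one_iff.1 (by exact_mod_cast hlt : ∑ i, k i < 0 + 1)

theorem IsSmoothFano.eq_zero_of_mem_interior [NeZero n] (hQ : IsSmoothFano Q)
    {x : Fin n → ℝ} (hx : x ∈ interior Q) (hlat : IsLatticePoint x) : x = 0 := by
  have hpolar : ∀ u ∈ polar Q, x ⬝ᵥ u ≤ 0 :=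
    dotProduct_le_of_forall_vertex_le (isCompact_polar hQ.2.1) fun u hu => by
      rw [dotProduct_comm]
      exact hQ.dotProduct_nonpos_of_mem_interior hx hlat hu
  obtain ⟨y, -, hy⟩ := exists_vertex_dotProduct_max hQ.1.isCompact ⟨x, interior_subset hx⟩ x
  have hpos : 0 < 1 + |x ⬝ᵥ y| := by positivity
  have hmem : (1 + |x ⬝ᵥ y|)⁻¹ • x ∈ polar Q := fun z hz => by
    rw [smul_dotProduct, smul_eq_mul, inv_mul_le_one₀ hpos]
    linarith [hy z hz, le_abs_self (x ⬝ᵥ y)]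
  have hle := hpolar _ hmem
  rw [dotProduct_smul, smul_eq_mul] at hle
  exact eq_zero_of_dotProduct_self_nonpos (nonpos_of_mul_nonpos_right hle (inv_pos.2 hpos))

end

/-! ### Unimodular maps and I-isolation -/

section

variable {n : ℕ} {P Q Q' Q'' S F : Set (Fin n → ℝ)}

section LatticeAutomorphism

/-- The map `f` sends the lattice `ℤ^n` onto itself. For an affine or linear automorphism this is
the unimodularity required of a `UnimodularEquiv`. -/
def PreservesLattice (f : (Fin n → ℝ) → Fin n → ℝ) : Prop :=
  f '' {x | IsLatticePoint x} = {x | IsLatticePoint x}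

theorem PreservesLattice.isLatticePoint {f : (Fin n → ℝ) → Fin n → ℝ} (hf : PreservesLattice f)
    {x : Fin n → ℝ} (hx : IsLatticePoint x) : IsLatticePoint (f x) :=
  hf.le ⟨x, hx, rfl⟩

theorem PreservesLattice.exists_eq {f : (Fin n → ℝ) → Fin n → ℝ} (hf : PreservesLattice f)
    {y : Fin n → ℝ} (hy : IsLatticePoint y) : ∃ x, IsLatticePoint x ∧ f x = y :=
  hf.ge hy

theorem PreservesLattice.symm {e : (Fin n → ℝ) ≃ (Fin n → ℝ)} (he : PreservesLattice e) :
    PreservesLattice e.symm :=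
  (e.eq_image_iff_symm_image_eq _ _).1 (Eq.symm he)

variable {A : (Fin n → ℝ) ≃ₗ[ℝ] (Fin n → ℝ)}

theorem vertexSet_image (A : (Fin n → ℝ) ≃ₗ[ℝ] (Fin n → ℝ)) (Q : Set (Fin n → ℝ)) :
    vertexSet (A '' Q) = A '' vertexSet Q :=
  (image_extremePoints A Q).symm

theorem IsUnimodularBasis.image (hS : IsUnimodularBasis S) (hA : PreservesLattice A) :
    IsUnimodularBasis (A '' S) := by
  obtain ⟨b, hinj, rfl, hb, hspan⟩ := isUnimodularBasis_iff.1 hS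
  refine isUnimodularBasis_iff.2 ⟨A ∘ b, A.injective.comp hinj, Set.range_comp A b,
    fun i => hA.isLatticePoint (hb i), fun x hx => ?_⟩
  obtain ⟨y, hy, rfl⟩ := hA.exists_eq hx
  obtain ⟨k, hk⟩ := hspan y hy
  exact ⟨k, (congrArg A hk).trans (by simp only [map_sum, map_smul, Function.comp_apply])⟩

theorem IsLatticePolytope.image (hQ : IsLatticePolytope Q) (hA : PreservesLattice A) :
    IsLatticePolytope (A '' Q) := by
  classical
  obtain ⟨⟨S, hS, rfl⟩, hspan⟩ := hQ
  refine ⟨⟨S.image A, fun x hx => ?_, ?_⟩, ?_⟩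
  · obtain ⟨y, hy, rfl⟩ := Finset.mem_image.1 hx
    exact hA.isLatticePoint (hS y hy)
  · rw [Finset.coe_image]
    exact A.toLinearMap.image_convexHull _
  · exact AffineMap.span_eq_top_of_surjective A.toAffineEquiv.toAffineMap A.surjective hspan

theorem IsFacetOf.preimage (hF : IsFacetOf F (A '' Q)) : IsFacetOf (A ⁻¹' F) Q := by
  have himage : A '' (A ⁻¹' F) = F := Set.image_preimage_eq F A.surjective
  refine ⟨fun hne => ?_, ?_⟩
  · obtain ⟨l, hl⟩ := hF.1 (himage ▸ hne.image A)
    refine ⟨l.comp A.toContinuousLinearEquiv.toContinuousLinearMap, ?_⟩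
    ext x
    simp only [hl, Set.mem_preimage, Set.mem_sep_iff, A.injective.mem_set_image,
      Set.forall_mem_image]
    rfl
  · have hspan : (vectorSpan ℝ (A ⁻¹' F)).map A.toLinearMap = vectorSpan ℝ F :=
      (A.toAffineEquiv.toAffineMap.map_vectorSpan (s := A ⁻¹' F)).trans (congrArg _ himage)
    have hrank := LinearEquiv.finrank_map_eq A (vectorSpan ℝ (A ⁻¹' F))
    have hF2 := hF.2
    rw [← hspan] at hF2
    exact hrank ▸ hF2

theorem IsSmoothFano.image (hQ : IsSmoothFano Q) (hA : PreservesLattice A) :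
    IsSmoothFano (A '' Q) := by
  refine ⟨hQ.1.image hA, ?_, fun F hF => ?_⟩
  · have hint := A.toContinuousLinearEquiv.toHomeomorph.image_interior Q
    exact hint.le ⟨0, hQ.2.1, map_zero A⟩
  · rw [vertexSet_image, ← Set.image_preimage_eq F A.surjective, ← Set.image_inter A.injective]
    exact (hQ.2.2 _ hF.preimage).image hA

theorem IStep.image (h : IStep P Q) (hA : PreservesLattice A) : IStep (A '' P) (A '' Q) := by
  simp only [IStep, vertexSet_image]
  refine h.imp ?_ ?_ <;>
  · rintro ⟨w, hw, hwV, hV⟩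
    exact ⟨A w, hA.isLatticePoint hw, A.injective.mem_set_image.not.2 hwV,
      by rw [hV, Set.image_union, Set.image_singleton]⟩

end LatticeAutomorphism

theorem isLatticePoint_zero : IsLatticePoint (0 : Fin n → ℝ) := fun _ => ⟨0, Int.cast_zero.symm⟩

theorem UnimodularEquiv.exists_affineEquiv (h : UnimodularEquiv Q Q') :
    ∃ e : (Fin n → ℝ) ≃ᵃ[ℝ] (Fin n → ℝ), PreservesLattice e ∧ e '' Q = Q' := by
  obtain ⟨φ, hφ, hQ⟩ := h
  have hlattice : ∀ x, IsLatticePoint x → ∃ y, φ y = x := fun x hx =>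
    (hφ.ge hx : x ∈ φ '' _).imp fun _ => And.right
  have hsurj : Function.Surjective φ.linear := by
    rw [← LinearMap.range_eq_top, eq_top_iff, ← (Pi.basisFun ℝ (Fin n)).span_eq,
      Submodule.span_le]
    rintro _ ⟨i, rfl⟩
    obtain ⟨y, hy⟩ := hlattice (Pi.basisFun ℝ (Fin n) i) <| isLatticePoint_iff.2
      ⟨Pi.single i 1, by ext j; simp [latticePt, Pi.single_apply]⟩
    obtain ⟨z, hz⟩ := hlattice 0 isLatticePoint_zero
    exact ⟨y -ᵥ z, by rw [φ.linearMap_vsub, hy, hz, vsub_eq_sub, sub_zero]⟩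
  have hbij : Function.Bijective φ :=
    φ.linear_bijective_iff.1 ⟨LinearMap.injective_iff_surjective.2 hsurj, hsurj⟩
  exact ⟨AffineEquiv.ofBijective hbij, hφ, hQ⟩

theorem UnimodularEquiv.symm (h : UnimodularEquiv Q Q') : UnimodularEquiv Q' Q := by
  obtain ⟨e, he, rfl⟩ := h.exists_affineEquiv
  exact ⟨e.symm, PreservesLattice.symm (e := e.toEquiv) he, e.toEquiv.symm_image_image Q⟩

theorem UnimodularEquiv.trans (h : UnimodularEquiv Q Q') (h' : UnimodularEquiv Q' Q'') :
    UnimodularEquiv Q Q'' := by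
  obtain ⟨φ, hφ, rfl⟩ := h
  obtain ⟨ψ, hψ, rfl⟩ := h'
  exact ⟨ψ.comp φ, by rw [AffineMap.coe_comp, Set.image_comp, hφ, hψ],
    by rw [AffineMap.coe_comp, Set.image_comp]⟩

-- The affine equivalence fixes the origin, the only lattice point interior to either polytope.
theorem UnimodularEquiv.exists_linearEquiv [NeZero n] (hQ : IsSmoothFano Q) (hQ' : IsSmoothFano Q')
    (h : UnimodularEquiv Q Q') :
    ∃ A : (Fin n → ℝ) ≃ₗ[ℝ] (Fin n → ℝ), PreservesLattice A ∧ A '' Q = Q' := by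
  obtain ⟨e, he, rfl⟩ := h.exists_affineEquiv
  have he0 : e 0 = 0 := by
    refine hQ'.eq_zero_of_mem_interior ?_ (he.isLatticePoint isLatticePoint_zero)
    have hint := e.toContinuousAffineEquiv.toHomeomorph.image_interior Q
    exact hint.le ⟨0, hQ.2.1, rfl⟩
  have hlinear : ⇑e.linear = e := by
    ext1 x
    simpa only [vadd_eq_add, add_zero, he0] using (e.map_vadd 0 x).symm
  exact ⟨e.linear, by rwa [hlinear], by rw [hlinear]⟩

theorem iIsolated_of_forall_not_iStep [NeZero n] (hP : IsSmoothFano P)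
    (h : ∀ Q, IsSmoothFano Q → ¬ IStep Q P) : IIsolated P := by
  rintro Q - ⟨k, c, hc, hQ, hPc, hstep⟩
  cases k with
  | zero => exact hQ.trans hPc.symm
  | succ k =>
    obtain ⟨A, hA, hAP⟩ := hPc.symm.exists_linearEquiv (hc _) hP
    refine absurd ?_ (h _ ((hc (Fin.last k).castSucc).image hA))
    have hlast := (hstep (Fin.last k)).image hA
    rwa [Fin.succ_last, hAP] at hlast

end

section

variable {n : ℕ} {Q F : Set (Fin n → ℝ)}

theorem IsFacetOf.exists_mem_polar (hF : IsFacetOf F Q) (hne : F.Nonempty)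
    (h0 : 0 ∈ interior Q) : ∃ u ∈ polar Q, F = {x ∈ Q | u ⬝ᵥ x = 1} := by
  obtain ⟨hexp, hrank⟩ := hF
  obtain ⟨l, hl⟩ := hexp hne
  obtain ⟨f, hf⟩ := (dotProductEquiv ℝ (Fin n)).surjective l.toLinearMap
  have hlf (x : Fin n → ℝ) : l x = f ⬝ᵥ x := (LinearMap.congr_fun hf x).symm
  obtain ⟨x₀, hx₀⟩ := hne
  have hx₀' := hl.le hx₀
  have hmax : ∀ x ∈ Q, f ⬝ᵥ x ≤ f ⬝ᵥ x₀ := by simpa only [hlf] using hx₀'.2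
  have hpos : 0 < f ⬝ᵥ x₀ := by
    by_contra! hneg
    have hf0 := eq_zero_of_forall_dotProduct_nonpos h0 fun x hx => (hmax x hx).trans hneg
    have hFQ : F = Q := by
      ext x
      simp only [hl, hlf, hf0, zero_dotProduct, le_refl, implies_true, Set.mem_ofPred_eq, and_true]
    have hspan : vectorSpan ℝ Q = ⊤ := by
      rw [← direction_affineSpan, affineSpan_eq_top_of_nonempty_interior
        ⟨0, interior_mono (subset_convexHull ℝ Q) h0⟩,
        AffineSubspace.direction_top]
    rw [hFQ, hspan, finrank_top, Module.finrank_fin_fun] at hrank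
    exact n.succ_ne_self hrank
  refine ⟨(f ⬝ᵥ x₀)⁻¹ • f, fun x hx => ?_, ?_⟩
  · rw [smul_dotProduct, smul_eq_mul, inv_mul_le_one₀ hpos]
    exact hmax x hx
  · rw [hl]
    ext x
    refine and_congr_right fun hx => ?_
    rw [smul_dotProduct, smul_eq_mul, inv_mul_eq_one₀ hpos.ne', ← hlf, ← hlf]
    exact ⟨fun h => (h x₀ hx₀'.1).antisymm (hx₀'.2 x hx), fun h y hy => h ▸ hx₀'.2 y hy⟩

theorem IsFacetOf.le_ncard_vertexSet_inter (hF : IsFacetOf F Q) (hne : F.Nonempty)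
    (hQ : IsLatticePolytope Q) : n ≤ (vertexSet Q ∩ F).ncard := by
  have hfin : (vertexSet Q ∩ F).Finite := hQ.finite_vertexSet.subset Set.inter_subset_left
  have hext : F.extremePoints ℝ = vertexSet Q ∩ F := by
    rw [hF.1.isExtreme.extremePoints_eq, Set.inter_comm, vertexSet]
  have hhull : convexHull ℝ (vertexSet Q ∩ F) = F := by
    rw [← (hfin.isCompact_convexHull ℝ).isClosed.closure_eq, ← hext]
    exact closure_convexHull_extremePoints (hF.1.isCompact hQ.isCompact) (hF.1.convex hQ.convex)
  have hspan : vectorSpan ℝ F = vectorSpan ℝ (vertexSet Q ∩ F) := by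
    rw [← direction_affineSpan, ← direction_affineSpan, ← affineSpan_convexHull (vertexSet Q ∩ F),
      hhull]
  have := hfin.fintype
  have := (convexHull_nonempty_iff.1 (hhull.symm ▸ hne)).to_subtype
  have hle := finrank_vectorSpan_range_add_one_le ℝ
    (Subtype.val : ↥(vertexSet Q ∩ F) → Fin n → ℝ)
  rwa [Subtype.range_coe, ← hspan, hF.2, ← Nat.card_eq_fintype_card] at hle

end

/-! ### Normal systems -/

section

variable {n : ℕ} {ι κ : Type*}

theorem sum_smul_mem_of_zero_mem {S : Set (Fin n → ℝ)} (hS : Convex ℝ S) (h0 : 0 ∈ S)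
    {s : Finset ι} {a : ι → ℝ} {z : ι → Fin n → ℝ} (ha : ∀ i ∈ s, 0 ≤ a i) (hsum : ∑ i ∈ s, a i ≤ 1)
    (hz : ∀ i ∈ s, z i ∈ S) : ∑ i ∈ s, a i • z i ∈ S := by
  rcases (Finset.sum_nonneg ha).eq_or_lt' with hzero | hpos
  · rwa [Finset.sum_eq_zero fun i hi => by
      rw [(Finset.sum_eq_zero_iff_of_nonneg ha).1 hzero i hi, zero_smul]]
  · have hmem := hS.smul_mem_of_zero_mem h0 (hS.centerMass_mem ha hpos hz) ⟨hpos.le, hsum⟩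
    rwa [Finset.centerMass, smul_inv_smul₀ hpos.ne'] at hmem

theorem sum_dotProduct_smul_of_dual [DecidableEq ι] {s : Finset ι} {b d : ι → Fin n → ℝ}
    (hs : s.card = n) (hdual : ∀ i ∈ s, ∀ j ∈ s, d i ⬝ᵥ b j = if i = j then 1 else 0)
    (x : Fin n → ℝ) : ∑ i ∈ s, (d i ⬝ᵥ x) • b i = x := by
  let D : Matrix s (Fin n) ℝ := .of fun i => d i
  let B : Matrix (Fin n) s ℝ := .of fun a i => b i a
  have hDB : D * B = 1 := by
    ext i j
    exact (hdual i i.2 j j.2).trans (by simp only [Matrix.one_apply, Subtype.ext_iff])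
  have hBD : B * D = 1 :=
    (Matrix.mul_eq_one_comm_of_equiv (s.equivFinOfCardEq hs)).1 hDB
  calc ∑ i ∈ s, (d i ⬝ᵥ x) • b i = B.mulVec (D.mulVec x) := by
        ext a
        rw [← Finset.sum_coe_sort, Finset.sum_apply]
        exact Finset.sum_congr rfl fun i _ => mul_comm _ _
    _ = x := by rw [Matrix.mulVec_mulVec, hBD, Matrix.one_mulVec]

variable [Fintype ι]

section NormalSystem

/-- The lattice polytope spanned by the points `V i`. -/
abbrev latticeHull (V : ι → Fin n → ℤ) : Set (Fin n → ℝ) :=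
  convexHull ℝ (Set.range fun i => latticePt (V i))

/-- The points of the configuration `V`, given by their indices, on the hyperplane `u = 1`. -/
def tightIndices (V : ι → Fin n → ℤ) (u : Fin n → ℤ) : Finset ι := {i | u ⬝ᵥ V i = 1}

/-- A facet normal `v` replaces `u` when the tight point `V i` is given up. By the divisibility,
`(u - v) / (1 - v ⬝ᵥ V i)` is integral; it is the vector dual to `V i` in the dual basis of the
tight points of `u`. -/
structure IsPivot (V : ι → Fin n → ℤ) (u v : Fin n → ℤ) (i : ι) : Prop where
  nonpos : v ⬝ᵥ V i ≤ 0
  eq_one : ∀ j ∈ tightIndices V u, j ≠ i → v ⬝ᵥ V j = 1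
  dvd : ∀ a, 1 - v ⬝ᵥ V i ∣ u a - v a

/-- A system `N` of covectors satisfying the finitely many conditions, closure under pivoting among
them, by which it is recognised as the system of facet normals of the polytope spanned by `V`. -/
structure IsNormalSystem (V : ι → Fin n → ℤ) (N : κ → Fin n → ℤ) : Prop where
  le_one : ∀ k i, N k ⬝ᵥ V i ≤ 1
  card_tight : ∀ k, (tightIndices V (N k)).card = n
  exists_pivot : ∀ k, ∀ i ∈ tightIndices V (N k), ∃ k', IsPivot V (N k) (N k') i

variable {V : ι → Fin n → ℤ} {N : κ → Fin n → ℤ}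

theorem mem_tightIndices {u : Fin n → ℤ} {i : ι} : i ∈ tightIndices V u ↔ u ⬝ᵥ V i = 1 := by
  simp only [tightIndices, Finset.mem_filter_univ]

instance [DecidableEq ι] (u u' : Fin n → ℤ) : DecidablePred (IsPivot V u u') := fun i =>
  decidable_of_iff (u' ⬝ᵥ V i ≤ 0 ∧ (∀ j ∈ tightIndices V u, j ≠ i → u' ⬝ᵥ V j = 1) ∧
    ∀ a, 1 - u' ⬝ᵥ V i ∣ u a - u' a) ⟨fun h => ⟨h.1, h.2.1, h.2.2⟩, fun h => ⟨h.1, h.2, h.3⟩⟩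

theorem IsPivot.exists_dual [DecidableEq ι] {u u' : Fin n → ℤ} {i : ι} (h : IsPivot V u u' i) :
    ∃ d : Fin n → ℤ, ∃ c : ℤ, 0 < c ∧ u - u' = c • d ∧
      ∀ j ∈ tightIndices V u, d ⬝ᵥ V j = if i = j then 1 else 0 := by
  choose d hd using h.dvd
  have hc : 0 < 1 - u' ⬝ᵥ V i := by linarith [h.nonpos]
  have hdu : u - u' = (1 - u' ⬝ᵥ V i) • d := funext hd
  refine ⟨d, _, hc, hdu, fun j hj => mul_left_cancel₀ hc.ne' ?_⟩
  rw [← smul_eq_mul, ← smul_dotProduct, ← hdu, sub_dotProduct, mem_tightIndices.1 hj]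
  split_ifs with hij
  · rw [hij, mul_one]
  · rw [h.eq_one j hj (Ne.symm hij), sub_self, mul_zero]

namespace IsNormalSystem

theorem exists_dualBasis [DecidableEq ι] (h : IsNormalSystem V N) (k : κ) :
    ∃ d : ι → Fin n → ℤ,
      (∀ x, ∑ i ∈ tightIndices V (N k), (latticePt (d i) ⬝ᵥ x) • latticePt (V i) = x) ∧
      (∀ i ∈ tightIndices V (N k), ∀ j ∈ tightIndices V (N k),
        d i ⬝ᵥ V j = if i = j then 1 else 0) ∧
      ∀ i ∈ tightIndices V (N k), ∃ k', ∃ c : ℝ, 0 < c ∧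
        c • latticePt (d i) = latticePt (N k) - latticePt (N k') := by
  have : Nonempty κ := ⟨k⟩
  choose! k' hk' using h.exists_pivot k
  choose! d c hc hdc hd using fun i hi => (hk' i hi).exists_dual
  refine ⟨d, sum_dotProduct_smul_of_dual (h.card_tight k) fun i hi j hj => ?_, hd,
    fun i hi => ⟨k' i, c i, Int.cast_pos.2 (hc i hi), ?_⟩⟩
  · rw [latticePt_dotProduct, hd i hi j hj, Int.cast_ite, Int.cast_one, Int.cast_zero]
  · rw [← latticePt_sub, hdc i hi, latticePt_smul]

theorem isUnimodularBasis_tight (h : IsNormalSystem V N) (k : κ) :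
    IsUnimodularBasis ((fun i => latticePt (V i)) '' tightIndices V (N k)) := by
  classical
  obtain ⟨d, hexp, hdual, -⟩ := h.exists_dualBasis k
  let e := (tightIndices V (N k)).equivFinOfCardEq (h.card_tight k)
  refine isUnimodularBasis_iff.2 ⟨fun a => latticePt (V (e.symm a)), fun a b hab => ?_, ?_,
    fun a => isLatticePoint_latticePt _, fun x hx => ?_⟩
  · have hdual' := hdual _ (e.symm a).2 _ (e.symm b).2
    rw [← latticePt_injective hab, hdual _ (e.symm a).2 _ (e.symm a).2, if_pos rfl] at hdual'
    by_contra hne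
    rw [if_neg fun heq => hne (e.symm.injective (Subtype.ext heq))] at hdual'
    exact one_ne_zero hdual'
  · rw [Set.image_eq_range]
    exact e.symm.surjective.range_comp fun i : tightIndices V (N k) => latticePt (V i)
  · obtain ⟨y, rfl⟩ := isLatticePoint_iff.1 hx
    refine ⟨fun a => d (e.symm a) ⬝ᵥ y, ?_⟩
    simp only [← latticePt_dotProduct]
    rw [e.symm.sum_comp fun i : tightIndices V (N k) =>
      (latticePt (d i) ⬝ᵥ latticePt y) • latticePt (V i), Finset.sum_coe_sort _ fun i =>
      (latticePt (d i) ⬝ᵥ latticePt y) • latticePt (V i), hexp]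

end IsNormalSystem

theorem dotProduct_sum_tightIndices (u : Fin n → ℤ) (a : ι → ℝ) :
    latticePt u ⬝ᵥ ∑ i ∈ tightIndices V u, a i • latticePt (V i) =
      ∑ i ∈ tightIndices V u, a i := by
  rw [dotProduct_sum]
  refine Finset.sum_congr rfl fun i hi => ?_
  rw [dotProduct_smul, latticePt_dotProduct, mem_tightIndices.1 hi, Int.cast_one, smul_eq_mul,
    mul_one]

-- The cones over the facets cover the space: take the facet whose normal is largest at `x`.
theorem IsNormalSystem.exists_eq_sum_tight [Finite κ] [Nonempty κ] (h : IsNormalSystem V N)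
    (x : Fin n → ℝ) : ∃ k, ∃ a : ι → ℝ, (∀ i ∈ tightIndices V (N k), 0 ≤ a i) ∧
      x = ∑ i ∈ tightIndices V (N k), a i • latticePt (V i) := by
  classical
  obtain ⟨k, hk⟩ := Finite.exists_max fun k => latticePt (N k) ⬝ᵥ x
  obtain ⟨d, hexp, -, hpivot⟩ := h.exists_dualBasis k
  refine ⟨k, fun i => latticePt (d i) ⬝ᵥ x, fun i hi => ?_, (hexp x).symm⟩
  obtain ⟨k', c, hc, hd⟩ := hpivot i hi
  have hle : 0 ≤ c * (latticePt (d i) ⬝ᵥ x) := by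
    rw [← smul_eq_mul, ← smul_dotProduct, hd, sub_dotProduct]
    exact sub_nonneg.2 (hk k')
  exact nonneg_of_mul_nonneg_right hle hc

namespace IsNormalSystem

theorem eq_latticePt_of_forall_dotProduct_eq_one (h : IsNormalSystem V N) {i : ι} {k : κ}
    (hi : i ∈ tightIndices V (N k)) {x : Fin n → ℝ}
    (hx : ∀ k', i ∈ tightIndices V (N k') → latticePt (N k') ⬝ᵥ x = 1) : x = latticePt (V i) := by
  classical
  obtain ⟨d, hexp, hdual, hpivot⟩ := h.exists_dualBasis k
  have hcoord : ∀ j ∈ tightIndices V (N k), j ≠ i → latticePt (d j) ⬝ᵥ x = 0 := by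
    intro j hj hji
    obtain ⟨k', c, hc, hd⟩ := hpivot j hj
    have hk' : i ∈ tightIndices V (N k') := by
      have hval := congrArg (· ⬝ᵥ latticePt (V i)) hd
      simp only [smul_dotProduct, sub_dotProduct, latticePt_dotProduct, hdual j hj i hi, if_neg hji,
        mem_tightIndices.1 hi, Int.cast_zero, Int.cast_one, smul_zero] at hval
      exact mem_tightIndices.2 (by exact_mod_cast (sub_eq_zero.1 hval.symm).symm)
    have hval : c * (latticePt (d j) ⬝ᵥ x) = 0 := by
      rw [← smul_eq_mul, ← smul_dotProduct, hd, sub_dotProduct, hx k hi, hx k' hk', sub_self]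
    exact (mul_eq_zero.1 hval).resolve_left hc.ne'
  have hxi : (latticePt (d i) ⬝ᵥ x) • latticePt (V i) = x := by
    have hsum := hexp x
    rwa [Finset.sum_eq_single_of_mem i hi fun j hj hji => by rw [hcoord j hj hji, zero_smul]]
      at hsum
  have hone : latticePt (d i) ⬝ᵥ x = 1 := by
    rw [← hx k hi]
    nth_rw 2 [← hxi]
    rw [dotProduct_smul, latticePt_dotProduct, mem_tightIndices.1 hi, Int.cast_one, smul_eq_mul,
      mul_one]
  rw [← hxi, hone, one_smul]

variable [Finite κ] [Nonempty κ]

theorem zero_mem_latticeHull [Nonempty ι] (h : IsNormalSystem V N) : 0 ∈ latticeHull V := by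
  classical
  obtain ⟨k, a, ha, hsum⟩ := h.exists_eq_sum_tight (-∑ i, latticePt (V i))
  let w (i : ι) : ℝ := 1 + if i ∈ tightIndices V (N k) then a i else 0
  have hw (i : ι) : 0 < w i := by
    dsimp only [w]
    split_ifs with hi
    · linarith [ha i hi]
    · norm_num
  have hzero : ∑ i, w i • latticePt (V i) = 0 := by
    simp only [w, add_smul, one_smul, Finset.sum_add_distrib, ite_smul, zero_smul]
    rw [Finset.sum_ite_mem, Finset.univ_inter, ← hsum, add_neg_cancel]
  have hmem := Finset.univ.centerMass_mem_convexHull (fun i _ => (hw i).le)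
    (Finset.sum_pos (fun i _ => hw i) Finset.univ_nonempty)
    fun i _ => Set.mem_range_self (f := fun i => latticePt (V i)) i
  rwa [Finset.centerMass, hzero, smul_zero] at hmem

theorem mem_latticeHull_iff [Nonempty ι] (h : IsNormalSystem V N) {x : Fin n → ℝ} :
    x ∈ latticeHull V ↔ ∀ k, latticePt (N k) ⬝ᵥ x ≤ 1 := by
  constructor
  · intro hx k
    have hconv : Convex ℝ {y | latticePt (N k) ⬝ᵥ y ≤ 1} :=
      convex_halfSpace_le (dotProductEquiv ℝ (Fin n) (latticePt (N k))).isLinear 1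
    refine convexHull_min ?_ hconv hx
    rintro _ ⟨i, rfl⟩
    rw [Set.mem_ofPred_eq, latticePt_dotProduct]
    exact_mod_cast h.le_one k i
  · intro hx
    obtain ⟨k, a, ha, rfl⟩ := h.exists_eq_sum_tight x
    refine sum_smul_mem_of_zero_mem (convex_convexHull ℝ _) h.zero_mem_latticeHull ha ?_
      fun i _ => subset_convexHull ℝ _ ⟨i, rfl⟩
    rw [← dotProduct_sum_tightIndices]
    exact hx k

theorem zero_mem_interior [Nonempty ι] (h : IsNormalSystem V N) :
    0 ∈ interior (latticeHull V) := by
  refine mem_interior.2 ⟨⋂ k, {x | latticePt (N k) ⬝ᵥ x < 1}, fun x hx => ?_, ?_, ?_⟩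
  · exact h.mem_latticeHull_iff.2 fun k => (Set.mem_iInter.1 hx k).le
  · exact isOpen_iInter_of_finite fun k => isOpen_lt (by fun_prop) continuous_const
  · simp

theorem exists_mem_tightIndices (h : IsNormalSystem V N) {i : ι} (hi : V i ≠ 0) :
    ∃ k, i ∈ tightIndices V (N k) := by
  obtain ⟨k, a, ha, hsum⟩ := h.exists_eq_sum_tight (latticePt (V i))
  have hval : ((N k ⬝ᵥ V i : ℤ) : ℝ) = ∑ j ∈ tightIndices V (N k), a j := by
    rw [← latticePt_dotProduct, hsum, dotProduct_sum_tightIndices]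
  have hpos : 0 < N k ⬝ᵥ V i := by
    by_contra! hneg
    have hzero : ∑ j ∈ tightIndices V (N k), a j = 0 :=
      (hval ▸ Int.cast_nonpos.2 hneg).antisymm (Finset.sum_nonneg ha)
    refine hi (latticePt_injective (hsum.trans ?_))
    rw [Finset.sum_eq_zero fun j hj => by
      rw [(Finset.sum_eq_zero_iff_of_nonneg ha).1 hzero j hj, zero_smul]]
    exact latticePt_zero.symm
  exact ⟨k, mem_tightIndices.2 ((h.le_one k i).antisymm hpos)⟩

theorem vertexSet_latticeHull [Nonempty ι] (h : IsNormalSystem V N) (hV : ∀ i, V i ≠ 0) :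
    vertexSet (latticeHull V) = Set.range fun i => latticePt (V i) := by
  refine extremePoints_convexHull_subset.antisymm ?_
  rintro _ ⟨i, rfl⟩
  obtain ⟨k, hi⟩ := h.exists_mem_tightIndices (hV i)
  refine ⟨subset_convexHull ℝ _ ⟨i, rfl⟩, fun x hx y hy hseg => ?_⟩
  refine h.eq_latticePt_of_forall_dotProduct_eq_one hi fun k' hk' => ?_
  obtain ⟨a, b, ha, hb, hab, heq⟩ := hseg
  have hval : latticePt (N k') ⬝ᵥ (a • x + b • y) = 1 := by
    rw [heq, latticePt_dotProduct, mem_tightIndices.1 hk', Int.cast_one]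
  rw [dotProduct_add, dotProduct_smul, dotProduct_smul, smul_eq_mul, smul_eq_mul] at hval
  nlinarith [h.mem_latticeHull_iff.1 hx k', h.mem_latticeHull_iff.1 hy k']

theorem isLatticePolytope [Nonempty ι] (h : IsNormalSystem V N) :
    IsLatticePolytope (latticeHull V) := by
  refine ⟨⟨(Set.finite_range fun i => latticePt (V i)).toFinset, ?_, ?_⟩, ?_⟩
  · simp only [Set.Finite.mem_toFinset, Set.forall_mem_range]
    exact fun i => isLatticePoint_latticePt _
  · rw [Set.Finite.coe_toFinset]
  · rw [affineSpan_convexHull]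
    exact affineSpan_eq_top_of_nonempty_interior ⟨0, h.zero_mem_interior⟩

theorem tightVertices_latticePt [Nonempty ι] (h : IsNormalSystem V N) (hV : ∀ i, V i ≠ 0)
    (u : Fin n → ℤ) : tightVertices (latticeHull V) (latticePt u) =
      (fun i => latticePt (V i)) '' tightIndices V u := by
  rw [tightVertices, h.vertexSet_latticeHull hV]
  ext v
  simp only [Set.mem_range, Set.mem_image, Finset.mem_coe, mem_tightIndices]
  constructor
  · rintro ⟨⟨i, rfl⟩, hi⟩
    exact ⟨i, by exact_mod_cast latticePt_dotProduct u (V i) ▸ hi, rfl⟩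
  · rintro ⟨i, hi, rfl⟩
    exact ⟨⟨i, rfl⟩, by rw [latticePt_dotProduct, hi, Int.cast_one]⟩

theorem isUnimodularBasis_of_isFacetOf [Nonempty ι] (h : IsNormalSystem V N) (hV : ∀ i, V i ≠ 0)
    {F : Set (Fin n → ℝ)} (hF : IsFacetOf F (latticeHull V)) (hne : F.Nonempty) :
    IsUnimodularBasis (vertexSet (latticeHull V) ∩ F) := by
  obtain ⟨u, hu, hFu⟩ := hF.exists_mem_polar hne h.zero_mem_interior
  have hle (y : Fin n → ℝ) : ∃ u' ∈ Set.range fun k => latticePt (N k), u ⬝ᵥ y ≤ u' ⬝ᵥ y := by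
    obtain ⟨k, a, ha, rfl⟩ := h.exists_eq_sum_tight y
    refine ⟨_, ⟨k, rfl⟩, ?_⟩
    rw [dotProduct_sum_tightIndices, dotProduct_sum]
    refine Finset.sum_le_sum fun i hi => ?_
    rw [dotProduct_smul, smul_eq_mul]
    exact mul_le_of_le_one_right (ha i hi) (hu _ (subset_convexHull ℝ _ ⟨i, rfl⟩))
  have hN : (Set.range fun k => latticePt (N k)) ⊆ polar (latticeHull V) := by
    rintro _ ⟨k, rfl⟩ x hx
    exact h.mem_latticeHull_iff.1 hx k
  obtain ⟨_, ⟨k, rfl⟩, hsub⟩ := exists_tightVertices_subset_of_forall_exists_le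
    h.isLatticePolytope.finite_vertexSet hN hle
  have hbasis := h.isUnimodularBasis_tight k
  rw [← h.tightVertices_latticePt hV] at hbasis
  have heq : vertexSet (latticeHull V) ∩ F = tightVertices (latticeHull V) u := by
    rw [hFu]
    ext v
    exact and_congr_right fun hv => ⟨And.right, fun huv => ⟨hv.1, huv⟩⟩
  have hcard := hF.le_ncard_vertexSet_inter hne h.isLatticePolytope
  rw [heq] at hcard ⊢
  rwa [Set.eq_of_subset_of_ncard_le hsub (hbasis.ncard.trans_le hcard) hbasis.finite]

-- For `n = 1` the empty set counts as a facet, by the dimension convention for `vectorSpan ℝ ∅`.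
theorem isSmoothFano (h : IsNormalSystem V N) (hV : ∀ i, V i ≠ 0) (hn : 1 < n) :
    IsSmoothFano (latticeHull V) := by
  have : Nonempty ι := by
    obtain ⟨i, -⟩ := Finset.card_pos.1 (h.card_tight (Classical.arbitrary κ) ▸ zero_lt_one.trans hn)
    exact ⟨i⟩
  refine ⟨h.isLatticePolytope, h.zero_mem_interior, fun F hF => ?_⟩
  refine h.isUnimodularBasis_of_isFacetOf hV hF (Set.nonempty_iff_ne_empty.2 ?_)
  rintro rfl
  have hrank := hF.2
  rw [vectorSpan_empty, finrank_bot] at hrank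
  exact hn.ne hrank

end IsNormalSystem

end NormalSystem

end

/-! ### Obstructions to adding or deleting a vertex -/

section

variable {n : ℕ} {ι : Type*} {Q : Set (Fin n → ℝ)} {V : ι → Fin n → ℤ}

theorem exists_int_mul_of_isUnimodularBasis {T : Set (Fin n → ℝ)} {w g z : Fin n → ℝ}
    (hB : IsUnimodularBasis (insert w T)) (hg : ∀ v ∈ T, g ⬝ᵥ v = 0) (hz : IsLatticePoint z) :
    ∃ m : ℤ, g ⬝ᵥ z = m * (g ⬝ᵥ w) := by
  obtain ⟨b, hinj, hb, -, hspan⟩ := isUnimodularBasis_iff.1 hB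
  obtain ⟨i, rfl⟩ : w ∈ Set.range b := hb ▸ Set.mem_insert w T
  obtain ⟨k, rfl⟩ := hspan z hz
  refine ⟨k i, ?_⟩
  rw [dotProduct_sum, Finset.sum_eq_single i, dotProduct_smul, smul_eq_mul]
  · intro j _ hj
    have hjT : b j ∈ T := (hb.le ⟨j, rfl⟩ : b j ∈ insert (b i) T).resolve_left (hinj.ne hj)
    rw [dotProduct_smul, hg _ hjT, smul_zero]
  · exact fun hi => absurd (Finset.mem_univ i) hi

-- If `w` lies beyond the facet `u' = 1` but not beyond its neighbour `u = 1`, then `w` and the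
-- common ridge of the two span a facet of `Q`; its normal is an affine combination of `u` and `u'`.
theorem IsSmoothFano.exists_int_mul_of_ridge [NeZero n] (hQ : IsSmoothFano Q)
    {w z u u' : Fin n → ℝ} (hw : w ∈ vertexSet Q) (hz : IsLatticePoint z)
    (hu : ∀ v ∈ vertexSet Q, v ≠ w → u ⬝ᵥ v ≤ 1) (hu' : ∀ v ∈ vertexSet Q, v ≠ w → u' ⬝ᵥ v ≤ 1)
    (hridge : n ≤ (tightVertices Q u ∩ tightVertices Q u').ncard + 1)
    (huw : u ⬝ᵥ w < 1) (huw' : 1 < u' ⬝ᵥ w) :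
    ∃ m : ℤ, (u' - u) ⬝ᵥ z = m * ((u' - u) ⬝ᵥ w) := by
  set T := tightVertices Q u ∩ tightVertices Q u'
  have hgap : 0 < u' ⬝ᵥ w - u ⬝ᵥ w := by linarith
  set f := (u' ⬝ᵥ w - u ⬝ᵥ w)⁻¹ • ((u' ⬝ᵥ w - 1) • u + (1 - u ⬝ᵥ w) • u') with hf
  have hfval (v : Fin n → ℝ) : f ⬝ᵥ v = (u' ⬝ᵥ w - u ⬝ᵥ w)⁻¹ *
      ((u' ⬝ᵥ w - 1) * (u ⬝ᵥ v) + (1 - u ⬝ᵥ w) * (u' ⬝ᵥ v)) := by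
    simp only [hf, smul_dotProduct, add_dotProduct, smul_eq_mul]
  have hfw : f ⬝ᵥ w = 1 := by
    rw [hfval, inv_mul_eq_one₀ hgap.ne']
    ring
  have hfT : ∀ v ∈ T, f ⬝ᵥ v = 1 := fun v hv => by
    rw [hfval, hv.1.2, hv.2.2, inv_mul_eq_one₀ hgap.ne']
    ring
  have hfQ : ∀ v ∈ vertexSet Q, f ⬝ᵥ v ≤ 1 := fun v hv => by
    rcases eq_or_ne v w with rfl | hvw
    · exact hfw.le
    · rw [hfval, inv_mul_le_one₀ hgap]
      nlinarith [hu v hv hvw, hu' v hv hvw]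
  have hwT : w ∉ T := fun hwT => huw.ne hwT.1.2
  obtain ⟨B, hB, hsub⟩ := hQ.exists_isUnimodularBasis hfQ
  have hinsert : insert w T ⊆ B := Set.insert_subset (hsub ⟨hw, hfw⟩)
    fun v hv => hsub ⟨hv.1.1, hfT v hv⟩
  have hTfin : T.Finite := hB.finite.subset ((Set.subset_insert w T).trans hinsert)
  have hBeq : insert w T = B := Set.eq_of_subset_of_ncard_le hinsert
    (by rwa [hB.ncard, Set.ncard_insert_of_notMem hwT hTfin]) hB.finite
  refine exists_int_mul_of_isUnimodularBasis (hBeq ▸ hB) (fun v hv => ?_) hz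
  rw [sub_dotProduct, hv.1.2, hv.2.2, sub_self]

theorem latticePt_mem_tightVertices {u v : Fin n → ℤ} :
    latticePt v ∈ tightVertices Q (latticePt u) ↔ latticePt v ∈ vertexSet Q ∧ u ⬝ᵥ v = 1 := by
  rw [tightVertices, Set.mem_ofPred_eq, latticePt_dotProduct, Int.cast_eq_one]

theorem card_le_ncard_of_latticePt_mem {s : Finset (Fin n → ℤ)} {A : Set (Fin n → ℝ)}
    (hA : A.Finite) (hs : ∀ v ∈ s, latticePt v ∈ A) : s.card ≤ A.ncard := by
  rw [← Set.ncard_coe_finset s, ← Set.ncard_image_of_injective _ latticePt_injective]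
  exact Set.ncard_le_ncard (Set.image_subset_iff.2 hs) hA

theorem IsSmoothFano.card_le_of_dotProduct_eq_one [NeZero n] (hQ : IsSmoothFano Q)
    {u : Fin n → ℤ} (hu : ∀ v ∈ vertexSet Q, latticePt u ⬝ᵥ v ≤ 1) {s : Finset (Fin n → ℤ)}
    (hs : ∀ v ∈ s, latticePt v ∈ vertexSet Q ∧ u ⬝ᵥ v = 1) : s.card ≤ n :=
  (card_le_ncard_of_latticePt_mem (hQ.1.finite_vertexSet.subset fun _ hv => hv.1)
    fun v hv => latticePt_mem_tightVertices.2 (hs v hv)).trans (hQ.ncard_tightVertices_le hu)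

theorem IsSmoothFano.zero_notMem_vertexSet [NeZero n] (hQ : IsSmoothFano Q) : 0 ∉ vertexSet Q :=
  fun h => (disjoint_interior_extremePoints Q).le_bot ⟨hQ.2.1, h⟩

theorem dotProduct_le_one_of_vertexSet_eq_insert {u w : Fin n → ℤ}
    (hvert : vertexSet Q = insert (latticePt w) (Set.range fun i => latticePt (V i)))
    (hu : ∀ i, u ⬝ᵥ V i ≤ 1) : ∀ v ∈ vertexSet Q, v ≠ latticePt w → latticePt u ⬝ᵥ v ≤ 1 := by
  intro v hv hvw
  rw [hvert] at hv
  obtain ⟨i, rfl⟩ := hv.resolve_left hvw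
  rw [latticePt_dotProduct]
  exact_mod_cast hu i

variable [Fintype ι]

/-- The hyperplanes `u = 1` and `u' = 1` share at least `n - 1` points of the configuration `V`, and
`u` and `u'` differ by exactly one on some point of `V`. For facet normals this says that the facets
are adjacent and that `u - u'` is primitive. -/
structure UnitAdjacent (V : ι → Fin n → ℤ) (u u' : Fin n → ℤ) : Prop where
  le_card : n ≤ (Finset.univ.filter fun i => u ⬝ᵥ V i = 1 ∧ u' ⬝ᵥ V i = 1).card + 1
  exists_abs_sub_eq_one : ∃ i, |u ⬝ᵥ V i - u' ⬝ᵥ V i| = 1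

instance : DecidableRel (UnitAdjacent V) := fun u u' =>
  decidable_of_iff (n ≤ (Finset.univ.filter fun i => u ⬝ᵥ V i = 1 ∧ u' ⬝ᵥ V i = 1).card + 1 ∧
    ∃ i, |u ⬝ᵥ V i - u' ⬝ᵥ V i| = 1) ⟨fun h => ⟨h.1, h.2⟩, fun h => ⟨h.1, h.2⟩⟩

theorem UnitAdjacent.symm {u u' : Fin n → ℤ} (h : UnitAdjacent V u u') : UnitAdjacent V u' u :=
  ⟨by simpa only [and_comm] using h.le_card, by
    simpa only [abs_sub_comm] using h.exists_abs_sub_eq_one⟩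

section Deletion

/-- The covector `u` shows that the points of `V` other than `V j` are not the vertices of a smooth
Fano polytope: they lie in the half-space `u ≤ 0`, or more than `n` of them lie on the supporting
hyperplane `u = 1`. -/
def ObstructsDeletion [DecidableEq ι] (V : ι → Fin n → ℤ) (j : ι) (u : Fin n → ℤ) : Prop :=
  (u ≠ 0 ∧ ∀ i ≠ j, u ⬝ᵥ V i ≤ 0) ∨
    ((∀ i ≠ j, u ⬝ᵥ V i ≤ 1) ∧ n < ((tightIndices V u).erase j).card)

instance [DecidableEq ι] (j : ι) : DecidablePred (ObstructsDeletion V j) := fun _ =>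
  inferInstanceAs (Decidable (_ ∨ _))

theorem ObstructsDeletion.vertexSet_ne [DecidableEq ι] [NeZero n] {j : ι} {u : Fin n → ℤ}
    (h : ObstructsDeletion V j u) (hV : Function.Injective V) (hQ : IsSmoothFano Q) :
    vertexSet Q ≠ Set.range (fun i => latticePt (V i)) \ {latticePt (V j)} := by
  intro hvert
  have hle {c : ℤ} (hc : ∀ i ≠ j, u ⬝ᵥ V i ≤ c) : ∀ v ∈ vertexSet Q, latticePt u ⬝ᵥ v ≤ c := by
    rw [hvert]
    rintro _ ⟨⟨i, rfl⟩, hi⟩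
    rw [latticePt_dotProduct]
    exact_mod_cast hc i fun hij => hi (by rw [hij, Set.mem_singleton_iff])
  rcases h with ⟨hu, hnonpos⟩ | ⟨hone, hcard⟩
  · refine hu (latticePt_injective ?_)
    exact (hQ.eq_zero_of_forall_vertex_nonpos (by exact_mod_cast hle hnonpos)).trans
      latticePt_zero.symm
  · rw [← Finset.card_image_of_injective _ hV] at hcard
    refine hcard.not_ge (hQ.card_le_of_dotProduct_eq_one (by exact_mod_cast hle hone) ?_)
    simp only [Finset.forall_mem_image, Finset.mem_erase, mem_tightIndices]
    intro i hi
    exact ⟨hvert ▸ ⟨⟨i, rfl⟩, fun heq => hi.1 (hV (latticePt_injective heq))⟩, hi.2⟩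

end Deletion

section Insertion

variable {w : Fin n → ℤ} {u u' : Fin n → ℤ}

theorem IsSmoothFano.dotProduct_ne_one_of_vertexSet_eq_insert [NeZero n] (hQ : IsSmoothFano Q)
    (hV : Function.Injective V) (hw : w ∉ Set.range V)
    (hvert : vertexSet Q = insert (latticePt w) (Set.range fun i => latticePt (V i)))
    (hu : ∀ i, u ⬝ᵥ V i ≤ 1) (hcard : n ≤ (tightIndices V u).card) : u ⬝ᵥ w ≠ 1 := by
  intro huw
  have hle : ∀ v ∈ vertexSet Q, latticePt u ⬝ᵥ v ≤ 1 := fun v hv => by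
    rcases eq_or_ne v (latticePt w) with rfl | hvw
    · rw [latticePt_dotProduct, huw, Int.cast_one]
    · exact dotProduct_le_one_of_vertexSet_eq_insert hvert hu v hv hvw
  have hcard' := hQ.card_le_of_dotProduct_eq_one hle
    (s := insert w ((tightIndices V u).image V)) <| by
      simp only [Finset.forall_mem_insert, Finset.forall_mem_image, mem_tightIndices]
      exact ⟨⟨hvert ▸ Or.inl rfl, huw⟩, fun i hi => ⟨hvert ▸ Or.inr ⟨i, rfl⟩, hi⟩⟩
  rw [Finset.card_insert_of_notMem (fun hmem => hw ?_), Finset.card_image_of_injective _ hV]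
    at hcard'
  · omega
  · obtain ⟨i, -, hi⟩ := Finset.mem_image.1 hmem
    exact ⟨i, hi⟩

theorem UnitAdjacent.dotProduct_le_one_of_nonpos [NeZero n] (hadj : UnitAdjacent V u u')
    (hQ : IsSmoothFano Q) (hV : Function.Injective V)
    (hvert : vertexSet Q = insert (latticePt w) (Set.range fun i => latticePt (V i)))
    (hu : ∀ i, u ⬝ᵥ V i ≤ 1) (hu' : ∀ i, u' ⬝ᵥ V i ≤ 1) (huw : u ⬝ᵥ w ≤ 0) : u' ⬝ᵥ w ≤ 1 := by
  by_contra! hu'w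
  obtain ⟨i, hi⟩ := hadj.exists_abs_sub_eq_one
  have hshared := card_le_ncard_of_latticePt_mem
    (s := (Finset.univ.filter fun j => u ⬝ᵥ V j = 1 ∧ u' ⬝ᵥ V j = 1).image V)
    (A := tightVertices Q (latticePt u) ∩ tightVertices Q (latticePt u'))
    (hQ.1.finite_vertexSet.subset fun v hv => hv.1.1) <| by
      simp only [Finset.forall_mem_image, Finset.mem_filter_univ, Set.mem_inter_iff,
        latticePt_mem_tightVertices, hvert]
      exact fun j hj => ⟨⟨Or.inr ⟨j, rfl⟩, hj.1⟩, ⟨Or.inr ⟨j, rfl⟩, hj.2⟩⟩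
  rw [Finset.card_image_of_injective _ hV] at hshared
  obtain ⟨m, hm⟩ := hQ.exists_int_mul_of_ridge (w := latticePt w) (hvert ▸ Or.inl rfl)
    (isLatticePoint_latticePt (V i)) (dotProduct_le_one_of_vertexSet_eq_insert hvert hu)
    (dotProduct_le_one_of_vertexSet_eq_insert hvert hu')
    (hadj.le_card.trans (Nat.add_le_add_right hshared 1))
    (by rw [latticePt_dotProduct]; exact_mod_cast huw.trans_lt one_pos)
    (by rw [latticePt_dotProduct]; exact_mod_cast hu'w)
  rw [← latticePt_sub, latticePt_dotProduct, latticePt_dotProduct] at hm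
  have hdvd : (u' - u) ⬝ᵥ w ∣ (u' - u) ⬝ᵥ V i := ⟨m, by rw [mul_comm]; exact_mod_cast hm⟩
  rw [sub_dotProduct, sub_dotProduct, ← dvd_abs, abs_sub_comm, hi] at hdvd
  have hgap := Int.le_of_dvd one_pos hdvd
  omega

theorem forall_or_forall_not_of_isChain {α : Type*} {r : α → α → Prop} {p : α → Prop} {l : List α}
    (hl : l.IsChain r) (hr : ∀ a b, r a b → (p a ↔ p b)) :
    (∀ a ∈ l, p a) ∨ ∀ a ∈ l, ¬ p a := by
  by_cases h : ∃ hne : l ≠ [], p (l.head hne)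
  · exact .inl (hl.induction p l (fun a b hab => (hr a b hab).1) fun _ => h.2)
  · exact .inr (hl.induction (¬ p ·) l (fun a b hab => mt (hr a b hab).2) fun hne hp => h ⟨hne, hp⟩)

theorem IsNormalSystem.forall_nonpos_or_forall_pos [NeZero n] {κ : Type*} {N : κ → Fin n → ℤ}
    (h : IsNormalSystem V N) (hQ : IsSmoothFano Q) (hV : Function.Injective V)
    (hw : w ∉ Set.range V)
    (hvert : vertexSet Q = insert (latticePt w) (Set.range fun i => latticePt (V i)))
    {l : List κ} (hl : l.IsChain fun k k' => UnitAdjacent V (N k) (N k')) :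
    (∀ k ∈ l, N k ⬝ᵥ w ≤ 0) ∨ ∀ k ∈ l, 0 < N k ⬝ᵥ w := by
  have hstep (k k' : κ) (hadj : UnitAdjacent V (N k) (N k')) (hk : N k ⬝ᵥ w ≤ 0) :
      N k' ⬝ᵥ w ≤ 0 :=
    Int.lt_add_one_iff.1 ((hadj.dotProduct_le_one_of_nonpos hQ hV hvert (h.le_one k) (h.le_one k')
      hk).lt_of_ne (hQ.dotProduct_ne_one_of_vertexSet_eq_insert hV hw hvert (h.le_one k')
        (h.card_tight k').ge))
  simpa only [not_le] using forall_or_forall_not_of_isChain hl fun k k' hadj =>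
    ⟨hstep k k' hadj, hstep k' k hadj.symm⟩

theorem IsNormalSystem.vertexSet_ne_insert [NeZero n] {κ : Type*} {N : κ → Fin n → ℤ}
    (h : IsNormalSystem V N) (hV : Function.Injective V)
    {l : List κ} (hl : l.IsChain fun k k' => UnitAdjacent V (N k) (N k'))
    (hspan : ∀ w : Fin n → ℤ, (∀ k ∈ l, N k ⬝ᵥ w ≤ 0) → w = 0) (hQ : IsSmoothFano Q)
    (hw : w ∉ Set.range V) :
    vertexSet Q ≠ insert (latticePt w) (Set.range fun i => latticePt (V i)) := by
  intro hvert
  have hw0 : w = 0 := by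
    rcases h.forall_nonpos_or_forall_pos hQ hV hw hvert hl with hneg | hpos
    · exact hspan w hneg
    · refine neg_eq_zero.1 (hspan (-w) fun k hk => ?_)
      rw [dotProduct_neg]
      exact neg_nonpos.2 (hpos k hk).le
  refine hQ.zero_notMem_vertexSet ?_
  rw [hvert, hw0, latticePt_zero]
  exact Set.mem_insert _ _

end Insertion

end

section

variable {n : ℕ} {ι κ : Type*} [Fintype ι] {Q : Set (Fin n → ℝ)} {V : ι → Fin n → ℤ}
  {N : κ → Fin n → ℤ}

namespace IsNormalSystem

variable [Finite κ] [Nonempty κ] [Nonempty ι]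

theorem ncard_vertexSet_latticeHull (h : IsNormalSystem V N) (hV : Function.Injective V)
    (hV0 : ∀ i, V i ≠ 0) : (vertexSet (latticeHull V)).ncard = Fintype.card ι := by
  rw [h.vertexSet_latticeHull hV0, ← Nat.card_eq_fintype_card]
  exact Set.ncard_range_of_injective (latticePt_injective.comp hV)

theorem not_iStep [NeZero n] [DecidableEq ι] (h : IsNormalSystem V N) (hV : Function.Injective V)
    (hV0 : ∀ i, V i ≠ 0) (hdel : ∀ j, ∃ u, ObstructsDeletion V j u)
    {l : List κ} (hl : l.IsChain fun k k' => UnitAdjacent V (N k) (N k'))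
    (hspan : ∀ w : Fin n → ℤ, (∀ k ∈ l, N k ⬝ᵥ w ≤ 0) → w = 0) (hQ : IsSmoothFano Q) :
    ¬ IStep Q (latticeHull V) := by
  rintro (⟨w, -, hw, hvert⟩ | ⟨w, hlat, hw, hvert⟩) <;>
    rw [h.vertexSet_latticeHull hV0] at hvert
  · obtain ⟨j, rfl⟩ : w ∈ Set.range fun i => latticePt (V i) := hvert ▸ Or.inr rfl
    obtain ⟨u, hu⟩ := hdel j
    refine hu.vertexSet_ne hV hQ ?_
    rw [hvert, Set.union_singleton, Set.insert_sdiff_self_of_notMem hw]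
  · obtain ⟨w, rfl⟩ := isLatticePoint_iff.1 hlat
    refine h.vertexSet_ne_insert hV hl hspan hQ (fun hmem => hw ?_)
      (hvert.trans Set.union_singleton)
    rw [h.vertexSet_latticeHull hV0]
    obtain ⟨i, rfl⟩ := hmem
    exact ⟨i, rfl⟩

end IsNormalSystem

end

/-! ### The fifteen points -/

/-- The points of `KNpoints` in the given order, as integer vectors indexed by `Fin 15`. -/
def knVec : Fin 15 → Fin 7 → ℤ :=
  ![![1, 0, 0, 0, 0, 0, 0], ![0, 1, 0, 0, 0, 0, 0], ![0, 0, 1, 0, 0, 0, 0],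
    ![0, 0, 0, 1, 0, 0, 0], ![0, 0, 0, 0, 1, 0, 0], ![0, 0, 0, 0, 0, 1, 0],
    ![0, 0, 0, 0, 0, 0, 1], ![0, 0, 0, 0, 0, 0, -1],
    ![-1, 0, 0, 0, 0, 0, 1], ![0, -1, 0, 0, 0, 0, 1], ![0, 1, 0, 0, 0, 0, -1],
    ![0, 0, -1, 0, 0, 1, 0], ![0, 1, 0, 0, 0, -1, 0], ![0, -1, 0, -1, 0, 1, 0],
    ![0, 1, 0, 0, -1, 0, -1]]

theorem knVec_injective : Function.Injective knVec := by decide +kernel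

theorem knVec_ne_zero : ∀ i, knVec i ≠ 0 := by decide +kernel

theorem KNpoints_eq_range : KNpoints = Set.range fun i => latticePt (knVec i) := by
  have hcast (a b c d e f g : ℤ) :
      latticePt ![a, b, c, d, e, f, g] = ![(a : ℝ), b, c, d, e, f, g] := by
    ext j
    fin_cases j <;> rfl
  ext x
  simp only [KNpoints, Set.mem_range, Set.mem_insert_iff, Set.mem_singleton_iff,
    Fin.exists_fin_succ]
  simp [knVec, hcast, eq_comm]

/-- The twelve triples of values that the facet normals of the polytope spanned by `knVec` take at
`e₂`, `e₆`, `e₇`; they are the data from which `knNormal` is built. -/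
def knBase : Fin 12 → Fin 3 → ℤ :=
  ![![1, 1, 1], ![1, 1, 0], ![0, 1, -1], ![-1, 1, -1], ![-1, 1, 0], ![0, 1, 1], ![-2, 0, -1],
    ![1, 0, 1], ![1, 0, 0], ![0, -1, -1], ![0, -1, 1], ![-2, -3, -1]]

/-- The facet normals of the polytope spanned by `knVec`, with values at `e₂`, `e₆`, `e₇` taken from
`knBase`. Every facet meets each of the pairs `{e₁, -e₁ + e₇}`, `{e₃, -e₃ + e₆}`,
`{e₄, -e₂ - e₄ + e₆}` and `{e₅, e₂ - e₅ - e₇}`; the Booleans select the point of the pair at which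
the normal takes the value one. For `t = 3` and `t = 4` the choice `c₄` makes no difference. -/
def knNormal : Fin 12 × Bool × Bool × Bool × Bool → Fin 7 → ℤ
  | (t, c₁, c₃, c₄, c₅) =>
    let x₂ := knBase t 0
    let x₆ := knBase t 1
    let x₇ := knBase t 2
    ![if c₁ then 1 else x₇ - 1, x₂, if c₃ then 1 else x₆ - 1, if c₄ then 1 else x₆ - x₂ - 1,
      if c₅ then 1 else x₂ - x₇ - 1, x₆, x₇]

-- A pivot either exchanges the two points of one of the pairs or changes `t`, and with it at most
-- `c₄`. Trying all 192 normals as candidates instead would be much slower.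
set_option maxRecDepth 100000 in
theorem exists_isPivot_knNormal : ∀ t c₁ c₃ c₄ c₅,
    ∀ i ∈ tightIndices knVec (knNormal (t, c₁, c₃, c₄, c₅)),
      (∃ t' c₄', IsPivot knVec (knNormal (t, c₁, c₃, c₄, c₅)) (knNormal (t', c₁, c₃, c₄', c₅)) i) ∨
      ∃ c', IsPivot knVec (knNormal (t, c₁, c₃, c₄, c₅)) (knNormal (t, c')) i := by
  decide +kernel

theorem isNormalSystem_knNormal : IsNormalSystem knVec knNormal where
  le_one := by decide +kernel
  card_tight := by decide +kernel
  exists_pivot := by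
    rintro ⟨t, c₁, c₃, c₄, c₅⟩ i hi
    obtain ⟨t', c₄', h⟩ | ⟨c', h⟩ := exists_isPivot_knNormal t c₁ c₃ c₄ c₅ i hi
    exacts [⟨_, h⟩, ⟨_, h⟩]

/-- For each `j`, a covector witnessing that the point `knVec j` cannot be deleted. -/
def knDeletion : Fin 15 → Fin 7 → ℤ :=
  ![![1, 0, 0, 0, 0, 0, 0], ![0, 2, 0, 1, 0, 1, 1], ![0, 0, 1, 0, 0, 0, 0],
    ![0, 0, 0, 1, 0, 0, 0], ![0, 0, 0, 0, 1, 0, 0], ![1, 0, 1, 1, 0, 2, -1],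
    ![1, 1, 1, 1, 1, 0, 2], ![-1, -1, -1, 0, 0, -1, -1], ![-1, 0, 0, 0, 0, 0, 0],
    ![0, -1, -1, 0, -1, -1, 0], ![-2, 1, 1, -1, 1, 1, -1], ![0, 0, -1, 0, 0, 0, 0],
    ![0, 0, -1, -1, 0, -1, 0], ![0, 0, 0, -1, 0, 0, 0], ![0, 0, 0, 0, -1, 0, 0]]

theorem obstructsDeletion_knDeletion : ∀ j, ObstructsDeletion knVec j (knDeletion j) := by
  decide +kernel

/-- The walk through facets, consecutive ones being unit-adjacent, along which the sign at a new
vertex is propagated; the normals met positively span `ℝ^7`. -/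
def knWalk : List (Fin 12 × Bool × Bool × Bool × Bool) :=
  [(10, true, true, true, true), (7, true, true, true, true), (0, true, true, true, true),
    (0, false, true, true, true), (1, false, true, true, true), (2, false, true, true, true),
    (2, false, true, false, true), (2, false, true, false, false), (2, false, false, false, false),
    (3, false, false, false, false), (4, false, false, false, false),
    (5, false, false, false, false), (0, false, false, false, false),
    (0, true, false, false, false), (1, true, false, false, false), (8, true, false, false, false),
    (9, true, false, false, false)]

theorem isChain_knWalk :
    knWalk.IsChain fun k k' => UnitAdjacent knVec (knNormal k) (knNormal k') := by
  decide +kernel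

theorem eq_zero_of_forall_knWalk_nonpos {w : Fin 7 → ℤ}
    (hw : ∀ k ∈ knWalk, knNormal k ⬝ᵥ w ≤ 0) : w = 0 := by
  simp only [knWalk, List.forall_mem_cons, knNormal, knBase, dotProduct, Fin.sum_univ_seven,
    Matrix.cons_val, Bool.false_eq_true, ↓reduceIte] at hw
  ext j
  fin_cases j <;> dsimp only [Fin.reduceFinMk, Fin.mk_zero, Fin.mk_one, Pi.zero_apply] <;> omega

/-- The convex hull of the 15 lattice points above is an
I-isolated smooth Fano 7-polytope with 15 vertices. -/
theorem KN_polytope_is_I_isolated :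
    IsSmoothFano (convexHull ℝ KNpoints) ∧
    IIsolated (convexHull ℝ KNpoints) ∧
    (vertexSet (convexHull ℝ KNpoints)).ncard = 15 := by
  rw [KNpoints_eq_range]
  have hfano : IsSmoothFano (latticeHull knVec) :=
    isNormalSystem_knNormal.isSmoothFano knVec_ne_zero (by norm_num)
  have hstep : ∀ Q, IsSmoothFano Q → ¬ IStep Q (latticeHull knVec) := fun Q hQ =>
    isNormalSystem_knNormal.not_iStep knVec_injective knVec_ne_zero
      (fun j => ⟨_, obstructsDeletion_knDeletion j⟩) isChain_knWalk
      (fun _ => eq_zero_of_forall_knWalk_nonpos) hQ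
  exact ⟨hfano, iIsolated_of_forall_not_iStep hfano hstep,
    isNormalSystem_knNormal.ncard_vertexSet_latticeHull knVec_injective knVec_ne_zero⟩
end

section
/- Let P be a smooth Fano n-polytope with n+3 vertices having exactly five primitive collections, with vertices labeled V(P) = {v_1,…,v_{p_0}, y_1,…,y_{p_1}, z_1,…,z_{p_2}, t_1,…,t_{p_3}, u_1,…,u_{p_4}} for positive integers p_0, …, p_4 with p_0+⋯+p_4 = n+3, and primitive relations: v_1+⋯+v_{p_0}+y_1+⋯+y_{p_1} = c_2 z_2+⋯+c_{p_2} z_{p_2}+(d_1+1)t_1+⋯+(d_{p_3}+1)t_{p_3}; y_1+⋯+y_{p_1}+z_1+⋯+z_{p_2} = u_1+⋯+u_{p_4}; z_1+⋯+z_{p_2}+t_1+⋯+t_{p_3} = 0; t_1+⋯+t_{p_3}+u_1+⋯+u_{p_4} = y_1+⋯+y_{p_1}; u_1+⋯+u_{p_4}+v_1+⋯+v_{p_0} = c_2 z_2+⋯+c_{p_2} z_{p_2}+d_1 t_1+⋯+d_{p_3} t_{p_3}, where c_2,…,c_{p_2}, d_1,…,d_{p_3} are nonnegative integers. If P is F-isolated,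 then p_0 ≥ 2, p_2 = p_3 = 1, p_1 = p_4 ≥ 2, and d_1 = p_0 + p_1 − 2. -/
/-!
The number of vertices is invariant under unimodular equivalence, so a smooth Fano polytope that
can be blown up, or contracted, to another smooth Fano polytope is not F-isolated. Blowing up
`conv V` at `w = ∑ x ∈ F, x` gives a smooth Fano polytope as soon as `F` spans a face and every face
visible from `w` lies on a common facet with `F`. A set of vertices spans a face exactly when it
contains no primitive collection, so it suffices that `A \ F` is not contained in a face visible
from `w`, for each primitive collection `A` meeting `F`. Evaluating the primitive relations at a
functional `l` with `l ≤ 1` on `V` and `1 ≤ l w` turns this into linear inequalities in the block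
sums of `l`.

Write `p_k` for the sizes of the blocks `v, y, z, t, u`. If `1 < p_2`, one can blow up at the sum of
the `z` when `p_4 ≤ p_1`, and at the sum of all `t` and a single `z` otherwise; the dihedral
symmetry exchanging `y` with `u` and `z` with `t` excludes `1 < p_3`. Now let `p_2 = p_3 = 1`.
Evaluating the relations at facets gives `p_4 < p_1 + p_2`, symmetrically `p_1 < p_4 + p_3`, and
`d + 1 < p_0 + p_1`. For `p_0 = 1` the polytope can be blown up at `v + z`, and for `1 < p_0` and
`d + 2 < p_0 + p_1` at the sum of two of the `v`. Finally, if `p_1 = p_4 = 1`, the relation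
`u = y + z` exhibits the polytope as the blow-up at `{y, z}` of the one without the vertex `u`,
which is again smooth Fano: its new facets have vertices `y`, `z` and all `v` but one.
-/

section

open Set Module Filter Topology

section TightSets

variable {E : Type*} [AddCommGroup E] [Module ℝ E] {V : Set E} {l m : Dual ℝ E} {q : E}

/-- The points of `V` on the hyperplane `l = 1`. When `l ≤ 1` on `V`, these are the points of `V` on
the face of `conv V` cut out by `l`. -/
def tightSet (V : Set E) (l : Dual ℝ E) : Set E :=
  {x ∈ V | l x = 1}

/-- A functional defining a facet of `conv V`: it is at most `1` on `V`, with equality at a spanning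
set of points. Every facet arises in this way as soon as the origin is interior to `conv V`. -/
structure IsFacetFunctional (V : Set E) (l : Dual ℝ E) : Prop where
  le_one : ∀ x ∈ V, l x ≤ 1
  span_eq_top : Submodule.span ℝ (tightSet V l) = ⊤

lemma tightSet_subset : tightSet V l ⊆ V :=
  sep_subset _ _

lemma le_one_of_mem_convexHull (hl : ∀ x ∈ V, l x ≤ 1) (hq : q ∈ convexHull ℝ V) : l q ≤ 1 :=
  convexHull_min hl (convex_halfSpace_le l.isLinear 1) hq

lemma eq_one_of_mem_convexHull_tightSet (hq : q ∈ convexHull ℝ (tightSet V l)) : l q = 1 :=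
  convexHull_min (fun _ hx ↦ hx.2) (convex_hyperplane l.isLinear 1) hq

lemma inter_convexHull_tightSet : V ∩ convexHull ℝ (tightSet V l) = tightSet V l :=
  Subset.antisymm (fun _ hx ↦ ⟨hx.1, eq_one_of_mem_convexHull_tightSet hx.2⟩)
    (subset_inter tightSet_subset (subset_convexHull ℝ _))

lemma mem_convexHull_tightSet (hl : ∀ x ∈ V, l x ≤ 1) (hq : q ∈ convexHull ℝ V) (h : l q = 1) :
    q ∈ convexHull ℝ (tightSet V l) := by
  suffices H : convexHull ℝ V ⊆ {q | l q ≤ 1 ∧ (l q = 1 → q ∈ convexHull ℝ (tightSet V l))} from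
    (H hq).2 h
  refine convexHull_min (fun x hx ↦ ⟨hl x hx, fun h ↦ subset_convexHull ℝ _ ⟨hx, h⟩⟩) ?_
  refine convex_iff_forall_pos.2 fun a ⟨ha, ha'⟩ b ⟨hb, hb'⟩ s t hs ht hst ↦ ?_
  have eval : l (s • a + t • b) = s * l a + t * l b := by simp
  refine ⟨by rw [eval]; nlinarith, fun h1 ↦ ?_⟩
  rw [eval] at h1
  exact convex_convexHull ℝ _ (ha' (by nlinarith)) (hb' (by nlinarith)) hs.le ht.le hst

lemma tightSet_mono {W : Set E} (h : V ⊆ W) : tightSet V l ⊆ tightSet W l :=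
  fun _ hx ↦ ⟨h hx.1, hx.2⟩

lemma tightSet_insert_of_ne {w : E} (hw : l w ≠ 1) : tightSet (insert w V) l = tightSet V l :=
  Subset.antisymm (fun _ hx ↦ ⟨hx.1.resolve_left fun h ↦ hw (h ▸ hx.2), hx.2⟩)
    (tightSet_mono (subset_insert w V))

lemma IsFacetFunctional.insert_of_le_one (hl : IsFacetFunctional V l) {w : E} (hw : l w ≤ 1) :
    IsFacetFunctional (insert w V) l where
  le_one := forall_mem_insert.2 ⟨hw, hl.le_one⟩
  span_eq_top := top_unique
    (hl.span_eq_top.ge.trans (Submodule.span_mono (tightSet_mono (subset_insert w V))))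

lemma IsFacetFunctional.tightSet_nonempty [Nontrivial E] (hl : IsFacetFunctional V l) :
    (tightSet V l).Nonempty := by
  by_contra h
  have := hl.span_eq_top
  rw [not_nonempty_iff_eq_empty.1 h, Submodule.span_empty] at this
  exact bot_ne_top this

/-- Moving `l` in the direction `m` until a new point becomes tight. -/
lemma exists_tight_add_smul (hV : V.Finite) (hl : ∀ x ∈ V, l x ≤ 1) (hm : ∃ x ∈ V, 0 < m x) :
    ∃ s : ℝ, 0 ≤ s ∧ (∀ x ∈ V, (l + s • m) x ≤ 1) ∧ ∃ x ∈ tightSet V (l + s • m), 0 < m x := by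
  obtain ⟨x, ⟨hxV, hxm⟩, hmin⟩ := exists_min_image {x ∈ V | 0 < m x}
    (fun x ↦ (1 - l x) / m x) (hV.subset (sep_subset _ _)) hm
  have hs : 0 ≤ (1 - l x) / m x := div_nonneg (by linarith [hl x hxV]) hxm.le
  refine ⟨(1 - l x) / m x, hs, fun z hz ↦ ?_, x, ⟨hxV, ?_⟩, hxm⟩
  · simp only [LinearMap.add_apply, LinearMap.smul_apply, smul_eq_mul]
    rcases le_or_gt (m z) 0 with h | h
    · nlinarith [hl z hz]
    · linarith [(le_div_iff₀ h).1 (hmin z ⟨hz, h⟩)]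
  · simp only [LinearMap.add_apply, LinearMap.smul_apply, smul_eq_mul]
    field_simp
    ring

section Topology

variable [TopologicalSpace E] [ContinuousSMul ℝ E]

lemma exists_pos_of_zero_mem_interior (h0 : (0 : E) ∈ interior (convexHull ℝ V)) (hm : m ≠ 0) :
    ∃ x ∈ V, 0 < m x := by
  by_contra! hV
  obtain ⟨y, hy⟩ := DFunLike.ne_iff.1 hm
  have hnonpos : convexHull ℝ V ⊆ {q | m q ≤ 0} :=
    convexHull_min hV (convex_halfSpace_le m.isLinear 0)
  have hev := (absorbent_iff_eventually_nhdsNE_zero.1 (absorbent_nhds_zero (𝕜 := ℝ)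
    (mem_interior_iff_mem_nhds.1 h0)) (m y • y)).filter_mono (nhdsGT_le_nhdsNE 0)
  obtain ⟨ε, hε, hmem⟩ := (eventually_mem_nhdsWithin.and hev).exists
  have : ε * (m y * m y) ≤ 0 := by simpa using hnonpos hmem
  exact this.not_gt (mul_pos hε (mul_self_pos.2 hy))

lemma exists_isFacetFunctional (hV : V.Finite) (h0 : (0 : E) ∈ interior (convexHull ℝ V))
    (hl : ∀ x ∈ V, l x ≤ 1) : ∃ l', IsFacetFunctional V l' ∧ tightSet V l ⊆ tightSet V l' := by
  induction hk : (V \ tightSet V l).ncard using Nat.strong_induction_on generalizing l with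
  | _ k ih =>
  by_cases hspan : Submodule.span ℝ (tightSet V l) = ⊤
  · exact ⟨l, ⟨hl, hspan⟩, subset_rfl⟩
  obtain ⟨m, hm0, hm⟩ := Submodule.exists_le_ker_of_lt_top _ (lt_top_iff_ne_top.2 hspan)
  have hmT : ∀ x ∈ tightSet V l, m x = 0 := fun x hx ↦ hm (Submodule.subset_span hx)
  obtain ⟨s, -, hle, x, hx, hxm⟩ :=
    exists_tight_add_smul hV hl (exists_pos_of_zero_mem_interior h0 hm0)
  have hsub : tightSet V l ⊆ tightSet V (l + s • m) := fun z hz ↦ ⟨hz.1, by simp [hmT z hz, hz.2]⟩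
  have hxl : x ∉ tightSet V l := fun h ↦ hxm.ne' (hmT x h)
  have hcard : (V \ tightSet V (l + s • m)).ncard < k := hk ▸ ncard_lt_ncard
    ⟨sdiff_subset_sdiff_right hsub, fun h ↦ (h ⟨hx.1, hxl⟩).2 hx⟩ (hV.subset sdiff_subset)
  obtain ⟨l', hl', htight⟩ := ih _ hcard hle rfl
  exact ⟨l', hl', hsub.trans htight⟩

/-- Dividing a functional by its maximum, which is positive since the origin is interior. -/
lemma exists_dual_le_one_of_forall_le (h0 : (0 : E) ∈ interior (convexHull ℝ V)) (hm : m ≠ 0)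
    {c : ℝ} (hc : ∀ x ∈ V, m x ≤ c) : 0 < c ∧ ∀ x ∈ V, (c⁻¹ • m) x ≤ 1 := by
  obtain ⟨x, hx, hmx⟩ := exists_pos_of_zero_mem_interior h0 hm
  have hpos : 0 < c := hmx.trans_le (hc x hx)
  exact ⟨hpos, fun y hy ↦ by simpa [inv_mul_le_iff₀ hpos] using hc y hy⟩

end Topology

lemma vectorSpan_convexHull (T : Set E) : vectorSpan ℝ (convexHull ℝ T) = vectorSpan ℝ T := by
  rw [← direction_affineSpan, affineSpan_convexHull, direction_affineSpan]

lemma span_tightSet_eq_vectorSpan_sup {x : E} (hx : x ∈ tightSet V l) :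
    Submodule.span ℝ (tightSet V l) = vectorSpan ℝ (tightSet V l) ⊔ Submodule.span ℝ {x} := by
  refine le_antisymm (Submodule.span_le.2 fun y hy ↦ ?_) (sup_le ?_ ?_)
  · rw [← sub_add_cancel y x]
    exact Submodule.add_mem_sup (vsub_mem_vectorSpan ℝ hy hx) (Submodule.mem_span_singleton_self x)
  · rw [vectorSpan_def, Submodule.span_le]
    rintro _ ⟨a, ha, b, hb, rfl⟩
    exact sub_mem (Submodule.subset_span ha) (Submodule.subset_span hb)
  · exact Submodule.span_mono (singleton_subset_iff.2 hx)

lemma vectorSpan_tightSet_le_ker : vectorSpan ℝ (tightSet V l) ≤ LinearMap.ker l := by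
  rw [vectorSpan_def, Submodule.span_le]
  rintro _ ⟨a, ha, b, hb, rfl⟩
  simp [ha.2, hb.2]

lemma finrank_vectorSpan_tightSet_add_one [FiniteDimensional ℝ E] (hne : (tightSet V l).Nonempty) :
    finrank ℝ (vectorSpan ℝ (tightSet V l)) + 1 = finrank ℝ (Submodule.span ℝ (tightSet V l)) := by
  obtain ⟨x, hx⟩ := hne
  have hx0 : x ≠ 0 := by
    rintro rfl
    simpa using hx.2
  have hxker : x ∉ vectorSpan ℝ (tightSet V l) := fun h ↦
    one_ne_zero (hx.2.symm.trans (vectorSpan_tightSet_le_ker h))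
  have := Submodule.finrank_sup_add_finrank_inf_eq (vectorSpan ℝ (tightSet V l))
    (Submodule.span ℝ {x})
  rw [← span_tightSet_eq_vectorSpan_sup hx, finrank_span_singleton hx0,
    (Submodule.disjoint_span_singleton' hx0).2 hxker |>.eq_bot, finrank_bot] at this
  exact this.symm

end TightSets

section ExposedFaces

variable {E : Type*} [NormedAddCommGroup E] [NormedSpace ℝ E] {V : Set E}

lemma exists_dual_le_one_of_notMem_interior (h0 : (0 : E) ∈ interior (convexHull ℝ V)) {x : E}
    (hx : x ∉ interior (convexHull ℝ V)) : ∃ l : Dual ℝ E, (∀ y ∈ V, l y ≤ 1) ∧ l x = 1 := by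
  obtain ⟨f, hf0, hf⟩ := geometric_hahn_banach_of_nonempty_interior_point
    (convex_convexHull ℝ V) hx ⟨0, h0⟩
  obtain ⟨hpos, hle⟩ := exists_dual_le_one_of_forall_le h0
    (ContinuousLinearMap.coe_injective.ne hf0) fun y hy ↦ hf y (subset_convexHull ℝ V hy)
  exact ⟨_, hle, by simp [hpos.ne']⟩

lemma exists_isFacetFunctional_eq_one_of_mem_extremePoints [Nontrivial E] (hV : V.Finite)
    (h0 : (0 : E) ∈ interior (convexHull ℝ V)) {x : E}
    (hx : x ∈ extremePoints ℝ (convexHull ℝ V)) : ∃ l, IsFacetFunctional V l ∧ l x = 1 := by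
  obtain ⟨l, hl, hlx⟩ := exists_dual_le_one_of_notMem_interior h0
    fun h ↦ (disjoint_interior_extremePoints _).notMem_of_mem_left h hx
  obtain ⟨l', hl', hsub⟩ := exists_isFacetFunctional hV h0 hl
  exact ⟨l', hl', (hsub ⟨extremePoints_convexHull_subset hx, hlx⟩).2⟩

lemma convexHull_extremePoints_convexHull (hV : V.Finite) :
    convexHull ℝ (extremePoints ℝ (convexHull ℝ V)) = convexHull ℝ V := by
  have hfin := hV.subset (extremePoints_convexHull_subset (𝕜 := ℝ))
  rw [← (hfin.isClosed_convexHull ℝ).closure_eq,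
    closure_convexHull_extremePoints (hV.isCompact_convexHull ℝ) (convex_convexHull ℝ V)]

lemma isExposed_convexHull_tightSet [FiniteDimensional ℝ E] {l : Dual ℝ E} (hl : ∀ x ∈ V, l x ≤ 1) :
    IsExposed ℝ (convexHull ℝ V) (convexHull ℝ (tightSet V l)) := by
  rintro ⟨q₀, hq₀⟩
  refine ⟨LinearMap.toContinuousLinearMap l, Subset.antisymm (fun q hq ↦ ?_) ?_⟩
  · refine ⟨convexHull_mono tightSet_subset hq, fun y hy ↦ ?_⟩
    simpa [eq_one_of_mem_convexHull_tightSet hq] using le_one_of_mem_convexHull hl hy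
  · rintro q ⟨hq, hmax⟩
    have hle : 1 ≤ l q := by
      simpa [eq_one_of_mem_convexHull_tightSet hq₀] using
        hmax q₀ (convexHull_mono tightSet_subset hq₀)
    exact mem_convexHull_tightSet hl hq (le_antisymm (le_one_of_mem_convexHull hl hq) hle)

lemma exists_convexHull_tightSet_eq_of_isExposed (h0 : (0 : E) ∈ interior (convexHull ℝ V))
    {G : Set E} (hG : IsExposed ℝ (convexHull ℝ V) G) (hne : G.Nonempty)
    (hGV : G ≠ convexHull ℝ V) :
    ∃ l : Dual ℝ E, (∀ x ∈ V, l x ≤ 1) ∧ G = convexHull ℝ (tightSet V l) := by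
  obtain ⟨f, rfl⟩ := hG hne
  obtain ⟨x, hx, hmax⟩ := hne
  have hf0 : (f : Dual ℝ E) ≠ 0 := by
    rintro h
    have hf : ∀ y, f y = 0 := LinearMap.congr_fun h
    exact hGV (by simp [hf])
  obtain ⟨hpos, hle⟩ := exists_dual_le_one_of_forall_le h0 hf0
    fun y hy ↦ hmax y (subset_convexHull ℝ V hy)
  refine ⟨_, hle, Subset.antisymm (fun z hz ↦ ?_) fun z hz ↦ ?_⟩
  · refine mem_convexHull_tightSet hle hz.1 ?_
    simp [(hmax z hz.1).antisymm (hz.2 x hx), hpos.ne']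
  · have hzx : f z = f x := by
      simpa [inv_mul_eq_iff_eq_mul₀ hpos.ne'] using eq_one_of_mem_convexHull_tightSet hz
    exact ⟨convexHull_mono tightSet_subset hz, fun y hy ↦ (hmax y hy).trans hzx.ge⟩

end ExposedFaces

section Facets

variable {n : ℕ} {V G : Set (Fin n → ℝ)}

/-- For `n = 1` the empty set is exposed and has the dimension of a facet. -/
lemma isFacetOf_iff (hn : 2 ≤ n) (h0 : (0 : Fin n → ℝ) ∈ interior (convexHull ℝ V)) :
    IsFacetOf G (convexHull ℝ V) ↔
      ∃ l, IsFacetFunctional V l ∧ G = convexHull ℝ (tightSet V l) := by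
  have : NeZero n := ⟨by omega⟩
  constructor
  · rintro ⟨hG, hdim⟩
    have hne : G.Nonempty := by
      rw [nonempty_iff_ne_empty]
      rintro rfl
      rw [vectorSpan_empty, finrank_bot] at hdim
      omega
    have hGV : G ≠ convexHull ℝ V := by
      rintro rfl
      rw [vectorSpan_convexHull, ← direction_affineSpan,
        interior_convexHull_nonempty_iff_affineSpan_eq_top.1 ⟨0, h0⟩,
        AffineSubspace.direction_top, finrank_top, finrank_fin_fun] at hdim
      omega
    obtain ⟨l, hl, rfl⟩ := exists_convexHull_tightSet_eq_of_isExposed h0 hG hne hGV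
    rw [vectorSpan_convexHull,
      finrank_vectorSpan_tightSet_add_one (convexHull_nonempty_iff.1 hne)] at hdim
    exact ⟨l, ⟨hl, Submodule.eq_top_of_finrank_eq (by rw [hdim, finrank_fin_fun])⟩, rfl⟩
  · rintro ⟨l, hl, rfl⟩
    refine ⟨isExposed_convexHull_tightSet hl.le_one, ?_⟩
    rw [vectorSpan_convexHull, finrank_vectorSpan_tightSet_add_one hl.tightSet_nonempty,
      hl.span_eq_top, finrank_top, finrank_fin_fun]

end Facets

lemma range_update_of_injective {ι α : Type*} [DecidableEq ι] {f : ι → α}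
    (hf : Function.Injective f) (i : ι) (a : α) :
    range (Function.update f i a) = insert a (range f \ {f i}) := by
  have hcompl : EqOn (Function.update f i a) f {i}ᶜ := fun j hj ↦ Function.update_of_ne hj _ _
  rw [← image_univ, ← union_compl_self {i}, image_union, hcompl.image_eq, image_singleton,
    Function.update_self, singleton_union, image_compl_eq_range_sdiff_image hf, image_singleton]

namespace IsUnimodularBasis

variable {n : ℕ} {S T : Set (Fin n → ℝ)} {x y : Fin n → ℝ}

lemma exists_basis (h : IsUnimodularBasis S) : ∃ b : Basis (Fin n) ℝ (Fin n → ℝ), range b = S := by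
  obtain ⟨b, -, rfl, -, hdet⟩ := h
  have hli : LinearIndependent ℝ b := Matrix.linearIndependent_rows_of_det_ne_zero
    (A := Matrix.of b) fun h ↦ by simp [h] at hdet
  exact ⟨basisOfLinearIndependentOfCardEqFinrank' b hli (by simp), by simp⟩

lemma finite_s16 (h : IsUnimodularBasis S) : S.Finite := by
  obtain ⟨b, rfl⟩ := h.exists_basis
  exact finite_range b

lemma ncard_eq (h : IsUnimodularBasis S) : S.ncard = n := by
  obtain ⟨b, rfl⟩ := h.exists_basis
  rw [← image_univ, ncard_image_of_injective _ b.injective, ncard_univ, Nat.card_fin]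

lemma span_eq_top (h : IsUnimodularBasis S) : Submodule.span ℝ S = ⊤ := by
  obtain ⟨b, rfl⟩ := h.exists_basis
  exact b.span_eq

lemma exists_functional (h : IsUnimodularBasis S) (f : (Fin n → ℝ) → ℝ) :
    ∃ l : Dual ℝ (Fin n → ℝ), ∀ x ∈ S, l x = f x := by
  obtain ⟨b, rfl⟩ := h.exists_basis
  exact ⟨b.constr ℝ fun i ↦ f (b i), forall_mem_range.2 fun i ↦ b.constr_basis ℝ _ i⟩

lemma notMem_span_sdiff (h : IsUnimodularBasis S) (hx : x ∈ S) :
    x ∉ Submodule.span ℝ (S \ {x}) := by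
  obtain ⟨b, rfl⟩ := h.exists_basis
  obtain ⟨i, rfl⟩ := hx
  rw [← image_univ, ← image_singleton, ← image_sdiff b.injective]
  exact b.linearIndependent.notMem_span_image fun h ↦ h.2 rfl

lemma eq_of_subset_of_span_eq_top (h : IsUnimodularBasis S) (hTS : T ⊆ S)
    (hT : Submodule.span ℝ T = ⊤) : T = S := by
  refine hTS.antisymm fun x hx ↦ ?_
  by_contra hxT
  have hsub : T ⊆ S \ {x} := fun y hy ↦ ⟨hTS hy, ne_of_mem_of_not_mem hy hxT⟩
  exact h.notMem_span_sdiff hx (Submodule.span_mono hsub (hT ▸ Submodule.mem_top))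

lemma insert_sdiff (h : IsUnimodularBasis S) (hy : y ∈ S) (hx : IsLatticePoint x)
    (hxy : x - y ∈ Submodule.span ℝ (S \ {y})) : IsUnimodularBasis (insert x (S \ {y})) := by
  obtain ⟨b, hb, rfl, hlat, hdet⟩ := h
  obtain ⟨i, rfl⟩ := hy
  have hker : Submodule.span ℝ (range b \ {b i}) ≤ LinearMap.ker
      ((Matrix.detRowAlternating (R := ℝ) (n := Fin n)).toMultilinearMap.toLinearMap b i) := by
    rw [Submodule.span_le]
    rintro _ ⟨⟨j, rfl⟩, hj⟩
    exact Matrix.det_updateRow_eq_zero (M := Matrix.of b) (fun h : j = i ↦ hj (by simp [h]))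
  have hdet' : |(Matrix.of (Function.update b i x)).det| = 1 := by
    have h0 : ((Matrix.of b).updateRow i (x - b i)).det = 0 := hker hxy
    have hadd := Matrix.det_updateRow_add (Matrix.of b) i (b i) (x - b i)
    rw [h0, add_zero, add_sub_cancel] at hadd
    rw [← hdet]
    exact congrArg _ (hadd.trans (congrArg _ (Matrix.updateRow_eq_self _ i)))
  have hli := Matrix.linearIndependent_rows_of_det_ne_zero
    (A := Matrix.of (Function.update b i x)) fun h ↦ by simp [h] at hdet'
  refine ⟨Function.update b i x, hli.injective, range_update_of_injective hb i x, fun j ↦ ?_, hdet'⟩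
  obtain rfl | hj := eq_or_ne j i
  · simpa using hx
  · simpa [hj] using hlat j

end IsUnimodularBasis

section SmoothFano

variable {n : ℕ}

/-- The conditions on a set of points of `ℝ^n` that make it the vertex set of a smooth Fano
polytope (see `IsSmoothFanoVertexSet.of_isSmoothFano` and `IsSmoothFanoVertexSet.isSmoothFano`),
with facets replaced by the functionals defining them. -/
structure IsSmoothFanoVertexSet (V : Set (Fin n → ℝ)) : Prop where
  finite_s16 : V.Finite
  isLatticePoint : ∀ x ∈ V, IsLatticePoint x
  zero_mem_interior : (0 : Fin n → ℝ) ∈ interior (convexHull ℝ V)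
  isUnimodularBasis : ∀ l, IsFacetFunctional V l → IsUnimodularBasis (tightSet V l)
  exists_facet : ∀ x ∈ V, ∃ l, IsFacetFunctional V l ∧ l x = 1

namespace IsSmoothFanoVertexSet

variable {V S : Set (Fin n → ℝ)} {l : Dual ℝ (Fin n → ℝ)}

lemma of_isSmoothFano (hn : 2 ≤ n) {P : Set (Fin n → ℝ)} (hP : IsSmoothFano P) :
    IsSmoothFanoVertexSet (vertexSet P) ∧ convexHull ℝ (vertexSet P) = P := by
  have : NeZero n := ⟨by omega⟩
  obtain ⟨⟨⟨S, hS, hPS⟩, -⟩, h0, hfacet⟩ := hP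
  have hsub : vertexSet P ⊆ S := hPS ▸ extremePoints_convexHull_subset
  have hfin : (vertexSet P).Finite := S.finite_toSet.subset hsub
  have hconv : convexHull ℝ (vertexSet P) = P :=
    hPS ▸ convexHull_extremePoints_convexHull S.finite_toSet
  have h0' : (0 : Fin n → ℝ) ∈ interior (convexHull ℝ (vertexSet P)) := by rwa [hconv]
  refine ⟨⟨hfin, fun x hx ↦ hS x (hsub hx), h0', fun l hl ↦ ?_, fun x hx ↦ ?_⟩, hconv⟩
  · have hF := (isFacetOf_iff hn h0').2 ⟨l, hl, rfl⟩
    rw [hconv] at hF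
    rw [← inter_convexHull_tightSet (l := l)]
    exact hfacet _ hF
  · exact exists_isFacetFunctional_eq_one_of_mem_extremePoints hfin h0' (by rwa [hconv])

lemma notMem_convexHull_sdiff (h : IsSmoothFanoVertexSet V) {x : Fin n → ℝ} (hx : x ∈ V) :
    x ∉ convexHull ℝ (V \ {x}) := by
  obtain ⟨l, hl, hlx⟩ := h.exists_facet x hx
  intro hmem
  have hconv := mem_convexHull_tightSet (fun y hy ↦ hl.le_one y hy.1) hmem hlx
  have hsub : tightSet (V \ {x}) l ⊆ tightSet V l \ {x} := fun y hy ↦ ⟨⟨hy.1.1, hy.2⟩, hy.1.2⟩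
  exact (h.isUnimodularBasis l hl).notMem_span_sdiff ⟨hx, hlx⟩
    (convexHull_min (hsub.trans Submodule.subset_span) (Submodule.convex _) hconv)

lemma vertexSet_convexHull (h : IsSmoothFanoVertexSet V) : vertexSet (convexHull ℝ V) = V := by
  refine Subset.antisymm extremePoints_convexHull_subset fun x hx ↦ ?_
  by_contra hxE
  have hsub : vertexSet (convexHull ℝ V) ⊆ V \ {x} := fun y hy ↦
    ⟨extremePoints_convexHull_subset hy, ne_of_mem_of_not_mem hy hxE⟩
  exact h.notMem_convexHull_sdiff hx (convexHull_mono hsub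
    ((convexHull_extremePoints_convexHull h.finite_s16).symm ▸ subset_convexHull ℝ V hx))

lemma isSmoothFano (hn : 2 ≤ n) (h : IsSmoothFanoVertexSet V) : IsSmoothFano (convexHull ℝ V) := by
  refine ⟨⟨⟨h.finite_s16.toFinset, by simpa using h.isLatticePoint, by simp⟩, ?_⟩,
    h.zero_mem_interior, fun F hF ↦ ?_⟩
  · rw [affineSpan_convexHull]
    exact interior_convexHull_nonempty_iff_affineSpan_eq_top.1 ⟨0, h.zero_mem_interior⟩
  · obtain ⟨l, hl, rfl⟩ := (isFacetOf_iff hn h.zero_mem_interior).1 hF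
    rw [h.vertexSet_convexHull, inter_convexHull_tightSet]
    exact h.isUnimodularBasis l hl

lemma exists_facet_superset (h : IsSmoothFanoVertexSet V) (hl : ∀ x ∈ V, l x ≤ 1) :
    ∃ l', IsFacetFunctional V l' ∧ tightSet V l ⊆ tightSet V l' :=
  exists_isFacetFunctional h.finite_s16 h.zero_mem_interior hl

/-- Facets are simplices, so tilting the functional of a facet slightly cuts out any given set of
its vertices. -/
lemma exists_tightSet_eq (h : IsSmoothFanoVertexSet V) (hl : IsFacetFunctional V l)
    (hS : S ⊆ tightSet V l) : ∃ g : Dual ℝ (Fin n → ℝ), (∀ x ∈ V, g x ≤ 1) ∧ tightSet V g = S := by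
  classical
  obtain ⟨f, hf⟩ := (h.isUnimodularBasis l hl).exists_functional fun x ↦ if x ∈ S then 0 else 1
  have hsmall : ∀ᶠ ε in 𝓝[>] (0 : ℝ), ∀ x ∈ V \ tightSet V l, (l - ε • f) x < 1 := by
    refine (h.finite_s16.sdiff).eventually_all.2 fun x hx ↦ ?_
    have hlt : l x < 1 := (hl.le_one x hx.1).lt_of_ne fun hx1 ↦ hx.2 ⟨hx.1, hx1⟩
    have hcont : Tendsto (fun ε : ℝ ↦ (l - ε • f) x) (𝓝 0) (𝓝 (l x)) :=
      Continuous.tendsto'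
        (by simp only [LinearMap.sub_apply, LinearMap.smul_apply, smul_eq_mul]; fun_prop)
        _ _ (by simp)
    exact (hcont.mono_left nhdsWithin_le_nhds).eventually_lt_const hlt
  obtain ⟨ε, hε, hlt⟩ := (eventually_mem_nhdsWithin.and hsmall).exists
  have htight : ∀ x ∈ tightSet V l, (l - ε • f) x = if x ∈ S then 1 else 1 - ε := fun x hx ↦ by
    rw [LinearMap.sub_apply, LinearMap.smul_apply, hf x hx, hx.2]
    split_ifs <;> simp
  refine ⟨l - ε • f, fun x hx ↦ ?_, Subset.antisymm (fun x hx ↦ ?_) fun x hx ↦ ?_⟩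
  · by_cases hxl : x ∈ tightSet V l
    · rw [htight x hxl]
      split_ifs <;> linarith [mem_Ioi.1 hε]
    · exact (hlt x ⟨hx, hxl⟩).le
  · by_contra hxS
    by_cases hxl : x ∈ tightSet V l
    · have := htight x hxl
      rw [hx.2, if_neg hxS] at this
      linarith [mem_Ioi.1 hε]
    · exact (hlt x ⟨hx.1, hxl⟩).ne hx.2
  · exact ⟨(hS hx).1, by rw [htight x (hS hx), if_pos hx]⟩

lemma isFaceOf_convexHull (h : IsSmoothFanoVertexSet V) (hl : IsFacetFunctional V l)
    (hS : S ⊆ tightSet V l) : IsFaceOf (convexHull ℝ S) (convexHull ℝ V) := by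
  obtain ⟨g, hg, rfl⟩ := h.exists_tightSet_eq hl hS
  exact isExposed_convexHull_tightSet hg

lemma inter_convexHull (h : IsSmoothFanoVertexSet V) (hl : IsFacetFunctional V l)
    (hS : S ⊆ tightSet V l) : V ∩ convexHull ℝ S = S := by
  obtain ⟨g, -, rfl⟩ := h.exists_tightSet_eq hl hS
  exact inter_convexHull_tightSet

lemma convexHull_tightSet_ne (h : IsSmoothFanoVertexSet V) (l : Dual ℝ (Fin n → ℝ)) :
    convexHull ℝ (tightSet V l) ≠ convexHull ℝ V := fun heq ↦ by
  have := eq_one_of_mem_convexHull_tightSet (heq ▸ interior_subset h.zero_mem_interior)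
  simp at this

end IsSmoothFanoVertexSet

end SmoothFano

section BlowUp

variable {n : ℕ} {V : Set (Fin n → ℝ)}

/-- A set `F` of vertices of `conv V` at whose sum the polytope can be blown up: `F` spans a proper
face, and every face of `conv V` that is visible from `∑ x ∈ F, x` (or whose hyperplane passes
through that point) lies on a common facet with `F`. The second condition is the convexity of the
stellar subdivision. -/
structure IsBlowUpCenter (V : Set (Fin n → ℝ)) (F : Finset (Fin n → ℝ)) : Prop where
  one_lt_card : 1 < F.card
  exists_facet : ∃ l, IsFacetFunctional V l ∧ ↑F ⊆ tightSet V l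
  extend : ∀ l : Dual ℝ (Fin n → ℝ), (∀ x ∈ V, l x ≤ 1) → 1 ≤ l (∑ x ∈ F, x) →
    ∃ l', IsFacetFunctional V l' ∧ ↑F ⊆ tightSet V l' ∧ tightSet V l ⊆ tightSet V l'

namespace IsBlowUpCenter

variable {F : Finset (Fin n → ℝ)} {l : Dual ℝ (Fin n → ℝ)} {v : Fin n → ℝ}

lemma subset (hF : IsBlowUpCenter V F) : ↑F ⊆ V :=
  let ⟨_, _, hsub⟩ := hF.exists_facet
  hsub.trans tightSet_subset

lemma apply_sum_of_subset_tightSet (hFl : ↑F ⊆ tightSet V l) : l (∑ x ∈ F, x) = F.card := by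
  rw [map_sum, Finset.sum_congr rfl fun x hx ↦ (hFl hx).2]
  simp

lemma exists_ne_one (hF : IsBlowUpCenter V F) (hl : l (∑ x ∈ F, x) = 1) : ∃ v ∈ F, l v ≠ 1 := by
  by_contra! hone
  have hcard : (F.card : ℝ) = 1 :=
    (apply_sum_of_subset_tightSet (V := F) fun x hx ↦ ⟨hx, hone x hx⟩).symm.trans hl
  exact hF.one_lt_card.ne' (by exact_mod_cast hcard)

lemma sum_notMem (hF : IsBlowUpCenter V F) : ∑ x ∈ F, x ∉ V := fun hmem ↦ by
  obtain ⟨l, hl, hFl⟩ := hF.exists_facet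
  have hle := hl.le_one _ hmem
  rw [apply_sum_of_subset_tightSet hFl] at hle
  exact hF.one_lt_card.not_ge (by exact_mod_cast hle)

lemma isLatticePoint_sum (hF : IsBlowUpCenter V F) (hV : IsSmoothFanoVertexSet V) :
    IsLatticePoint (∑ x ∈ F, x) := by
  intro i
  choose! m hm using fun x hx ↦ hV.isLatticePoint x (hF.subset hx) i
  exact ⟨∑ x ∈ F, m x, by
    rw [Finset.sum_apply, Int.cast_sum, Finset.sum_congr rfl fun x hx ↦ hm x hx]⟩

lemma isUnimodularBasis_exchange (hF : IsBlowUpCenter V F) (hV : IsSmoothFanoVertexSet V)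
    (hl : IsFacetFunctional V l) (hFl : ↑F ⊆ tightSet V l) (hv : v ∈ F) :
    IsUnimodularBasis (insert (∑ x ∈ F, x) (tightSet V l \ {v})) := by
  refine (hV.isUnimodularBasis l hl).insert_sdiff (hFl hv) (hF.isLatticePoint_sum hV) ?_
  rw [← Finset.sum_erase_eq_sub hv]
  exact sum_mem fun x hx ↦ Submodule.subset_span
    ⟨hFl (Finset.mem_of_mem_erase hx), Finset.ne_of_mem_erase hx⟩

lemma exists_exchange (hF : IsBlowUpCenter V F) (hV : IsSmoothFanoVertexSet V)
    (hl : IsFacetFunctional (insert (∑ x ∈ F, x) V) l) (hlw : l (∑ x ∈ F, x) = 1) :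
    ∃ l', IsFacetFunctional V l' ∧ ↑F ⊆ tightSet V l' ∧
      ∃ v ∈ F, tightSet (insert (∑ x ∈ F, x) V) l = insert (∑ x ∈ F, x) (tightSet V l' \ {v}) := by
  obtain ⟨l', hl', hFl', hsub⟩ := hF.extend l (fun x hx ↦ hl.le_one x (.inr hx)) hlw.ge
  obtain ⟨v, hv, hlv⟩ := hF.exists_ne_one hlw
  refine ⟨l', hl', hFl', v, hv, (hF.isUnimodularBasis_exchange hV hl' hFl' hv)
    |>.eq_of_subset_of_span_eq_top ?_ hl.span_eq_top⟩
  rintro x ⟨rfl | hx, hlx⟩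
  · exact mem_insert _ _
  · exact .inr ⟨hsub ⟨hx, hlx⟩, fun hxv ↦ hlv (mem_singleton_iff.1 hxv ▸ hlx)⟩

/-- Tilting the facet `l` around its ridge opposite to `v`, no vertex is met before the hyperplane
passes through `∑ x ∈ F, x`, since `F` and that vertex would lie on a common facet. -/
lemma apply_sub_smul_le_one (hF : IsBlowUpCenter V F) (hV : IsSmoothFanoVertexSet V)
    (hl : IsFacetFunctional V l) (hFl : ↑F ⊆ tightSet V l) (hv : v ∈ F)
    {f : Dual ℝ (Fin n → ℝ)} (hfv : f v = 1) (hf : ∀ x ∈ tightSet V l, x ≠ v → f x = 0) :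
    ∀ z ∈ V, (l - (F.card - 1 : ℝ) • f) z ≤ 1 := by
  have hf0 : -f ≠ 0 := fun h ↦ by simp [neg_eq_zero.1 h] at hfv
  have hfw : f (∑ x ∈ F, x) = 1 := by
    rw [map_sum, Finset.sum_eq_single_of_mem v hv fun x hx hxv ↦ hf x (hFl hx) hxv, hfv]
  obtain ⟨s, -, hle, x, hx, hfx⟩ := exists_tight_add_smul hV.finite_s16 hl.le_one
    (exists_pos_of_zero_mem_interior hV.zero_mem_interior hf0)
  have hs : F.card - 1 ≤ s := by
    by_contra! hlt
    obtain ⟨l'', hl'', hFl'', hsub⟩ := hF.extend _ hle (by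
      rw [LinearMap.add_apply, apply_sum_of_subset_tightSet hFl]
      simp only [LinearMap.smul_apply, LinearMap.neg_apply, hfw, smul_eq_mul]
      linarith)
    have heq : tightSet V l = tightSet V l'' :=
      (hV.isUnimodularBasis l'' hl'').eq_of_subset_of_span_eq_top (fun y hy ↦ by
        obtain rfl | hyv := eq_or_ne y v
        · exact hFl'' hv
        · exact hsub ⟨hy.1, by simp [hf y hy hyv, hy.2]⟩) hl.span_eq_top
    have hxl : x ∈ tightSet V l := heq ▸ hsub hx
    obtain rfl | hxv := eq_or_ne x v
    · rw [LinearMap.neg_apply, hfv] at hfx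
      linarith
    · simp [hf x hxl hxv] at hfx
  intro z hz
  have hlz := hl.le_one z hz
  have hsz := hle z hz
  have hcard : (1 : ℝ) < F.card := by exact_mod_cast hF.one_lt_card
  simp only [LinearMap.add_apply, LinearMap.sub_apply, LinearMap.smul_apply, LinearMap.neg_apply,
    smul_eq_mul] at hsz ⊢
  rcases le_total (f z) 0 with h | h <;> nlinarith

lemma exists_facet_exchange (hF : IsBlowUpCenter V F) (hV : IsSmoothFanoVertexSet V)
    (hl : IsFacetFunctional V l) (hFl : ↑F ⊆ tightSet V l) (hv : v ∈ F) :
    ∃ l', IsFacetFunctional (insert (∑ x ∈ F, x) V) l' ∧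
      tightSet (insert (∑ x ∈ F, x) V) l' = insert (∑ x ∈ F, x) (tightSet V l \ {v}) := by
  classical
  obtain ⟨f, hf⟩ := (hV.isUnimodularBasis l hl).exists_functional fun x ↦ if x = v then 1 else 0
  have hfv : f v = 1 := by simp [hf v (hFl hv)]
  have hf0 : ∀ x ∈ tightSet V l, x ≠ v → f x = 0 := fun x hx hxv ↦ by simp [hf x hx, hxv]
  have hfw : f (∑ x ∈ F, x) = 1 := by
    rw [map_sum, Finset.sum_eq_single_of_mem v hv fun x hx hxv ↦ hf0 x (hFl hx) hxv, hfv]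
  have hlw : (l - (F.card - 1 : ℝ) • f) (∑ x ∈ F, x) = 1 := by
    rw [LinearMap.sub_apply, apply_sum_of_subset_tightSet hFl, LinearMap.smul_apply, hfw]
    simp
  have hsub : insert (∑ x ∈ F, x) (tightSet V l \ {v}) ⊆
      tightSet (insert (∑ x ∈ F, x) V) (l - (F.card - 1 : ℝ) • f) := by
    rintro x (rfl | ⟨hx, hxv⟩)
    · exact ⟨mem_insert _ _, hlw⟩
    · exact ⟨.inr hx.1, by simp [hf0 x hx hxv, hx.2]⟩
  have hspan := (hF.isUnimodularBasis_exchange hV hl hFl hv).span_eq_top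
  have hfacet : IsFacetFunctional (insert (∑ x ∈ F, x) V) (l - (F.card - 1 : ℝ) • f) :=
    ⟨forall_mem_insert.2 ⟨hlw.le, hF.apply_sub_smul_le_one hV hl hFl hv hfv hf0⟩,
      top_unique (hspan.ge.trans (Submodule.span_mono hsub))⟩
  obtain ⟨l'', hl'', hFl'', v', hv', heq⟩ := hF.exists_exchange hV hfacet hlw
  exact ⟨_, hfacet, ((heq ▸ hF.isUnimodularBasis_exchange hV hl'' hFl'' hv' :
    IsUnimodularBasis (tightSet _ _)).eq_of_subset_of_span_eq_top hsub hspan).symm⟩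

lemma isSmoothFanoVertexSet_insert (hF : IsBlowUpCenter V F) (hV : IsSmoothFanoVertexSet V) :
    IsSmoothFanoVertexSet (insert (∑ x ∈ F, x) V) where
  finite_s16 := hV.finite_s16.insert _
  isLatticePoint := forall_mem_insert.2 ⟨hF.isLatticePoint_sum hV, hV.isLatticePoint⟩
  zero_mem_interior :=
    interior_mono (convexHull_mono (subset_insert _ _)) hV.zero_mem_interior
  isUnimodularBasis l hl := by
    by_cases hlw : l (∑ x ∈ F, x) = 1
    · obtain ⟨l', hl', hFl', v, hv, heq⟩ := hF.exists_exchange hV hl hlw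
      exact heq ▸ hF.isUnimodularBasis_exchange hV hl' hFl' hv
    · have heq := tightSet_insert_of_ne (V := V) hlw
      exact heq ▸ hV.isUnimodularBasis l
        ⟨fun x hx ↦ hl.le_one x (.inr hx), heq ▸ hl.span_eq_top⟩
  exists_facet := by
    refine forall_mem_insert.2 ⟨?_, fun x hx ↦ ?_⟩
    · obtain ⟨l, hl, hFl⟩ := hF.exists_facet
      obtain ⟨v, hv⟩ := Finset.card_pos.1 (one_pos.trans hF.one_lt_card)
      obtain ⟨l', hl', heq⟩ := hF.exists_facet_exchange hV hl hFl hv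
      exact ⟨l', hl', (heq.ge (mem_insert _ _)).2⟩
    obtain ⟨l, hl, hlx⟩ := hV.exists_facet x hx
    rcases le_or_gt (l (∑ x ∈ F, x)) 1 with hlw | hlw
    · exact ⟨l, hl.insert_of_le_one hlw, hlx⟩
    · obtain ⟨l', hl', hFl', hsub⟩ := hF.extend l hl.le_one hlw.le
      obtain ⟨v, hv, hvx⟩ := Finset.exists_mem_ne hF.one_lt_card x
      obtain ⟨l'', hl'', heq⟩ := hF.exists_facet_exchange hV hl' hFl' hv
      exact ⟨l'', hl'', (heq.ge (.inr ⟨hsub ⟨hx, hlx⟩, hvx.symm⟩)).2⟩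

lemma isStellarSubdivisionAt (hn : 2 ≤ n) (hF : IsBlowUpCenter V F)
    (hV : IsSmoothFanoVertexSet V) :
    IsStellarSubdivisionAt (convexHull ℝ V) (convexHull ℝ (insert (∑ x ∈ F, x) V))
      (∑ x ∈ F, x) := by
  have hW := hF.isSmoothFanoVertexSet_insert hV
  obtain ⟨l₀, hl₀, hFl₀⟩ := hF.exists_facet
  have hVF := hV.inter_convexHull hl₀ hFl₀
  refine ⟨convexHull ℝ ↑F, hV.isFaceOf_convexHull hl₀ hFl₀, ?_, fun h ↦ ?_, ?_, ?_⟩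
  · exact convexHull_nonempty_iff.2 (Finset.card_pos.1 (one_pos.trans hF.one_lt_card))
  · exact hV.convexHull_tightSet_ne l₀ ((convexHull_mono tightSet_subset).antisymm
      (h ▸ convexHull_mono hFl₀))
  · rw [hV.vertexSet_convexHull, hVF, finsum_mem_coe_finset]
  rw [hV.vertexSet_convexHull, hVF]
  ext G
  simp only [mem_ofPred_eq, isFacetOf_iff hn hW.zero_mem_interior,
    isFacetOf_iff hn hV.zero_mem_interior]
  constructor
  · rintro ⟨⟨l, hl, rfl⟩, hw⟩
    obtain ⟨l', hl', hFl', v, hv, heq⟩ :=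
      hF.exists_exchange hV hl (eq_one_of_mem_convexHull_tightSet hw)
    refine ⟨_, v, ⟨l', hl', rfl⟩, convexHull_mono hFl', hv, ?_⟩
    rw [inter_convexHull_tightSet, heq]
  · rintro ⟨_, v, ⟨l, hl, rfl⟩, hFl, hv, rfl⟩
    have hFl' : ↑F ⊆ tightSet V l := inter_convexHull_tightSet (l := l) ▸
      subset_inter hF.subset ((subset_convexHull ℝ _).trans hFl)
    obtain ⟨l', hl', heq⟩ := hF.exists_facet_exchange hV hl hFl' hv
    rw [inter_convexHull_tightSet, ← heq]
    exact ⟨⟨l', hl', rfl⟩, subset_convexHull ℝ _ (heq.ge (mem_insert _ _))⟩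

lemma ncard_vertexSet_ne (hF : IsBlowUpCenter V F) (hV : IsSmoothFanoVertexSet V) :
    (vertexSet (convexHull ℝ V)).ncard ≠
      (vertexSet (convexHull ℝ (insert (∑ x ∈ F, x) V))).ncard := by
  rw [hV.vertexSet_convexHull, (hF.isSmoothFanoVertexSet_insert hV).vertexSet_convexHull,
    ncard_insert_of_notMem hF.sum_notMem hV.finite_s16]
  exact (Nat.succ_ne_self _).symm

end IsBlowUpCenter

lemma image_extremePoints_of_injective {E E' : Type*} [AddCommGroup E] [Module ℝ E]
    [AddCommGroup E'] [Module ℝ E'] {f : E →ᵃ[ℝ] E'} (hf : Function.Injective f) (S : Set E) :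
    extremePoints ℝ (f '' S) = f '' extremePoints ℝ S := by
  ext b
  simp only [mem_extremePoints_iff_left, forall_mem_image, ← image_openSegment]
  constructor
  · rintro ⟨⟨a, ha, rfl⟩, h⟩
    exact ⟨a, ⟨ha, fun x hx y hy hmem ↦ hf (h hx hy (mem_image_of_mem f hmem))⟩, rfl⟩
  · rintro ⟨a, ⟨ha, h⟩, rfl⟩
    exact ⟨mem_image_of_mem f ha, fun x hx y hy hmem ↦
      congrArg f (h hx hy (hf.mem_set_image.1 hmem))⟩

namespace UnimodularEquiv

lemma refl (P : Set (Fin n → ℝ)) : UnimodularEquiv P P :=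
  ⟨AffineMap.id ℝ _, by simp, by simp⟩

lemma surjective_of_image_latticePoints {φ : (Fin n → ℝ) →ᵃ[ℝ] (Fin n → ℝ)}
    (hφ : {x | IsLatticePoint x} ⊆ range φ) : Function.Surjective φ := by
  have h0 : (0 : Fin n → ℝ) ∈ range φ := hφ fun i ↦ ⟨0, by simp⟩
  have hsingle : ∀ i, Pi.basisFun ℝ (Fin n) i ∈ range φ := fun i ↦
    hφ fun j ↦ ⟨Pi.single (M := fun _ ↦ ℤ) i 1 j, by
      simp [Pi.single_apply]⟩
  obtain ⟨b, hb⟩ := h0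
  rw [← φ.linear_surjective_iff, ← LinearMap.range_eq_top, ← top_le_iff,
    ← (Pi.basisFun ℝ (Fin n)).span_eq, Submodule.span_le]
  rintro _ ⟨i, rfl⟩
  obtain ⟨a, ha⟩ := hsingle i
  exact ⟨a - b, by simpa [ha, hb] using φ.linearMap_vsub a b⟩

lemma ncard_vertexSet_eq {P Q : Set (Fin n → ℝ)} (h : UnimodularEquiv Q P) :
    (vertexSet Q).ncard = (vertexSet P).ncard := by
  obtain ⟨φ, hφ, rfl⟩ := h
  have hsurj := surjective_of_image_latticePoints (hφ.ge.trans (image_subset_range _ _))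
  have hbij : Function.Bijective φ := ⟨φ.linear_injective_iff.1
    (LinearMap.injective_iff_surjective.2 (φ.linear_surjective_iff.2 hsurj)), hsurj⟩
  rw [vertexSet, vertexSet, image_extremePoints_of_injective hbij.1,
    ncard_image_of_injective _ hbij.1]

end UnimodularEquiv

lemma not_fIsolated_of_fStep {P Q : Set (Fin n → ℝ)} (hP : IsSmoothFano P) (hQ : IsSmoothFano Q)
    (h : FStep Q P) (hne : (vertexSet Q).ncard ≠ (vertexSet P).ncard) : ¬ FIsolated P := by
  refine fun hiso ↦ hne (hiso Q hQ ⟨1, ![Q, P], ?_, .refl _, .refl _, ?_⟩).ncard_vertexSet_eq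
  · simpa [Fin.forall_fin_two] using ⟨hQ, hP⟩
  · simpa [Fin.forall_fin_one] using h

namespace IsBlowUpCenter

variable {F : Finset (Fin n → ℝ)}

lemma not_fIsolated (hn : 2 ≤ n) (hF : IsBlowUpCenter V F) (hV : IsSmoothFanoVertexSet V) :
    ¬ FIsolated (convexHull ℝ V) := by
  have hW := hF.isSmoothFanoVertexSet_insert hV
  refine not_fIsolated_of_fStep (hV.isSmoothFano hn) (hW.isSmoothFano hn) (.inr ⟨_,
    hF.isLatticePoint_sum hV, ?_, ?_, hF.isStellarSubdivisionAt hn hV⟩)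
    (hF.ncard_vertexSet_ne hV).symm
  · exact hV.vertexSet_convexHull.symm ▸ hF.sum_notMem
  · rw [hV.vertexSet_convexHull, hW.vertexSet_convexHull, union_singleton]

lemma not_fIsolated_insert (hn : 2 ≤ n) (hF : IsBlowUpCenter V F) (hV : IsSmoothFanoVertexSet V) :
    ¬ FIsolated (convexHull ℝ (insert (∑ x ∈ F, x) V)) := by
  have hW := hF.isSmoothFanoVertexSet_insert hV
  refine not_fIsolated_of_fStep (hW.isSmoothFano hn) (hV.isSmoothFano hn) (.inl ⟨_,
    hF.isLatticePoint_sum hV, ?_, ?_, hF.isStellarSubdivisionAt hn hV⟩)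
    (hF.ncard_vertexSet_ne hV)
  · exact hV.vertexSet_convexHull.symm ▸ hF.sum_notMem
  · rw [hV.vertexSet_convexHull, hW.vertexSet_convexHull, union_singleton]

end IsBlowUpCenter

end BlowUp

section PrimitiveCollection

variable {n : ℕ} {V A S : Set (Fin n → ℝ)} {l : Dual ℝ (Fin n → ℝ)}

namespace IsSmoothFanoVertexSet

/-- In a simplex no set of vertices is a primitive collection, since the polytope counts as a face
of itself. -/
lemma exists_facet_of_forall_not_isPrimitiveCollection (hV : IsSmoothFanoVertexSet V)
    (hcard : n + 1 < V.ncard) (hS : S ⊆ V)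
    (hprim : ∀ A ⊆ S, ¬ IsPrimitiveCollection (convexHull ℝ V) A) :
    ∃ l, IsFacetFunctional V l ∧ S ⊆ tightSet V l := by
  induction hk : S.ncard using Nat.strong_induction_on generalizing S with
  | _ k ih =>
  have hSfin := hV.finite_s16.subset hS
  have hfacet : ∀ x ∈ S, ∃ l, IsFacetFunctional V l ∧ S \ {x} ⊆ tightSet V l := fun x hx ↦
    ih _ (hk ▸ ncard_sdiff_singleton_lt_of_mem hx hSfin) (sdiff_subset.trans hS)
      (fun A hA ↦ hprim A (hA.trans sdiff_subset)) rfl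
  rcases S.eq_empty_or_nonempty with rfl | hne
  · obtain ⟨l, hl, -⟩ := hV.exists_facet_superset (l := 0) (by simp)
    exact ⟨l, hl, empty_subset _⟩
  have hface : IsFaceOf (convexHull ℝ S) (convexHull ℝ V) := by
    by_contra h
    refine hprim S subset_rfl ⟨hne, hV.vertexSet_convexHull.symm ▸ hS, h, fun x hx ↦ ?_⟩
    obtain ⟨l, hl, hsub⟩ := hfacet x hx
    exact hV.isFaceOf_convexHull hl hsub
  have hproper : convexHull ℝ S ≠ convexHull ℝ V := by
    intro h
    have hVS : V ⊆ S := by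
      rw [← hV.vertexSet_convexHull, ← h]
      exact extremePoints_convexHull_subset
    obtain ⟨x, hx⟩ := hne
    obtain ⟨l, hl, hsub⟩ := hfacet x hx
    have hbasis := hV.isUnimodularBasis l hl
    have hle := ncard_le_ncard hsub hbasis.finite_s16
    rw [hbasis.ncard_eq] at hle
    have := ncard_sdiff_singleton_add_one hx hSfin
    have := ncard_le_ncard hVS hSfin
    omega
  obtain ⟨l, hl, hSl⟩ := exists_convexHull_tightSet_eq_of_isExposed hV.zero_mem_interior hface
    (convexHull_nonempty_iff.2 hne) hproper
  obtain ⟨l', hl', hsub⟩ := hV.exists_facet_superset hl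
  refine ⟨l', hl', Subset.trans ?_ hsub⟩
  rw [← inter_convexHull_tightSet, ← hSl]
  exact subset_inter hS (subset_convexHull _ _)

lemma not_subset_tightSet (hV : IsSmoothFanoVertexSet V)
    (hA : IsPrimitiveCollection (convexHull ℝ V) A) (hl : ∀ x ∈ V, l x ≤ 1) :
    ¬ A ⊆ tightSet V l := fun hsub ↦ by
  obtain ⟨l', hl', htight⟩ := hV.exists_facet_superset hl
  exact hA.2.2.1 (hV.isFaceOf_convexHull hl' (hsub.trans htight))

/-- A primitive collection inside `F ∪ tightSet V l` meets `F`, as faces contain none. -/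
lemma isBlowUpCenter_of_forall_isPrimitiveCollection (hV : IsSmoothFanoVertexSet V)
    (hcard : n + 1 < V.ncard) {F : Finset (Fin n → ℝ)} (hFV : ↑F ⊆ V) (hF : 1 < F.card)
    (hprim : ∀ A, IsPrimitiveCollection (convexHull ℝ V) A → ¬ A ⊆ F)
    (hvis : ∀ l : Dual ℝ (Fin n → ℝ), (∀ x ∈ V, l x ≤ 1) → 1 ≤ l (∑ x ∈ F, x) →
      ∀ A, IsPrimitiveCollection (convexHull ℝ V) A → (A ∩ F).Nonempty →
        ¬ A \ F ⊆ tightSet V l) :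
    IsBlowUpCenter V F where
  one_lt_card := hF
  exists_facet := hV.exists_facet_of_forall_not_isPrimitiveCollection hcard hFV
    fun A hA hA' ↦ hprim A hA' hA
  extend l hl hlF := by
    obtain ⟨l', hl', hsub⟩ := hV.exists_facet_of_forall_not_isPrimitiveCollection hcard
      (S := F ∪ tightSet V l) (union_subset hFV tightSet_subset) fun A hA hA' ↦ by
        by_cases hAF : (A ∩ F).Nonempty
        · exact hvis l hl hlF A hA' hAF (sdiff_subset_iff.2 hA)
        · refine hV.not_subset_tightSet hA' hl fun x hx ↦ (hA hx).resolve_left fun hxF ↦ ?_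
          exact hAF ⟨x, hx, hxF⟩
    exact ⟨l', hl', subset_union_left.trans hsub, subset_union_right.trans hsub⟩

end IsSmoothFanoVertexSet

end PrimitiveCollection

section

variable {E : Type*} [AddCommGroup E] [Module ℝ E] {V : Set E} {l : Dual ℝ E} {S : Finset E}

lemma sum_le_card_of_le_one (hl : ∀ x ∈ V, l x ≤ 1) (hS : ↑S ⊆ V) : ∑ x ∈ S, l x ≤ S.card := by
  simpa using Finset.sum_le_card_nsmul S l 1 fun x hx ↦ hl x (hS hx)

lemma coe_subset_tightSet_iff (hl : ∀ x ∈ V, l x ≤ 1) (hS : ↑S ⊆ V) :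
    ↑S ⊆ tightSet V l ↔ (S.card : ℝ) ≤ ∑ x ∈ S, l x := by
  rw [(sum_le_card_of_le_one hl hS).ge_iff_eq', eq_comm, ← nsmul_one, ← Finset.sum_const,
    Finset.sum_eq_sum_iff_of_le fun x hx ↦ hl x (hS hx)]
  exact ⟨fun h x hx ↦ (h hx).2, fun h x hx ↦ ⟨hS hx, h x hx⟩⟩

end

/-- Batyrev's description of the smooth Fano `n`-polytopes with `n + 3` vertices and five primitive
collections: the vertices form five blocks, and the primitive collections are the unions of two
cyclically consecutive blocks. The blocks `X 0, …, X 4` are those of the `v`, `y`, `z`, `t` and `u`;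
only the primitive relations without coefficients are included, and the one for `X 3 ∪ X 4` is
recovered from the other two. -/
structure IsPentagonalPartition {n : ℕ} (V : Set (Fin n → ℝ)) (X : Fin 5 → Finset (Fin n → ℝ)) :
    Prop where
  isSmoothFanoVertexSet : IsSmoothFanoVertexSet V
  ncard_eq : V.ncard = n + 3
  eq_iUnion : V = ⋃ k, ↑(X k)
  disjoint : Pairwise (Function.onFun Disjoint X)
  nonempty : ∀ k, (X k).Nonempty
  isPrimitiveCollection_iff : ∀ A : Set (Fin n → ℝ),
    IsPrimitiveCollection (convexHull ℝ V) A ↔ ∃ k, A = ↑(X k) ∪ ↑(X (k + 1))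
  sum_one_add_sum_two : ∑ x ∈ X 1, x + ∑ x ∈ X 2, x = ∑ x ∈ X 4, x
  sum_two_add_sum_three : ∑ x ∈ X 2, x + ∑ x ∈ X 3, x = 0

namespace IsPentagonalPartition

variable {n : ℕ} {V : Set (Fin n → ℝ)} {X : Fin 5 → Finset (Fin n → ℝ)}
  {l : Dual ℝ (Fin n → ℝ)} {x : Fin n → ℝ} {j k : Fin 5}

/-- The dihedral symmetry fixing `X 0` and exchanging `X 1` with `X 4` and `X 2` with `X 3`. -/
lemma reflect (H : IsPentagonalPartition V X) : IsPentagonalPartition V fun k ↦ X (-k) where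
  isSmoothFanoVertexSet := H.isSmoothFanoVertexSet
  ncard_eq := H.ncard_eq
  eq_iUnion := H.eq_iUnion.trans
    ((Equiv.neg (Fin 5)).iSup_comp (g := fun k ↦ (X k : Set (Fin n → ℝ)))).symm
  disjoint _ _ hjk := H.disjoint (neg_injective.ne hjk)
  nonempty k := H.nonempty (-k)
  isPrimitiveCollection_iff A := by
    rw [H.isPrimitiveCollection_iff]
    constructor <;> rintro ⟨k, rfl⟩ <;> exact ⟨-(k + 1), by simp [union_comm]⟩
  sum_one_add_sum_two := by
    change ∑ x ∈ X 4, x + ∑ x ∈ X 3, x = ∑ x ∈ X 1, x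
    rw [← H.sum_one_add_sum_two, add_assoc, H.sum_two_add_sum_three, add_zero]
  sum_two_add_sum_three := (add_comm _ _).trans H.sum_two_add_sum_three

lemma coe_subset (H : IsPentagonalPartition V X) (k : Fin 5) : ↑(X k) ⊆ V :=
  H.eq_iUnion ▸ subset_iUnion (fun k ↦ (X k : Set (Fin n → ℝ))) k

lemma eq_of_mem_of_mem (H : IsPentagonalPartition V X) (hj : x ∈ X j) (hk : x ∈ X k) : j = k :=
  H.disjoint.eq (Finset.not_disjoint_iff.2 ⟨x, hj, hk⟩)

lemma ne_of_mem (H : IsPentagonalPartition V X) {x y : Fin n → ℝ} (hx : x ∈ X j) (hy : y ∈ X k)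
    (hjk : j ≠ k) : x ≠ y :=
  fun hxy ↦ hjk (H.eq_of_mem_of_mem hx (hxy ▸ hy))

lemma two_le (H : IsPentagonalPartition V X) : 2 ≤ n := by
  classical
  have hV : V = ↑(Finset.univ.biUnion X) := by simp [H.eq_iUnion]
  have hcard := H.ncard_eq
  rw [hV, ncard_coe_finset, Finset.card_biUnion fun j _ k _ hjk ↦ H.disjoint hjk] at hcard
  have := Finset.card_nsmul_le_sum Finset.univ (fun k ↦ (X k).card) 1
    fun k _ ↦ (H.nonempty k).card_pos
  rw [Finset.card_univ, Fintype.card_fin, nsmul_one, Nat.cast_ofNat] at this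
  omega

lemma isPrimitiveCollection (H : IsPentagonalPartition V X) (k : Fin 5) :
    IsPrimitiveCollection (convexHull ℝ V) (X k ∪ X (k + 1)) :=
  (H.isPrimitiveCollection_iff _).2 ⟨k, rfl⟩

lemma sum_apply_one_add_sum_apply_two (H : IsPentagonalPartition V X) (l : Dual ℝ (Fin n → ℝ)) :
    ∑ x ∈ X 1, l x + ∑ x ∈ X 2, l x = ∑ x ∈ X 4, l x := by
  simpa using congrArg l H.sum_one_add_sum_two

lemma sum_apply_two_add_sum_apply_three (H : IsPentagonalPartition V X) (l : Dual ℝ (Fin n → ℝ)) :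
    ∑ x ∈ X 2, l x + ∑ x ∈ X 3, l x = 0 := by
  simpa using congrArg l H.sum_two_add_sum_three

lemma sum_add_sum_lt (H : IsPentagonalPartition V X) (hl : ∀ x ∈ V, l x ≤ 1) (k : Fin 5) :
    ∑ x ∈ X k, l x + ∑ x ∈ X (k + 1), l x < (X k).card + (X (k + 1)).card := by
  by_contra! h
  have hk := sum_le_card_of_le_one hl (H.coe_subset k)
  have hk' := sum_le_card_of_le_one hl (H.coe_subset (k + 1))
  exact H.isSmoothFanoVertexSet.not_subset_tightSet (H.isPrimitiveCollection k) hl <| union_subset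
    ((coe_subset_tightSet_iff hl (H.coe_subset k)).2 (by linarith))
    ((coe_subset_tightSet_iff hl (H.coe_subset (k + 1))).2 (by linarith))

lemma exists_facet_superset_block (H : IsPentagonalPartition V X) (k : Fin 5) :
    ∃ l, IsFacetFunctional V l ∧ ↑(X k) ⊆ tightSet V l := by
  refine H.isSmoothFanoVertexSet.exists_facet_of_forall_not_isPrimitiveCollection
    (by simp [H.ncard_eq]) (H.coe_subset k) fun A hAX hA ↦ ?_
  obtain ⟨j, rfl⟩ := (H.isPrimitiveCollection_iff A).1 hA
  obtain ⟨x, hx⟩ := H.nonempty j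
  obtain ⟨y, hy⟩ := H.nonempty (j + 1)
  have hjk := H.eq_of_mem_of_mem hx (hAX (.inl hx))
  have hjk' := H.eq_of_mem_of_mem hy (hAX (.inr hy))
  simp [← hjk] at hjk'

lemma card_four_lt (H : IsPentagonalPartition V X) : (X 4).card < (X 1).card + (X 2).card := by
  obtain ⟨l, hl, hsub⟩ := H.exists_facet_superset_block 4
  have h4 := (coe_subset_tightSet_iff hl.le_one (H.coe_subset 4)).1 hsub
  have h12 : ∑ x ∈ X 1, l x + ∑ x ∈ X 2, l x < (X 1).card + (X 2).card :=
    H.sum_add_sum_lt hl.le_one 1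
  rw [H.sum_apply_one_add_sum_apply_two] at h12
  exact_mod_cast h4.trans_lt h12

variable {G : Fin 5 → Finset (Fin n → ℝ)}

lemma isBlowUpCenter_biUnion [DecidableEq (Fin n → ℝ)] (H : IsPentagonalPartition V X)
    (hG : ∀ k, G k ⊆ X k)
    (hcard : 1 < ∑ k, (G k).card) (hne : ∀ k, G k ≠ X k ∨ G (k + 1) ≠ X (k + 1))
    (hvis : ∀ l : Dual ℝ (Fin n → ℝ), (∀ x ∈ V, l x ≤ 1) → 1 ≤ ∑ k, ∑ x ∈ G k, l x →
      ∀ k, (G k ∪ G (k + 1)).Nonempty →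
        ∑ x ∈ X k \ G k, l x + ∑ x ∈ X (k + 1) \ G (k + 1), l x <
          (X k \ G k).card + (X (k + 1) \ G (k + 1)).card) :
    IsBlowUpCenter V (Finset.univ.biUnion G) := by
  have hmem {k x} (hx : x ∈ X k) : x ∈ Finset.univ.biUnion G ↔ x ∈ G k := by
    simp only [Finset.mem_biUnion, Finset.mem_univ, true_and]
    exact ⟨fun ⟨j, hj⟩ ↦ H.eq_of_mem_of_mem (hG j hj) hx ▸ hj, fun h ↦ ⟨k, h⟩⟩
  have hsub : ↑(Finset.univ.biUnion G) ⊆ V := fun x hx ↦ by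
    obtain ⟨k, -, hk⟩ := Finset.mem_biUnion.1 hx
    exact H.coe_subset k (hG k hk)
  have hdisj : (↑(Finset.univ : Finset (Fin 5)) : Set (Fin 5)).PairwiseDisjoint G :=
    fun j _ k _ hjk ↦ (H.disjoint hjk).mono (hG j) (hG k)
  refine H.isSmoothFanoVertexSet.isBlowUpCenter_of_forall_isPrimitiveCollection
    (by simp [H.ncard_eq]) hsub (by rwa [Finset.card_biUnion hdisj]) (fun A hA hAF ↦ ?_)
    fun l hl hlF A hA hAF hAl ↦ ?_
  · obtain ⟨k, rfl⟩ := (H.isPrimitiveCollection_iff A).1 hA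
    exact (hne k).elim (fun h ↦ h ((hG k).antisymm fun x hx ↦ (hmem hx).1 (hAF (.inl hx))))
      fun h ↦ h ((hG _).antisymm fun x hx ↦ (hmem hx).1 (hAF (.inr hx)))
  · obtain ⟨k, rfl⟩ := (H.isPrimitiveCollection_iff A).1 hA
    have htight : ∀ j, X j ⊆ X k ∪ X (k + 1) →
        ((X j \ G j).card : ℝ) ≤ ∑ x ∈ X j \ G j, l x := fun j hj ↦
      (coe_subset_tightSet_iff hl (subset_trans (by simp) (H.coe_subset j))).1 fun x hx ↦ by
        have hx' := Finset.mem_sdiff.1 hx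
        exact hAl ⟨by simpa using hj hx'.1, fun h ↦ hx'.2 ((hmem hx'.1).1 h)⟩
    have hmeet : (G k ∪ G (k + 1)).Nonempty := by
      obtain ⟨x, hx | hx, hxF⟩ := hAF
      · exact ⟨x, Finset.mem_union_left _ ((hmem hx).1 hxF)⟩
      · exact ⟨x, Finset.mem_union_right _ ((hmem hx).1 hxF)⟩
    rw [map_sum, Finset.sum_biUnion hdisj] at hlF
    have := hvis l hl hlF k hmeet
    linarith [htight k Finset.subset_union_left, htight (k + 1) Finset.subset_union_right]

lemma not_fIsolated_of_card_four_le (H : IsPentagonalPartition V X) (h2 : 1 < (X 2).card)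
    (h41 : (X 4).card ≤ (X 1).card) : ¬ FIsolated (convexHull ℝ V) := by
  classical
  refine (H.isBlowUpCenter_biUnion (G := ![∅, ∅, X 2, ∅, ∅]) ?_ ?_ ?_ fun l hl hsum ↦ ?_)
    |>.not_fIsolated H.two_le H.isSmoothFanoVertexSet
  · simp [Fin.forall_fin_succ]
  · simpa [Fin.sum_univ_succ]
  · simp [Fin.forall_fin_succ, (H.nonempty _).ne_empty.symm]
  suffices ∑ x ∈ X 1, l x < (X 1).card ∧ ∑ x ∈ X 3, l x < (X 3).card by
    simpa [Fin.forall_fin_succ, H.nonempty 2]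
  replace hsum : 1 ≤ ∑ x ∈ X 2, l x := by simpa [Fin.sum_univ_succ] using hsum
  have h12 := H.sum_apply_one_add_sum_apply_two l
  have h23 := H.sum_apply_two_add_sum_apply_three l
  have h4 := sum_le_card_of_le_one hl (H.coe_subset 4)
  have h41' : ((X 4).card : ℝ) ≤ (X 1).card := mod_cast h41
  constructor <;> linarith [(X 3).card.cast_nonneg (α := ℝ)]

lemma not_fIsolated_of_card_one_lt (H : IsPentagonalPartition V X) (h2 : 1 < (X 2).card)
    (h14 : (X 1).card < (X 4).card) : ¬ FIsolated (convexHull ℝ V) := by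
  classical
  obtain ⟨z, hz⟩ := H.nonempty 2
  have hz2 : {z} ≠ X 2 := fun h ↦ by simp [← h] at h2
  refine (H.isBlowUpCenter_biUnion (G := ![∅, ∅, {z}, X 3, ∅]) ?_ ?_ ?_ fun l hl hsum ↦ ?_)
    |>.not_fIsolated H.two_le H.isSmoothFanoVertexSet
  · simpa [Fin.forall_fin_succ]
  · simpa [Fin.sum_univ_succ] using (H.nonempty 3).card_pos
  · simp [Fin.forall_fin_succ, (H.nonempty _).ne_empty.symm, hz2]
  suffices ∑ x ∈ X 1, l x + ∑ x ∈ X 2 \ {z}, l x < (X 1).card + (X 2 \ {z}).card ∧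
      ∑ x ∈ X 2 \ {z}, l x < (X 2 \ {z}).card ∧ ∑ x ∈ X 4, l x < (X 4).card by
    simpa [Fin.forall_fin_succ, H.nonempty 3]
  replace hsum : 1 ≤ l z + ∑ x ∈ X 3, l x := by simpa [Fin.sum_univ_succ] using hsum
  have h12 := H.sum_apply_one_add_sum_apply_two l
  have h23 := H.sum_apply_two_add_sum_apply_three l
  have hz' := Finset.sum_sdiff_eq_sub (f := l) (Finset.singleton_subset_iff.2 hz)
  have h1 := sum_le_card_of_le_one hl (H.coe_subset 1)
  have hlz := hl z (H.coe_subset 2 hz)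
  have h14' : ((X 1).card : ℝ) < (X 4).card := mod_cast h14
  rw [Finset.sum_singleton] at hz'
  refine ⟨?_, ?_, ?_⟩ <;> linarith [(X 2 \ {z}).card.cast_nonneg (α := ℝ)]

lemma card_two_eq_one (H : IsPentagonalPartition V X) (hiso : FIsolated (convexHull ℝ V)) :
    (X 2).card = 1 := by
  by_contra! h
  have h2 : 1 < (X 2).card := lt_of_le_of_ne (H.nonempty 2).card_pos h.symm
  exact (le_or_gt (X 4).card (X 1).card).elim
    (H.not_fIsolated_of_card_four_le h2 · hiso) (H.not_fIsolated_of_card_one_lt h2 · hiso)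

variable {z t : Fin n → ℝ} {d : ℕ}

lemma add_one_lt_card_zero_add_card_one (H : IsPentagonalPartition V X) (hz : X 2 = {z})
    (ht : X 3 = {t}) (hrel : ∑ x ∈ X 4, x + ∑ x ∈ X 0, x = (d : ℝ) • t) :
    d + 1 < (X 0).card + (X 1).card := by
  obtain ⟨l, hl, hlt⟩ :=
    H.isSmoothFanoVertexSet.exists_facet t (H.coe_subset 3 (by simp [ht]))
  have hl40 : ∑ x ∈ X 4, l x + ∑ x ∈ X 0, l x = d * l t := by simpa using congrArg l hrel
  have h12 := H.sum_apply_one_add_sum_apply_two l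
  have h23 := H.sum_apply_two_add_sum_apply_three l
  have h01 : ∑ x ∈ X 0, l x + ∑ x ∈ X 1, l x < (X 0).card + (X 1).card :=
    H.sum_add_sum_lt hl.le_one 0
  simp only [hz, ht, Finset.sum_singleton, hlt] at h12 h23 hl40
  rify
  linarith

lemma not_fIsolated_of_card_zero_eq_one (H : IsPentagonalPartition V X) (hz : X 2 = {z})
    (ht : X 3 = {t}) (hrel : ∑ x ∈ X 4, x + ∑ x ∈ X 0, x = (d : ℝ) • t) (h0 : (X 0).card = 1) :
    ¬ FIsolated (convexHull ℝ V) := by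
  classical
  refine (H.isBlowUpCenter_biUnion (G := ![X 0, ∅, X 2, ∅, ∅]) ?_ ?_ ?_ fun l hl hsum ↦ ?_)
    |>.not_fIsolated H.two_le H.isSmoothFanoVertexSet
  · simp [Fin.forall_fin_succ]
  · simp [Fin.sum_univ_succ, h0, hz]
  · simp [Fin.forall_fin_succ, (H.nonempty _).ne_empty.symm]
  suffices ∑ x ∈ X 1, l x < (X 1).card ∧ l t < 1 ∧ ∑ x ∈ X 4, l x < (X 4).card by
    simpa [Fin.forall_fin_succ, H.nonempty 0, H.nonempty 2, ht]
  replace hsum : 1 ≤ ∑ x ∈ X 0, l x + l z := by simpa [Fin.sum_univ_succ, hz] using hsum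
  have hl40 : ∑ x ∈ X 4, l x + ∑ x ∈ X 0, l x = d * l t := by simpa using congrArg l hrel
  have h12 := H.sum_apply_one_add_sum_apply_two l
  have h23 := H.sum_apply_two_add_sum_apply_three l
  have hl0 := sum_le_card_of_le_one hl (H.coe_subset 0)
  have hlz := hl z (H.coe_subset 2 (by simp [hz]))
  simp only [hz, ht, h0, Finset.sum_singleton, Nat.cast_one] at h12 h23 hl0
  have hdt : d * l t ≤ 0 := mul_nonpos_of_nonneg_of_nonpos d.cast_nonneg (by linarith)
  have h1 : (0 : ℝ) < (X 1).card := mod_cast (H.nonempty 1).card_pos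
  have h4 : (0 : ℝ) < (X 4).card := mod_cast (H.nonempty 4).card_pos
  refine ⟨?_, ?_, ?_⟩ <;> linarith

lemma not_fIsolated_of_add_two_lt (H : IsPentagonalPartition V X) (hz : X 2 = {z})
    (ht : X 3 = {t}) (hrel : ∑ x ∈ X 4, x + ∑ x ∈ X 0, x = (d : ℝ) • t) (h0 : 1 < (X 0).card)
    (hd : d + 2 < (X 0).card + (X 1).card) (h14 : (X 1).card ≤ (X 4).card) :
    ¬ FIsolated (convexHull ℝ V) := by
  classical
  obtain ⟨F, hF, hFcard⟩ := Finset.exists_subset_card_eq h0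
  have hFne : F.Nonempty := Finset.card_pos.1 (hFcard ▸ two_pos)
  refine (H.isBlowUpCenter_biUnion (G := ![F, ∅, ∅, ∅, ∅]) ?_ ?_ ?_ fun l hl hsum ↦ ?_)
    |>.not_fIsolated H.two_le H.isSmoothFanoVertexSet
  · simpa [Fin.forall_fin_succ]
  · simp [Fin.sum_univ_succ, hFcard]
  · simp [Fin.forall_fin_succ, (H.nonempty _).ne_empty.symm]
  suffices ∑ x ∈ X 0 \ F, l x + ∑ x ∈ X 1, l x < (X 0 \ F).card + (X 1).card ∧
      ∑ x ∈ X 4, l x + ∑ x ∈ X 0 \ F, l x < (X 4).card + (X 0 \ F).card by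
    simpa [Fin.forall_fin_succ, hFne]
  replace hsum : 1 ≤ ∑ x ∈ F, l x := by simpa [Fin.sum_univ_succ] using hsum
  have hl40 : ∑ x ∈ X 4, l x + ∑ x ∈ X 0, l x = d * l t := by simpa using congrArg l hrel
  have h12 := H.sum_apply_one_add_sum_apply_two l
  have h23 := H.sum_apply_two_add_sum_apply_three l
  have hl0 := Finset.sum_sdiff_eq_sub (f := l) hF
  have hcard := Finset.card_sdiff_add_card_eq_card hF
  have hlt := hl t (H.coe_subset 3 (by simp [ht]))
  simp only [hz, ht, Finset.sum_singleton] at h12 h23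
  have hdt : d * l t ≤ d := mul_le_of_le_one_right d.cast_nonneg hlt
  have h01 : (d + 1 : ℝ) ≤ (X 0 \ F).card + (X 1).card := by
    norm_cast
    omega
  have h14' : ((X 1).card : ℝ) ≤ (X 4).card := mod_cast h14
  constructor <;> linarith

end IsPentagonalPartition

open scoped Pointwise in
lemma zero_mem_interior_convexHull_of_insert_add {E : Type*} [NormedAddCommGroup E]
    [NormedSpace ℝ E] {V : Set E} {y z : E} (hy : y ∈ V) (hz : z ∈ V)
    (h0 : (0 : E) ∈ convexHull ℝ V) (h : (0 : E) ∈ interior (convexHull ℝ (insert (y + z) V))) :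
    (0 : E) ∈ interior (convexHull ℝ V) := by
  have hmid : ∀ a ∈ convexHull ℝ V, ∀ b ∈ convexHull ℝ V, (2⁻¹ : ℝ) • (a + b) ∈ convexHull ℝ V :=
    fun a ha b hb ↦ by
      rw [smul_add]
      exact convex_convexHull ℝ V ha hb (by norm_num) (by norm_num) (by norm_num)
  have hhalf : (2⁻¹ : ℝ) • convexHull ℝ (insert (y + z) V) ⊆ convexHull ℝ V := by
    rw [← convexHull_smul]
    refine convexHull_min ?_ (convex_convexHull ℝ V)
    rintro _ ⟨x, rfl | hx, rfl⟩
    · exact hmid y (subset_convexHull ℝ V hy) z (subset_convexHull ℝ V hz)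
    · simpa using hmid x (subset_convexHull ℝ V hx) 0 h0
  refine interior_mono hhalf ?_
  rw [interior_smul₀ (by norm_num)]
  exact ⟨0, h, smul_zero _⟩

lemma IsSmoothFanoVertexSet.of_insert {n : ℕ} {V : Set (Fin n → ℝ)} {u : Fin n → ℝ}
    (hV : IsSmoothFanoVertexSet (insert u V)) (h0 : (0 : Fin n → ℝ) ∈ interior (convexHull ℝ V))
    (hu : ∀ l : Dual ℝ (Fin n → ℝ), (∀ x ∈ V, l x ≤ 1) → 1 ≤ l u →
      ∃ l', IsFacetFunctional V l' ∧ IsUnimodularBasis (tightSet V l') ∧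
        tightSet V l ⊆ tightSet V l') :
    IsSmoothFanoVertexSet V where
  finite_s16 := hV.finite_s16.subset (subset_insert _ _)
  isLatticePoint x hx := hV.isLatticePoint x (.inr hx)
  zero_mem_interior := h0
  isUnimodularBasis l hl := by
    rcases lt_or_ge (l u) 1 with hlu | hlu
    · exact tightSet_insert_of_ne hlu.ne ▸ hV.isUnimodularBasis l (hl.insert_of_le_one hlu.le)
    · obtain ⟨l', -, hbasis, hsub⟩ := hu l hl.le_one hlu
      exact hbasis.eq_of_subset_of_span_eq_top hsub hl.span_eq_top ▸ hbasis
  exists_facet x hx := by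
    obtain ⟨l, hl, hlx⟩ := hV.exists_facet x (.inr hx)
    have hle : ∀ x ∈ V, l x ≤ 1 := fun x hx ↦ hl.le_one x (.inr hx)
    obtain hlu | hlu := (hl.le_one u (mem_insert _ _)).lt_or_eq
    · exact ⟨l, ⟨hle, tightSet_insert_of_ne hlu.ne ▸ hl.span_eq_top⟩, hlx⟩
    · obtain ⟨l', hl', -, hsub⟩ := hu l hle hlu.ge
      exact ⟨l', hl', (hsub ⟨hx, hlx⟩).2⟩

namespace IsPentagonalPartition

variable {n : ℕ} {V : Set (Fin n → ℝ)} {X : Fin 5 → Finset (Fin n → ℝ)} {x y z t u : Fin n → ℝ}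
  {l : Dual ℝ (Fin n → ℝ)} {d : ℕ}

lemma exists_facet_superset_of_mem_zero (H : IsPentagonalPartition V X) (hx : x ∈ X 0) :
    ∃ l, IsFacetFunctional V l ∧ ↑(X 4) ∪ ↑(X 1) ∪ ↑(X 0) \ {x} ⊆ tightSet V l := by
  refine H.isSmoothFanoVertexSet.exists_facet_of_forall_not_isPrimitiveCollection
    (by simp [H.ncard_eq]) (union_subset (union_subset (H.coe_subset 4) (H.coe_subset 1))
      (sdiff_subset.trans (H.coe_subset 0))) fun A hAX hA ↦ ?_
  obtain ⟨k, rfl⟩ := (H.isPrimitiveCollection_iff A).1 hA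
  have hmem : ∀ j, (X j : Set (Fin n → ℝ)) ⊆ X k ∪ X (k + 1) → j = 4 ∨ j = 1 := fun j hj ↦ by
    obtain ⟨w, hw, hwx⟩ : ∃ w ∈ X j, w ∉ X 0 \ {x} := by
      obtain rfl | hj0 := eq_or_ne j 0
      · exact ⟨x, hx, by simp⟩
      · obtain ⟨w, hw⟩ := H.nonempty j
        exact ⟨w, hw, fun h ↦ hj0 (H.eq_of_mem_of_mem hw (Finset.mem_sdiff.1 h).1)⟩
    rcases hAX (hj hw) with (h | h) | h
    · exact .inl (H.eq_of_mem_of_mem hw h)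
    · exact .inr (H.eq_of_mem_of_mem hw h)
    · exact absurd (by simpa using h) hwx
  have h2 := hmem (k + 1) subset_union_right
  obtain rfl | rfl := hmem k subset_union_left <;> simp at h2

lemma eq_insert (H : IsPentagonalPartition V X) (hy : X 1 = {y}) (hz : X 2 = {z}) (ht : X 3 = {t})
    (hu : X 4 = {u}) : V = insert u (insert y (insert z (insert t ↑(X 0)))) := by
  ext w
  suffices w ∈ X 0 ∨ w = y ∨ w = z ∨ w = t ∨ w = u ↔ w = u ∨ w = y ∨ w = z ∨ w = t ∨ w ∈ X 0 by
    simpa [H.eq_iUnion, Fin.exists_fin_succ, hy, hz, ht, hu] using this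
  tauto

lemma exists_tightSet_eq_insert (H : IsPentagonalPartition V X) (hy : X 1 = {y}) (hz : X 2 = {z})
    (ht : X 3 = {t}) (hu : X 4 = {u}) (hx : x ∈ X 0) :
    ∃ l, IsFacetFunctional V l ∧ tightSet V l = insert u (insert y (↑(X 0) \ {x})) := by
  obtain ⟨l, hl, hsub⟩ := H.exists_facet_superset_of_mem_zero hx
  replace hsub : insert u (insert y (↑(X 0) \ {x})) ⊆ tightSet V l := by
    simpa [hy, hu, insert_subset_iff, singleton_union, insert_union, and_left_comm] using hsub
  have hlu : l u = 1 := (hsub (mem_insert _ _)).2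
  have hly : l y = 1 := (hsub (.inr (mem_insert _ _))).2
  have hlx : l x ≠ 1 := fun hlx ↦
    H.isSmoothFanoVertexSet.not_subset_tightSet (H.isPrimitiveCollection 0) hl.le_one <| by
      rintro w (hw | hw)
      · obtain rfl | hwx := eq_or_ne w x
        · exact ⟨H.coe_subset 0 hx, hlx⟩
        · exact hsub (.inr (.inr ⟨hw, hwx⟩))
      · obtain rfl : w = y := by simpa [hy] using hw
        exact hsub (.inr (mem_insert _ _))
  have h12 := H.sum_apply_one_add_sum_apply_two l
  have h23 := H.sum_apply_two_add_sum_apply_three l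
  simp only [hy, hz, ht, hu, Finset.sum_singleton, hlu, hly] at h12 h23
  refine ⟨l, hl, Subset.antisymm (fun w hw ↦ ?_) hsub⟩
  have hwV := hw.1
  rw [H.eq_insert hy hz ht hu] at hwV
  rcases hwV with rfl | rfl | rfl | rfl | hw0
  · exact mem_insert _ _
  · exact .inr (mem_insert _ _)
  · linarith [hw.2]
  · linarith [hw.2]
  · exact .inr (.inr ⟨hw0, fun h ↦ hlx (mem_singleton_iff.1 h ▸ hw.2)⟩)

lemma isUnimodularBasis_insert (H : IsPentagonalPartition V X) (hy : X 1 = {y}) (hz : X 2 = {z})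
    (ht : X 3 = {t}) (hu : X 4 = {u}) (hx : x ∈ X 0) :
    IsUnimodularBasis (insert z (insert y (↑(X 0) \ {x}))) := by
  obtain ⟨l, hl, heq⟩ := H.exists_tightSet_eq_insert hy hz ht hu hx
  have hu4 : u ∈ X 4 := by simp [hu]
  have huy : u ≠ y := H.ne_of_mem (k := 1) hu4 (by simp [hy]) (by decide)
  have hu0 : u ∉ X 0 := fun h ↦ absurd (H.eq_of_mem_of_mem hu4 h) (by decide)
  have hsdiff : tightSet V l \ {u} = insert y (↑(X 0) \ {x}) := by
    rw [heq, insert_sdiff_self_of_notMem]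
    simp [huy, hu0]
  have hsum : z - u = -y := by
    have := H.sum_one_add_sum_two
    simp only [hy, hz, hu, Finset.sum_singleton] at this
    rw [← this]
    abel
  rw [← hsdiff]
  refine (H.isSmoothFanoVertexSet.isUnimodularBasis l hl).insert_sdiff (heq ▸ mem_insert _ _)
    (H.isSmoothFanoVertexSet.isLatticePoint z (H.coe_subset 2 (by simp [hz]))) ?_
  rw [hsum, hsdiff]
  exact neg_mem (Submodule.subset_span (mem_insert _ _))

lemma le_one_of_eq_one_on_insert (H : IsPentagonalPartition V X) (hy : X 1 = {y})
    (hz : X 2 = {z}) (ht : X 3 = {t}) (hu : X 4 = {u})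
    (hrel : ∑ x ∈ X 4, x + ∑ x ∈ X 0, x = (d : ℝ) • t) (hx : x ∈ X 0)
    (hl : ∀ w ∈ insert z (insert y (X 0 \ {x} : Set (Fin n → ℝ))), l w = 1) :
    ∀ w ∈ V \ {u}, l w ≤ 1 := by
  classical
  have hlz : l z = 1 := hl z (mem_insert _ _)
  have hly : l y = 1 := hl y (.inr (mem_insert _ _))
  have hl0 : ∀ w ∈ X 0, w ≠ x → l w = 1 := fun w hw hwx ↦ hl w (.inr (.inr ⟨hw, hwx⟩))
  have hl40 : ∑ x ∈ X 4, l x + ∑ x ∈ X 0, l x = d * l t := by simpa using congrArg l hrel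
  have h12 := H.sum_apply_one_add_sum_apply_two l
  have h23 := H.sum_apply_two_add_sum_apply_three l
  have hsum : 0 ≤ ∑ w ∈ (X 0).erase x, l w := Finset.sum_nonneg fun w hw ↦ by
    rw [hl0 w (Finset.mem_of_mem_erase hw) (Finset.ne_of_mem_erase hw)]
    exact zero_le_one
  rw [← Finset.add_sum_erase _ _ hx] at hl40
  simp only [hy, hz, ht, hu, Finset.sum_singleton, hlz, hly] at h12 h23 hl40
  have hlt : l t = -1 := by linarith
  rw [H.eq_insert hy hz ht hu]
  rintro w ⟨rfl | rfl | rfl | rfl | hw, hwu⟩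
  · exact absurd rfl hwu
  · exact hly.le
  · exact hlz.le
  · linarith
  · obtain rfl | hwx := eq_or_ne w x
    · rw [hlt] at hl40
      linarith [d.cast_nonneg (α := ℝ)]
    · exact (hl0 w hw hwx).le

lemma exists_isFacetFunctional_sdiff (H : IsPentagonalPartition V X) (hy : X 1 = {y})
    (hz : X 2 = {z}) (ht : X 3 = {t}) (hu : X 4 = {u})
    (hrel : ∑ x ∈ X 4, x + ∑ x ∈ X 0, x = (d : ℝ) • t) (hx : x ∈ X 0) :
    ∃ l, IsFacetFunctional (V \ {u}) l ∧
      insert z (insert y (↑(X 0) \ {x})) ⊆ tightSet (V \ {u}) l := by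
  have hbasis := H.isUnimodularBasis_insert hy hz ht hu hx
  obtain ⟨l, hl⟩ := hbasis.exists_functional fun _ ↦ 1
  have hlu : l u = l y + l z := by
    simpa [hy, hz, hu] using (H.sum_apply_one_add_sum_apply_two l).symm
  have hsub : insert z (insert y (↑(X 0) \ {x})) ⊆ tightSet (V \ {u}) l := fun w hw ↦ by
    refine ⟨⟨?_, ?_⟩, hl w hw⟩
    · rw [H.eq_insert hy hz ht hu]
      rcases hw with rfl | rfl | hw
      exacts [by simp, by simp, by simp [hw.1]]
    · rintro rfl
      linarith [hl w hw, hl z (mem_insert _ _), hl y (.inr (mem_insert _ _))]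
  exact ⟨l, ⟨H.le_one_of_eq_one_on_insert hy hz ht hu hrel hx hl,
    top_le_iff.1 (hbasis.span_eq_top ▸ Submodule.span_mono hsub)⟩, hsub⟩

lemma exists_tightSet_sdiff_subset (H : IsPentagonalPartition V X) (hy : X 1 = {y})
    (hz : X 2 = {z}) (ht : X 3 = {t}) (hu : X 4 = {u})
    (hrel : ∑ x ∈ X 4, x + ∑ x ∈ X 0, x = (d : ℝ) • t) (hl : ∀ x ∈ V \ {u}, l x ≤ 1)
    (hlu : 1 ≤ l u) : ∃ x ∈ X 0, tightSet (V \ {u}) l ⊆ insert z (insert y (↑(X 0) \ {x})) := by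
  have hyu : y ≠ u := H.ne_of_mem (j := 1) (k := 4) (by simp [hy]) (by simp [hu]) (by decide)
  have hly : l y ≤ 1 := hl y ⟨H.coe_subset 1 (by simp [hy]), hyu⟩
  have hl40 : ∑ x ∈ X 4, l x + ∑ x ∈ X 0, l x = d * l t := by simpa using congrArg l hrel
  have h12 := H.sum_apply_one_add_sum_apply_two l
  have h23 := H.sum_apply_two_add_sum_apply_three l
  simp only [hy, hz, ht, hu, Finset.sum_singleton] at h12 h23 hl40
  have hlt : l t ≤ 0 := by linarith
  obtain ⟨x, hx, hlx⟩ : ∃ x ∈ X 0, l x < 1 := by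
    by_contra! h
    have hdt : d * l t ≤ 0 := mul_nonpos_of_nonneg_of_nonpos d.cast_nonneg hlt
    linarith [Finset.sum_nonneg fun x hx ↦ zero_le_one.trans (h x hx)]
  refine ⟨x, hx, fun w ⟨⟨hw, hwu⟩, hlw⟩ ↦ ?_⟩
  rw [H.eq_insert hy hz ht hu] at hw
  rcases hw with rfl | rfl | rfl | rfl | hw
  · exact absurd rfl hwu
  · exact .inr (mem_insert _ _)
  · exact mem_insert _ _
  · linarith
  · exact .inr (.inr ⟨hw, fun h ↦ hlx.ne (mem_singleton_iff.1 h ▸ hlw)⟩)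

lemma exists_facet_superset_sdiff (H : IsPentagonalPartition V X) (hy : X 1 = {y})
    (hz : X 2 = {z}) (ht : X 3 = {t}) (hu : X 4 = {u})
    (hrel : ∑ x ∈ X 4, x + ∑ x ∈ X 0, x = (d : ℝ) • t) (hl : ∀ x ∈ V \ {u}, l x ≤ 1)
    (hlu : 1 ≤ l u) :
    ∃ l', IsFacetFunctional (V \ {u}) l' ∧ IsUnimodularBasis (tightSet (V \ {u}) l') ∧
      {y, z} ⊆ tightSet (V \ {u}) l' ∧ tightSet (V \ {u}) l ⊆ tightSet (V \ {u}) l' := by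
  obtain ⟨x, hx, hlx⟩ := H.exists_tightSet_sdiff_subset hy hz ht hu hrel hl hlu
  obtain ⟨l', hl', hsub⟩ := H.exists_isFacetFunctional_sdiff hy hz ht hu hrel hx
  have hyz : {y, z} ⊆ tightSet (V \ {u}) l' := Subset.trans (by simp [insert_subset_iff]) hsub
  have hlu' : l' u = l' y + l' z := by
    simpa [hy, hz, hu] using (H.sum_apply_one_add_sum_apply_two l').symm
  obtain ⟨x', hx', hlx'⟩ := H.exists_tightSet_sdiff_subset hy hz ht hu hrel hl'.le_one <| by
    linarith [(hyz (mem_insert _ _)).2, (hyz (mem_insert_of_mem _ rfl)).2]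
  have hbasis := H.isUnimodularBasis_insert hy hz ht hu hx'
  exact ⟨l', hl', hbasis.eq_of_subset_of_span_eq_top hlx' hl'.span_eq_top ▸ hbasis, hyz,
    hlx.trans hsub⟩

lemma isSmoothFanoVertexSet_sdiff (H : IsPentagonalPartition V X) (hy : X 1 = {y})
    (hz : X 2 = {z}) (ht : X 3 = {t}) (hu : X 4 = {u})
    (hrel : ∑ x ∈ X 4, x + ∑ x ∈ X 0, x = (d : ℝ) • t) :
    IsSmoothFanoVertexSet (V \ {u}) := by
  have hmem {w k} (hw : w ∈ X k) (hk : k ≠ 4) : w ∈ V \ {u} :=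
    ⟨H.coe_subset k hw, H.ne_of_mem (k := 4) hw (by simp [hu]) hk⟩
  have hyV : y ∈ V \ {u} := hmem (k := 1) (by simp [hy]) (by decide)
  have hzV : z ∈ V \ {u} := hmem (k := 2) (by simp [hz]) (by decide)
  have htV : t ∈ V \ {u} := hmem (k := 3) (by simp [ht]) (by decide)
  have hyz : y + z = u := by simpa [hy, hz, hu] using H.sum_one_add_sum_two
  have hzt : z + t = 0 := by simpa [hz, ht] using H.sum_two_add_sum_three
  have hins : insert u (V \ {u}) = V := insert_sdiff_self_of_mem (H.coe_subset 4 (by simp [hu]))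
  have h0 : (0 : Fin n → ℝ) ∈ convexHull ℝ (V \ {u}) := by
    have hmid : (2⁻¹ : ℝ) • z + (2⁻¹ : ℝ) • t = 0 := by rw [← smul_add, hzt, smul_zero]
    exact hmid ▸ convex_convexHull ℝ _ (subset_convexHull ℝ _ hzV) (subset_convexHull ℝ _ htV)
      (by norm_num) (by norm_num) (by norm_num)
  have hsmooth := H.isSmoothFanoVertexSet
  refine .of_insert (u := u) (by rwa [hins]) ?_ fun l hl hlu ↦ ?_
  · refine zero_mem_interior_convexHull_of_insert_add hyV hzV h0 ?_
    rw [hyz, hins]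
    exact hsmooth.zero_mem_interior
  · obtain ⟨l', hl', hbasis, -, hsub⟩ := H.exists_facet_superset_sdiff hy hz ht hu hrel hl hlu
    exact ⟨l', hl', hbasis, hsub⟩

lemma not_fIsolated_of_eq_singleton (H : IsPentagonalPartition V X) (hy : X 1 = {y})
    (hz : X 2 = {z}) (ht : X 3 = {t}) (hu : X 4 = {u})
    (hrel : ∑ x ∈ X 4, x + ∑ x ∈ X 0, x = (d : ℝ) • t) : ¬ FIsolated (convexHull ℝ V) := by
  classical
  have hne : y ≠ z := H.ne_of_mem (j := 1) (k := 2) (by simp [hy]) (by simp [hz]) (by decide)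
  have hyz : y + z = u := by simpa [hy, hz, hu] using H.sum_one_add_sum_two
  have hsum : ∑ x ∈ {y, z}, x = u := by rw [Finset.sum_pair hne, hyz]
  have hcenter : IsBlowUpCenter (V \ {u}) {y, z} := by
    refine ⟨by simp [Finset.card_pair hne], ?_, fun l hl hlu ↦ ?_⟩
    · obtain ⟨x, hx⟩ := H.nonempty 0
      obtain ⟨l, hl, hsub⟩ := H.exists_isFacetFunctional_sdiff hy hz ht hu hrel hx
      exact ⟨l, hl, Subset.trans (by simp [insert_subset_iff]) hsub⟩
    · rw [hsum] at hlu
      obtain ⟨l', hl', -, hyz', hsub⟩ := H.exists_facet_superset_sdiff hy hz ht hu hrel hl hlu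
      exact ⟨l', hl', by simpa using hyz', hsub⟩
  have hiso := hcenter.not_fIsolated_insert H.two_le
    (H.isSmoothFanoVertexSet_sdiff hy hz ht hu hrel)
  rwa [hsum, insert_sdiff_self_of_mem (H.coe_subset 4 (by simp [hu]))] at hiso

end IsPentagonalPartition

lemma exists_fin_five (q : Fin 5 → Prop) : (∃ k, q k) ↔ q 0 ∨ q 1 ∨ q 2 ∨ q 3 ∨ q 4 := by
  simp [Fin.exists_fin_succ]

lemma iUnion_fin_five {α : Type*} (s : Fin 5 → Set α) :
    ⋃ k, s k = s 0 ∪ s 1 ∪ s 2 ∪ s 3 ∪ s 4 := by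
  ext a
  simp only [mem_iUnion, exists_fin_five, mem_union, or_assoc]

section Labelling

variable {ι α : Type*} [Fintype ι] {V : Set α} {p : ι → ℕ} {x : ∀ k, Fin (p k) → α}

lemma injective_sigma_of_ncard_eq (hV : V = ⋃ k, range (x k)) (hcard : V.ncard = ∑ k, p k) :
    Function.Injective fun i : Σ k, Fin (p k) ↦ x i.1 i.2 := by
  have hrange : range (fun i : Σ k, Fin (p k) ↦ x i.1 i.2) = V := by
    rw [hV, range_sigma_eq_iUnion_range]
  rw [← injOn_univ, ← ncard_image_iff, image_univ, hrange, hcard]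
  simp

lemma injective_of_ncard_eq (hV : V = ⋃ k, range (x k)) (hcard : V.ncard = ∑ k, p k) (k : ι) :
    Function.Injective (x k) :=
  (injective_sigma_of_ncard_eq hV hcard).comp sigma_mk_injective

lemma card_image_univ_of_ncard_eq [DecidableEq α] (hV : V = ⋃ k, range (x k))
    (hcard : V.ncard = ∑ k, p k) (k : ι) : (Finset.univ.image (x k)).card = p k := by
  rw [Finset.card_image_of_injective _ (injective_of_ncard_eq hV hcard k), Finset.card_univ,
    Fintype.card_fin]

lemma sum_image_univ_of_ncard_eq [DecidableEq α] [AddCommMonoid α] (hV : V = ⋃ k, range (x k))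
    (hcard : V.ncard = ∑ k, p k) (k : ι) : ∑ w ∈ Finset.univ.image (x k), w = ∑ i, x k i :=
  Finset.sum_image (injective_of_ncard_eq hV hcard k).injOn

end Labelling

namespace IsPentagonalPartition

variable {n : ℕ} {V P : Set (Fin n → ℝ)} {X : Fin 5 → Finset (Fin n → ℝ)} {z t : Fin n → ℝ} {d : ℕ}

lemma card_constraints_of_fIsolated (H : IsPentagonalPartition V X) (hz : X 2 = {z})
    (ht : X 3 = {t}) (hrel : ∑ x ∈ X 4, x + ∑ x ∈ X 0, x = (d : ℝ) • t)
    (hiso : FIsolated (convexHull ℝ V)) :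
    2 ≤ (X 0).card ∧ (X 1).card = (X 4).card ∧ 2 ≤ (X 1).card ∧
      d = (X 0).card + (X 1).card - 2 := by
  have h41 := H.card_four_lt
  have h14 : (X 1).card < (X 4).card + (X 3).card := H.reflect.card_four_lt
  rw [hz, Finset.card_singleton] at h41
  rw [ht, Finset.card_singleton] at h14
  have h1 : (X 1).card ≠ 1 := fun h1 ↦ by
    obtain ⟨y, hy⟩ := Finset.card_eq_one.1 h1
    obtain ⟨u, hu⟩ := Finset.card_eq_one.1 (show (X 4).card = 1 by omega)
    exact H.not_fIsolated_of_eq_singleton hy hz ht hu hrel hiso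
  have h0 : (X 0).card ≠ 1 := fun h0 ↦ H.not_fIsolated_of_card_zero_eq_one hz ht hrel h0 hiso
  have hpos0 := (H.nonempty 0).card_pos
  have hpos1 := (H.nonempty 1).card_pos
  have hlt := H.add_one_lt_card_zero_add_card_one hz ht hrel
  have hge : (X 0).card + (X 1).card ≤ d + 2 := by
    by_contra! hd
    exact H.not_fIsolated_of_add_two_lt hz ht hrel (by omega) hd (by omega) hiso
  omega

variable {p : Fin 5 → ℕ} {x : ∀ k, Fin (p k) → Fin n → ℝ}

lemma of_isSmoothFano [DecidableEq (Fin n → ℝ)] (hP : IsSmoothFano P)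
    (hcard : (vertexSet P).ncard = n + 3) (hp : ∀ k, 0 < p k) (hsum : ∑ k, p k = n + 3)
    (hV : vertexSet P = ⋃ k, range (x k))
    (hPC : ∀ A, IsPrimitiveCollection P A ↔ ∃ k, A = range (x k) ∪ range (x (k + 1)))
    (hr2 : ∑ i, x 1 i + ∑ i, x 2 i = ∑ i, x 4 i) (hr3 : ∑ i, x 2 i + ∑ i, x 3 i = 0) :
    IsPentagonalPartition (vertexSet P) fun k ↦ Finset.univ.image (x k) := by
  have hn : 2 ≤ n := by
    have := Finset.card_nsmul_le_sum Finset.univ p 1 fun k _ ↦ hp k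
    rw [hsum, Finset.card_univ, Fintype.card_fin, nsmul_one, Nat.cast_ofNat] at this
    omega
  obtain ⟨hsmooth, hconv⟩ := IsSmoothFanoVertexSet.of_isSmoothFano hn hP
  have hinj := injective_sigma_of_ncard_eq hV (hcard.trans hsum.symm)
  have hsumX := sum_image_univ_of_ncard_eq hV (hcard.trans hsum.symm)
  refine ⟨hsmooth, hcard, by simpa using hV, fun j k hjk ↦ ?_, fun k ↦ ?_, ?_, ?_, ?_⟩
  · simp only [Function.onFun, Finset.disjoint_left, Finset.mem_image, Finset.mem_univ, true_and]
    rintro _ ⟨i, rfl⟩ ⟨i', hi'⟩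
    exact hjk (congrArg Sigma.fst (@hinj ⟨k, i'⟩ ⟨j, i⟩ hi')).symm
  · exact Finset.image_nonempty.2 ⟨⟨0, hp k⟩, Finset.mem_univ _⟩
  · simpa [hconv] using hPC
  · simpa only [hsumX] using hr2
  · simpa only [hsumX] using hr3

end IsPentagonalPartition

end

/-- Let `P` be a smooth Fano `n`-polytope with `n+3` vertices
having exactly five primitive collections, with vertices labeled
`v_1, …, v_{p_0}, y_1, …, y_{p_1}, z_1, …, z_{p_2}, t_1, …, t_{p_3},
u_1, …, u_{p_4}` and primitive relations as in Proposition `pic3` (ii).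
If `P` is F-isolated, then `p_0 ≥ 2`, `p_2 = p_3 = 1`, `p_1 = p_4 ≥ 2` and
`d_1 = p_0 + p_1 - 2`. -/
theorem F_isolated_constraints_on_pic3_data {n : ℕ} (P : Set (Fin n → ℝ))
    (hP : IsSmoothFano P) (hcard : (vertexSet P).ncard = n + 3)
    (p0 p1 p2 p3 p4 : ℕ)
    (h0 : 0 < p0) (h1 : 0 < p1) (h2 : 0 < p2) (h3 : 0 < p3) (h4 : 0 < p4)
    (hsum : p0 + p1 + p2 + p3 + p4 = n + 3)
    (v : Fin p0 → Fin n → ℝ) (y : Fin p1 → Fin n → ℝ)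
    (zz : Fin p2 → Fin n → ℝ) (tt : Fin p3 → Fin n → ℝ)
    (u : Fin p4 → Fin n → ℝ) (c : Fin p2 → ℕ) (d : Fin p3 → ℕ)
    (hc1 : c ⟨0, h2⟩ = 0)
    (hV : vertexSet P =
      Set.range v ∪ Set.range y ∪ Set.range zz ∪ Set.range tt ∪ Set.range u)
    (hPC : ∀ B : Set (Fin n → ℝ), IsPrimitiveCollection P B ↔
      (B = Set.range v ∪ Set.range y ∨ B = Set.range y ∪ Set.range zz ∨
       B = Set.range zz ∪ Set.range tt ∨ B = Set.range tt ∪ Set.range u ∨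
       B = Set.range u ∪ Set.range v))
    (hr1 : (∑ i, v i) + (∑ i, y i) =
      (∑ i, (c i : ℝ) • zz i) + ∑ i, ((d i : ℝ) + 1) • tt i)
    (hr2 : (∑ i, y i) + (∑ i, zz i) = ∑ i, u i)
    (hr3 : (∑ i, zz i) + (∑ i, tt i) = 0)
    (hr4 : (∑ i, tt i) + (∑ i, u i) = ∑ i, y i)
    (hr5 : (∑ i, u i) + (∑ i, v i) =
      (∑ i, (c i : ℝ) • zz i) + ∑ i, (d i : ℝ) • tt i)
    (hiso : FIsolated P) :
    2 ≤ p0 ∧ p2 = 1 ∧ p3 = 1 ∧ p1 = p4 ∧ 2 ≤ p1 ∧ d ⟨0, h3⟩ = p0 + p1 - 2 := by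
  classical
  let p : Fin 5 → ℕ := ![p0, p1, p2, p3, p4]
  let x : ∀ k, Fin (p k) → Fin n → ℝ :=
    Fin.cons v <| Fin.cons y <| Fin.cons zz <| Fin.cons tt <| Fin.cons u finZeroElim
  have hp : ∑ k, p k = n + 3 := (Fin.sum_univ_five p).trans hsum
  have hVx : vertexSet P = ⋃ k, Set.range (x k) :=
    hV.trans (iUnion_fin_five fun k ↦ Set.range (x k)).symm
  have H := IsPentagonalPartition.of_isSmoothFano hP hcard (by simp [p, Fin.forall_fin_succ, *])
    hp hVx (fun A ↦ (hPC A).trans <| .symm <| exists_fin_five _) hr2 hr3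
  have hcardX := card_image_univ_of_ncard_eq hVx (hcard.trans hp.symm)
  have hsumX := sum_image_univ_of_ncard_eq hVx (hcard.trans hp.symm)
  rw [← (IsSmoothFanoVertexSet.of_isSmoothFano H.two_le hP).2] at hiso
  obtain rfl : p2 = 1 := (hcardX 2).symm.trans (H.card_two_eq_one hiso)
  obtain rfl : p3 = 1 := (hcardX 3).symm.trans (H.reflect.card_two_eq_one hiso)
  have hrel := calc
    _ = (∑ i, u i) + ∑ i, v i := congrArg₂ (· + ·) (hsumX 4) (hsumX 0)
    _ = (d 0 : ℝ) • tt 0 := by simpa [show c 0 = 0 from hc1] using hr5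
  have hconstraints := H.card_constraints_of_fIsolated (z := zz 0) (t := tt 0) rfl rfl hrel hiso
  rw [hcardX, hcardX, hcardX] at hconstraints
  obtain ⟨hp0, hp14, hp1, hd⟩ := hconstraints
  exact ⟨hp0, rfl, rfl, hp14, hp1, hd⟩
end
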